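/- Fix d ∈ ℕ and m_1, …, m_d ∈ ℕ. Let (F⃗_n) be a sequence of random vectors F⃗_n = (P_{n,1}(N^{(n)}), …, P_{n,d}(N^{(n)})), N^{(n)} ~ γ_{K_n}, where each P_{n,i} has total degree at most m_i. For each i write P_{n,i} = Q_{n,i} + R_{n,i} with Q_{n,i} in the degree-m_i Hermite span and deg R_{n,i} ≤ m_i − 1, and set J_{m_i} F_{n,i} := Q_{n,i}(N^{(n)}). Assume: (i) the laws of (J_{m_1} F_{n,1}, …, J_{m_d} F_{n,d}) converge weakly to N(0, I_d); (ii) sup_n E[‖F⃗_n‖²] < ∞. Then for every q ≥ 1 there exist N ∈ ℕ and C > 0 such that E[ (det Γ(F⃗_n))^{−q} ] ≤ C for all n ≥ N, where Γ(F⃗_n)_{ij} := Σ_{k=1}^{K_n} ∂_k P_{n,i}(N^{(n)}) ∂_k P_{n,j}(N^{(n)}). -/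

import Mathlib

/-!
Write `Γ` for the Malliavin matrix of `F` and `φ(u) = 𝔼 exp (-½ uᵀ Γ u)`. The Gaussian integral
expresses `det Γ ^ (-1/2)` through `∫ exp (-½ uᵀ Γ u) du`, so Hölder's inequality against a power
of `1 + ‖u‖` bounds every negative moment of `det Γ` as soon as `φ` decays polynomially of
sufficiently high order.

The decay is proved by induction on the degree, assuming only that the carré du champ matrix of the
top chaos components is `L²`-close to a diagonal matrix with positive entries. Rotate `N` by a small
angle towards an independent copy `N'`: up to a quadratic remainder the gradient of `F` moves along
its derivatives in the directions of independent Gaussian vectors, and averaging over them bounds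
`φ` by the same quantity for a family of derivatives, which has lower degree and again a nearly
constant carré du champ matrix. The components of degree one have constant gradients, and these
supply the decay in the remaining directions.

Convergence in law enters through the fourth moment theorem: since all moments converge, the
carré du champ matrix of the projections tends in `L²` to the diagonal matrix with entries `m i`.
-/

open MeasureTheory ProbabilityTheory MvPolynomial Filter Topology

noncomputable def gaussPi (ι : Type) [Fintype ι] : Measure (ι → ℝ) :=
  Measure.pi fun _ => gaussianReal 0 1

noncomputable def hermiteProd {K : ℕ} (k : Fin K → ℕ) : MvPolynomial (Fin K) ℝ :=
  ∏ i, Polynomial.aeval (MvPolynomial.X i) (Polynomial.hermite (k i))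

noncomputable def chaos (K m : ℕ) : Submodule ℝ (MvPolynomial (Fin K) ℝ) :=
  Submodule.span ℝ {P | ∃ k : Fin K → ℕ, ∑ i, k i = m ∧ P = hermiteProd k}

noncomputable def sqField {ι : Type} [Fintype ι] (P : MvPolynomial ι ℝ) (x : ι → ℝ) : ℝ :=
  ∑ i, (eval x (pderiv i P)) ^ 2

def TendstoInLaw {E : Type} [MeasurableSpace E] [TopologicalSpace E]
    (μs : ℕ → Measure E) (μ : Measure E) : Prop :=
  ∀ f : BoundedContinuousFunction E ℝ,
    Tendsto (fun n => ∫ x, f x ∂μs n) atTop (𝓝 (∫ x, f x ∂μ))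

/-- The Malliavin matrix of a vector of polynomial functionals. -/
noncomputable def malMatrix {K d : ℕ} (P : Fin d → MvPolynomial (Fin K) ℝ) (x : Fin K → ℝ) :
    Matrix (Fin d) (Fin d) ℝ :=
  Matrix.of fun i j => ∑ k, eval x (pderiv k (P i)) * eval x (pderiv k (P j))

section GaussianReal

lemma integrable_pow_gaussianReal (μ : ℝ) (v : NNReal) (n : ℕ) :
    Integrable (fun x : ℝ => x ^ n) (gaussianReal μ v) := by
  have h := (memLp_id_gaussianReal (μ := μ) (v := v) n).integrable_norm_pow'
  simp_rw [id, ← norm_pow] at h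
  exact (integrable_norm_iff (by fun_prop)).1 h

lemma hasDerivAt_gaussianPDFReal (μ : ℝ) (v : NNReal) (x : ℝ) :
    HasDerivAt (gaussianPDFReal μ v) (-((x - μ) / v) * gaussianPDFReal μ v x) x := by
  have h : HasDerivAt (fun y : ℝ => -(y - μ) ^ 2 / (2 * v)) (-((x - μ) / v)) x := by
    refine ((((hasDerivAt_id x).sub_const μ).pow 2).neg.div_const (2 * (v : ℝ))).congr_deriv ?_
    rcases eq_or_ne (v : ℝ) 0 with hv | hv
    · simp [hv]
    · simp only [id]; field_simp; norm_num; ring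
  exact (h.exp.const_mul _).congr_deriv (by rw [gaussianPDFReal_def]; ring)

lemma integrable_gaussianReal_iff {μ : ℝ} {v : NNReal} (hv : v ≠ 0) {f : ℝ → ℝ} :
    Integrable f (gaussianReal μ v) ↔ Integrable fun x => gaussianPDFReal μ v x * f x := by
  rw [gaussianReal_of_var_ne_zero _ hv, integrable_withDensity_iff_integrable_smul'
    (by fun_prop) (ae_of_all _ fun _ => by simp [gaussianPDF])]
  simp only [gaussianPDF, ENNReal.toReal_ofReal (gaussianPDFReal_nonneg _ _ _), smul_eq_mul]

theorem integral_mul_gaussianReal_eq_integral_deriv {v : NNReal} (hv : v ≠ 0) {f f' : ℝ → ℝ}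
    (hf : ∀ x, HasDerivAt f (f' x) x) (hint : Integrable f (gaussianReal 0 v))
    (hint_mul : Integrable (fun x => x * f x) (gaussianReal 0 v))
    (hint' : Integrable f' (gaussianReal 0 v)) :
    ∫ x, x * f x ∂gaussianReal 0 v = v * ∫ x, f' x ∂gaussianReal 0 v := by
  rw [integrable_gaussianReal_iff hv] at hint hint_mul hint'
  have hv' : (v : ℝ) ≠ 0 := NNReal.coe_ne_zero.2 hv
  have h := integral_mul_deriv_eq_deriv_mul_of_integrable (fun x _ => hf x)
    (fun x _ => hasDerivAt_gaussianPDFReal 0 v x)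
    ((hint_mul.div_const (v : ℝ)).neg.congr (ae_of_all _ fun x => by
      simp only [Pi.neg_apply, Pi.mul_apply]; ring))
    (hint'.congr (ae_of_all _ fun x => mul_comm _ _))
    (hint.congr (ae_of_all _ fun x => mul_comm _ _))
  simp only [integral_gaussianReal_eq_integral_smul hv, smul_eq_mul]
  calc ∫ x, gaussianPDFReal 0 v x * (x * f x)
      = -v * ∫ x, f x * (-((x - 0) / v) * gaussianPDFReal 0 v x) := by
        rw [← integral_const_mul]
        exact integral_congr_ae (ae_of_all _ fun x => by dsimp only; field_simp; ring)
    _ = v * ∫ x, gaussianPDFReal 0 v x * f' x := by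
        rw [h, neg_mul_neg]
        simp only [mul_comm (f' _)]

lemma integral_pow_succ_gaussianReal {v : NNReal} (hv : v ≠ 0) (n : ℕ) :
    ∫ x, x ^ (n + 1) ∂gaussianReal 0 v = v * (n * ∫ x, x ^ (n - 1) ∂gaussianReal 0 v) := by
  have h := integral_mul_gaussianReal_eq_integral_deriv hv (fun x => hasDerivAt_pow n x)
    (integrable_pow_gaussianReal 0 v n)
    (by simpa only [pow_succ'] using integrable_pow_gaussianReal 0 v (n + 1))
    ((integrable_pow_gaussianReal 0 v (n - 1)).const_mul _)
  simpa only [pow_succ', integral_const_mul] using h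

end GaussianReal

section GaussMean

variable {σ : Type} [Fintype σ]

instance isProbabilityMeasure_gaussPi : IsProbabilityMeasure (gaussPi σ) := by
  unfold gaussPi
  infer_instance

lemma eval_monomial_eq_prod {R : Type*} [CommSemiring R] (s : σ →₀ ℕ) (a : R) (x : σ → R) :
    eval x (monomial s a) = a * ∏ i, x i ^ s i := by
  rw [eval_monomial, Finsupp.prod_fintype _ _ fun _ => pow_zero _]

lemma integrable_eval_gaussPi (p : MvPolynomial σ ℝ) :
    Integrable (fun x => eval x p) (gaussPi σ) := by
  induction p using MvPolynomial.induction_on' with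
  | monomial s a =>
    simp_rw [eval_monomial_eq_prod]
    exact (Integrable.fintype_prod fun i => integrable_pow_gaussianReal 0 1 (s i)).const_mul a
  | add p q hp hq => simp_rw [map_add]; exact hp.add hq

/-- The expectation of a polynomial in independent standard Gaussian variables. -/
noncomputable def gaussMean : MvPolynomial σ ℝ →ₗ[ℝ] ℝ where
  toFun p := ∫ x, eval x p ∂gaussPi σ
  map_add' p q := by
    simpa only [map_add] using integral_add (integrable_eval_gaussPi p) (integrable_eval_gaussPi q)
  map_smul' a p := by simp only [smul_eval, integral_const_mul, RingHom.id_apply, smul_eq_mul]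

lemma gaussMean_apply (p : MvPolynomial σ ℝ) : gaussMean p = ∫ x, eval x p ∂gaussPi σ := rfl

@[simp]
lemma gaussMean_C (a : ℝ) : gaussMean (C a : MvPolynomial σ ℝ) = a := by simp [gaussMean_apply]

lemma gaussMean_C_mul (a : ℝ) (p : MvPolynomial σ ℝ) : gaussMean (C a * p) = a * gaussMean p := by
  rw [C_mul', map_smul, smul_eq_mul]

lemma gaussMean_mono {p q : MvPolynomial σ ℝ} (h : ∀ x, eval x p ≤ eval x q) :
    gaussMean p ≤ gaussMean q :=
  integral_mono (integrable_eval_gaussPi p) (integrable_eval_gaussPi q) h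

lemma gaussMean_sq_nonneg (p : MvPolynomial σ ℝ) : 0 ≤ gaussMean (p ^ 2) :=
  integral_nonneg fun x => by
    rw [map_pow]
    exact sq_nonneg _

lemma gaussMean_monomial (s : σ →₀ ℕ) (a : ℝ) :
    gaussMean (monomial s a) = a * ∏ i, ∫ x, x ^ s i ∂gaussianReal 0 1 := by
  simp only [gaussMean_apply, eval_monomial_eq_prod, gaussPi]
  rw [integral_const_mul, integral_fintype_prod_eq_prod (f := fun i (x : ℝ) => x ^ s i)]

theorem gaussMean_X_mul (k : σ) (p : MvPolynomial σ ℝ) :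
    gaussMean (X k * p) = gaussMean (pderiv k p) := by
  classical
  induction p using MvPolynomial.induction_on' with
  | add p q hp hq => rw [mul_add, map_add, hp, hq, map_add, map_add]
  | monomial s a =>
    have hoff : ∀ i ∈ Finset.univ.erase k,
        (Finsupp.single k 1 + s : σ →₀ ℕ) i = (s - Finsupp.single k 1 : σ →₀ ℕ) i := fun i hi => by
      simp [(Finset.ne_of_mem_erase hi).symm]
    rw [X, monomial_mul, one_mul, pderiv_monomial, gaussMean_monomial, gaussMean_monomial,
      ← Finset.mul_prod_erase _ _ (Finset.mem_univ k),
      ← Finset.mul_prod_erase _ _ (Finset.mem_univ k),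
      Finset.prod_congr rfl fun i hi => by rw [hoff i hi]]
    simp only [Finsupp.add_apply, Finsupp.tsub_apply, Finsupp.single_eq_same]
    rw [add_comm, integral_pow_succ_gaussianReal one_ne_zero, NNReal.coe_one]
    ring

end GaussMean

section OrnsteinUhlenbeck

variable {σ : Type} [Fintype σ]

/-- The carré du champ `Γ(p, q) = ⟨∇p, ∇q⟩`, as a bilinear map. -/
noncomputable def carre :
    MvPolynomial σ ℝ →ₗ[ℝ] MvPolynomial σ ℝ →ₗ[ℝ] MvPolynomial σ ℝ :=
  ∑ k, (LinearMap.mul ℝ _).compl₁₂ (pderiv k).toLinearMap (pderiv k).toLinearMap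

/-- The Ornstein–Uhlenbeck generator `L = Δ - ⟨x, ∇⟩`. -/
noncomputable def ouGen : MvPolynomial σ ℝ →ₗ[ℝ] MvPolynomial σ ℝ :=
  ∑ k, ((pderiv k).toLinearMap ∘ₗ (pderiv k).toLinearMap -
    LinearMap.mulLeft ℝ (X k) ∘ₗ (pderiv k).toLinearMap)

lemma carre_apply (p q : MvPolynomial σ ℝ) : carre p q = ∑ k, pderiv k p * pderiv k q := by
  simp [carre]

lemma ouGen_apply (p : MvPolynomial σ ℝ) :
    ouGen p = ∑ k, (pderiv k (pderiv k p) - X k * pderiv k p) := by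
  simp [ouGen]

lemma carre_comm (p q : MvPolynomial σ ℝ) : carre p q = carre q p := by
  simp only [carre_apply, mul_comm]

lemma carre_C_left (a : ℝ) (p : MvPolynomial σ ℝ) : carre (C a) p = 0 := by
  simp [carre_apply]

lemma carre_C_right (p : MvPolynomial σ ℝ) (a : ℝ) : carre p (C a) = 0 := by
  rw [carre_comm, carre_C_left]

lemma carre_mul_left (p q r : MvPolynomial σ ℝ) :
    carre (p * q) r = p * carre q r + q * carre p r := by
  simp only [carre_apply, Finset.mul_sum, ← Finset.sum_add_distrib]
  refine Finset.sum_congr rfl fun k _ => ?_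
  rw [Derivation.leibniz, smul_eq_mul, smul_eq_mul]
  ring

lemma eval_carre (p q : MvPolynomial σ ℝ) (x : σ → ℝ) :
    eval x (carre p q) = ∑ k, eval x (pderiv k p) * eval x (pderiv k q) := by
  simp only [carre_apply, map_sum, map_mul]

lemma ouGen_C (a : ℝ) : ouGen (C a : MvPolynomial σ ℝ) = 0 := by
  simp [ouGen_apply]

lemma ouGen_mul (p q : MvPolynomial σ ℝ) :
    ouGen (p * q) = p * ouGen q + q * ouGen p + 2 * carre p q := by
  simp only [ouGen_apply, carre_apply, Finset.mul_sum, ← Finset.sum_add_distrib]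
  refine Finset.sum_congr rfl fun k _ => ?_
  simp only [Derivation.leibniz, smul_eq_mul, map_add]
  ring

theorem gaussMean_mul_ouGen (p q : MvPolynomial σ ℝ) :
    gaussMean (p * ouGen q) = -gaussMean (carre p q) := by
  simp only [ouGen_apply, carre_apply, Finset.mul_sum, map_sum, ← Finset.sum_neg_distrib]
  refine Finset.sum_congr rfl fun k _ => ?_
  have hsplit : p * (pderiv k (pderiv k q) - X k * pderiv k q) =
      pderiv k (p * pderiv k q) - X k * (p * pderiv k q) - pderiv k p * pderiv k q := by
    rw [Derivation.leibniz, smul_eq_mul, smul_eq_mul]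
    ring
  rw [hsplit, map_sub, map_sub, gaussMean_X_mul]
  ring

lemma pderiv_pderiv_comm {R τ : Type*} [CommSemiring R] (k l : τ) (p : MvPolynomial τ R) :
    pderiv k (pderiv l p) = pderiv l (pderiv k p) := by
  classical
  induction p using MvPolynomial.induction_on with
  | C a => simp
  | add p q hp hq => simp [hp, hq]
  | mul_X p i hp =>
    simp only [Derivation.leibniz, smul_eq_mul, map_add, pderiv_X, Pi.single_apply, hp]
    split_ifs <;> simp <;> ring

theorem pderiv_ouGen (k : σ) (p : MvPolynomial σ ℝ) :
    pderiv k (ouGen p) = ouGen (pderiv k p) - pderiv k p := by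
  classical
  have hterm (l : σ) : pderiv k (pderiv l (pderiv l p) - X l * pderiv l p) =
      pderiv l (pderiv l (pderiv k p)) - X l * pderiv l (pderiv k p) -
        if l = k then pderiv l p else 0 := by
    simp only [map_sub, Derivation.leibniz, smul_eq_mul, pderiv_X, Pi.single_apply,
      pderiv_pderiv_comm k l]
    split_ifs <;> ring
  simp only [ouGen_apply, map_sum, hterm, Finset.sum_sub_distrib _ (fun _ => ite _ _ _),
    Finset.sum_ite_eq', Finset.mem_univ, if_true]

end OrnsteinUhlenbeck

section TotalDegree

variable {R τ : Type*} [CommRing R]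

lemma map_mem_of_totalDegree_le {M : Type*} [AddCommMonoid M] [Module R M]
    (f : MvPolynomial τ R →ₗ[R] M) (S : Submodule R M) {m : ℕ}
    (h : ∀ s a, s.degree ≤ m → f (monomial s a) ∈ S) {p : MvPolynomial τ R}
    (hp : p.totalDegree ≤ m) : f p ∈ S := by
  rw [p.as_sum, map_sum]
  exact S.sum_mem fun s hs => h s _ ((le_totalDegree hs).trans hp)

lemma totalDegree_pderiv_le (k : τ) {p : MvPolynomial τ R} {m : ℕ} (hp : p.totalDegree ≤ m) :
    (pderiv k p).totalDegree ≤ m - 1 := by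
  rw [← mem_restrictTotalDegree]
  refine map_mem_of_totalDegree_le (pderiv k).toLinearMap _ (fun s a hs => ?_) hp
  rw [mem_restrictTotalDegree, Derivation.coeFn_coe, pderiv_monomial]
  rcases eq_or_ne (s k) 0 with hk | hk
  · simp [hk]
  · have hle : Finsupp.single k 1 ≤ s := Finsupp.single_le_iff.2 (Nat.one_le_iff_ne_zero.2 hk)
    have hdeg := congrArg Finsupp.degree (tsub_add_cancel_of_le hle)
    rw [map_add, Finsupp.degree_single] at hdeg
    exact (totalDegree_monomial_le _ _).trans (Nat.le_sub_one_of_lt (by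
      change Finsupp.degree _ < m; omega))

lemma totalDegree_mul_le {p q : MvPolynomial τ R} {a b : ℕ} (hp : p.totalDegree ≤ a)
    (hq : q.totalDegree ≤ b) : (p * q).totalDegree ≤ a + b :=
  (totalDegree_mul p q).trans (add_le_add hp hq)

lemma totalDegree_sub_C_le {p : MvPolynomial τ R} {m : ℕ} (hp : p.totalDegree ≤ m) (a : R) :
    (p - C a).totalDegree ≤ m :=
  (totalDegree_sub p (C a)).trans (max_le hp (by simp))

end TotalDegree

section Spectrum

variable {σ : Type} [Fintype σ]

lemma totalDegree_carre_le {p q : MvPolynomial σ ℝ} {a b : ℕ} (hp : p.totalDegree ≤ a)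
    (hq : q.totalDegree ≤ b) : (carre p q).totalDegree ≤ (a - 1) + (b - 1) := by
  rw [carre_apply]
  exact totalDegree_finsetSum_le fun k _ =>
    totalDegree_mul_le (totalDegree_pderiv_le k hp) (totalDegree_pderiv_le k hq)

/-- The eigenspace of `-L` for the eigenvalue `a`; for `a = m` a natural number it is the
Wiener chaos of degree `m`. -/
noncomputable def ouEigenspace (a : ℝ) : Submodule ℝ (MvPolynomial σ ℝ) :=
  Module.End.eigenspace ouGen (-a)

lemma mem_ouEigenspace {a : ℝ} {p : MvPolynomial σ ℝ} :
    p ∈ ouEigenspace a ↔ ouGen p = -(a • p) := by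
  rw [ouEigenspace, Module.End.mem_eigenspace_iff, neg_smul]

lemma totalDegree_ouGen_add_smul_le {m : ℕ} {p : MvPolynomial σ ℝ} (hp : p.totalDegree ≤ m) :
    (ouGen p + (m : ℝ) • p).totalDegree ≤ m - 1 := by
  rw [← mem_restrictTotalDegree]
  refine map_mem_of_totalDegree_le (ouGen + (m : ℝ) • LinearMap.id) _ (fun s a hs => ?_) hp
  have hformula : (ouGen + (m : ℝ) • LinearMap.id : _ →ₗ[ℝ] _) (monomial s a) =
      ∑ k, pderiv k (pderiv k (monomial s a)) + (m - s.degree : ℝ) • monomial s a := by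
    simp only [LinearMap.add_apply, LinearMap.smul_apply, LinearMap.id_apply, ouGen_apply,
      X_mul_pderiv_monomial, Finset.sum_sub_distrib, ← Finset.sum_smul,
      ← Finsupp.degree_eq_sum, sub_smul, Nat.cast_smul_eq_nsmul]
    abel
  have hmon : (monomial s a).totalDegree ≤ s.degree := totalDegree_monomial_le s a
  rw [hformula]
  refine Submodule.add_mem _ (Submodule.sum_mem _ fun k _ => ?_) ?_
  · rw [mem_restrictTotalDegree]
    exact (totalDegree_pderiv_le k (totalDegree_pderiv_le k (hmon.trans hs))).trans (Nat.sub_le _ _)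
  · rcases hs.eq_or_lt with hs | hs
    · simp [hs]
    · rw [mem_restrictTotalDegree]
      exact (totalDegree_smul_le _ _).trans (hmon.trans (Nat.le_sub_one_of_lt hs))

lemma totalDegree_le_of_mem_ouEigenspace {m : ℕ} {p : MvPolynomial σ ℝ}
    (hp : p ∈ ouEigenspace (m : ℝ)) : p.totalDegree ≤ m := by
  by_contra! hlt
  set D := p.totalDegree with hD
  have hne : (D - m : ℝ) ≠ 0 := sub_ne_zero.2 (Nat.cast_injective.ne hlt.ne')
  have h := totalDegree_ouGen_add_smul_le hD.ge
  rw [mem_ouEigenspace.1 hp, neg_add_eq_sub, ← sub_smul] at h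
  have hinv := totalDegree_smul_le (D - m : ℝ)⁻¹ ((D - m : ℝ) • p)
  rw [inv_smul_smul₀ hne] at hinv
  omega

lemma exists_sum_ouEigenspace (D : ℕ) {p : MvPolynomial σ ℝ} (hp : p.totalDegree ≤ D) :
    ∃ c : ℕ → MvPolynomial σ ℝ,
      p = ∑ j ∈ Finset.range (D + 1), c j ∧ ∀ j : ℕ, c j ∈ ouEigenspace (j : ℝ) := by
  induction D generalizing p with
  | zero =>
    rw [Nat.le_zero, totalDegree_eq_zero_iff_eq_C] at hp
    refine ⟨Function.update 0 0 p, by simp, fun j => ?_⟩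
    rcases eq_or_ne j 0 with rfl | hj
    · rw [Function.update_self, hp, mem_ouEigenspace, ouGen_C]
      simp
    · simp [hj]
  | succ D ih =>
    obtain ⟨c, hpc, hc⟩ := ih (totalDegree_ouGen_add_smul_le hp)
    set b : ℕ → MvPolynomial σ ℝ := fun j => ((D + 1 : ℕ) - j : ℝ)⁻¹ • c j with hb
    set r := p - ∑ j ∈ Finset.range (D + 1), b j with hr
    have hbc : ∀ j ∈ Finset.range (D + 1), ouGen (b j) + ((D + 1 : ℕ) : ℝ) • b j = c j := by
      intro j hj
      have hne : ((D + 1 : ℕ) - j : ℝ) ≠ 0 :=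
        sub_ne_zero.2 (Nat.cast_injective.ne (Finset.mem_range.1 hj).ne')
      rw [hb, map_smul, mem_ouEigenspace.1 (hc j), smul_neg, smul_comm, neg_add_eq_sub, ← sub_smul,
        smul_inv_smul₀ hne]
    have hreig : r ∈ ouEigenspace ((D + 1 : ℕ) : ℝ) := by
      rw [mem_ouEigenspace, ← sub_eq_zero, sub_neg_eq_add, hr, map_sub, smul_sub, map_sum,
        Finset.smul_sum, sub_add_sub_comm, ← Finset.sum_add_distrib, Finset.sum_congr rfl hbc, hpc,
        sub_self]
    refine ⟨Function.update b (D + 1) r, ?_, fun j => ?_⟩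
    · rw [Finset.sum_range_succ, Function.update_self, Finset.sum_congr rfl fun j hj =>
        Function.update_of_ne (Finset.mem_range.1 hj).ne _ _, hr, add_sub_cancel]
    · rcases eq_or_ne j (D + 1) with rfl | hj
      · rwa [Function.update_self]
      · rw [Function.update_of_ne hj]
        exact Submodule.smul_mem _ _ (hc j)

lemma gaussMean_mul_eq_zero {p q : MvPolynomial σ ℝ} {a b : ℝ} (hp : p ∈ ouEigenspace a)
    (hq : q ∈ ouEigenspace b) (hab : a ≠ b) : gaussMean (p * q) = 0 := by
  have h : gaussMean (p * ouGen q) = gaussMean (q * ouGen p) := by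
    rw [gaussMean_mul_ouGen, gaussMean_mul_ouGen, carre_comm]
  rw [mem_ouEigenspace.1 hp, mem_ouEigenspace.1 hq, mul_neg, mul_neg, mul_smul_comm, mul_smul_comm,
    mul_comm q, map_neg, map_neg, map_smul, map_smul, smul_eq_mul, smul_eq_mul] at h
  exact (mul_eq_zero.1 (by linarith : (a - b) * gaussMean (p * q) = 0)).resolve_left
    (sub_ne_zero.2 hab)

lemma gaussMean_mul_eq_zero_of_totalDegree_lt {m : ℕ} {p q : MvPolynomial σ ℝ}
    (hp : p ∈ ouEigenspace (m : ℝ)) (hq : q.totalDegree < m) : gaussMean (p * q) = 0 := by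
  obtain ⟨c, rfl, hc⟩ := exists_sum_ouEigenspace _ (Nat.le_sub_one_of_lt hq)
  rw [Finset.mul_sum, map_sum]
  refine Finset.sum_eq_zero fun j hj => gaussMean_mul_eq_zero hp (hc j) ?_
  have := Finset.mem_range.1 hj
  exact_mod_cast (by omega : m ≠ j)

lemma gaussMean_sum_smul_mul_sum_smul {c : ℕ → MvPolynomial σ ℝ}
    (hc : ∀ j : ℕ, c j ∈ ouEigenspace (j : ℝ)) (s : Finset ℕ) (f g : ℕ → ℝ) :
    gaussMean ((∑ j ∈ s, f j • c j) * ∑ j ∈ s, g j • c j) =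
      ∑ j ∈ s, f j * g j * gaussMean (c j ^ 2) := by
  rw [Finset.sum_mul_sum, map_sum]
  refine Finset.sum_congr rfl fun i hi => ?_
  rw [map_sum, Finset.sum_eq_single_of_mem i hi fun j _ hj => ?_]
  · rw [smul_mul_smul_comm, map_smul, smul_eq_mul, sq]
  · rw [smul_mul_smul_comm, map_smul,
      gaussMean_mul_eq_zero (hc i) (hc j) (Nat.cast_injective.ne hj.symm), smul_zero]

lemma gaussMean_sum_sq {c : ℕ → MvPolynomial σ ℝ} (hc : ∀ j : ℕ, c j ∈ ouEigenspace (j : ℝ))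
    (s : Finset ℕ) : gaussMean ((∑ j ∈ s, c j) ^ 2) = ∑ j ∈ s, gaussMean (c j ^ 2) := by
  simpa only [Pi.one_apply, one_smul, mul_one, one_mul, ← sq (Finset.sum _ _)]
    using gaussMean_sum_smul_mul_sum_smul hc s 1 1

lemma gaussMean_carre_sum_sum {c : ℕ → MvPolynomial σ ℝ}
    (hc : ∀ j : ℕ, c j ∈ ouEigenspace (j : ℝ)) (s : Finset ℕ) :
    gaussMean (carre (∑ j ∈ s, c j) (∑ j ∈ s, c j)) = ∑ j ∈ s, j * gaussMean (c j ^ 2) := by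
  have h := gaussMean_sum_smul_mul_sum_smul hc s 1 (fun j => -j)
  simp only [Pi.one_apply, one_smul, neg_smul, one_mul, neg_mul, Finset.sum_neg_distrib] at h
  rw [← neg_inj, ← gaussMean_mul_ouGen, ← h, map_sum, ← Finset.sum_neg_distrib,
    Finset.sum_congr rfl fun j _ => mem_ouEigenspace.1 (hc j)]

lemma gaussMean_carre_self_le {D : ℕ} {p : MvPolynomial σ ℝ} (hp : p.totalDegree ≤ D) :
    gaussMean (carre p p) ≤ D * gaussMean (p ^ 2) := by
  obtain ⟨c, rfl, hc⟩ := exists_sum_ouEigenspace D hp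
  rw [gaussMean_carre_sum_sum hc, gaussMean_sum_sq hc, Finset.mul_sum]
  refine Finset.sum_le_sum fun j hj => mul_le_mul_of_nonneg_right ?_ (gaussMean_sq_nonneg _)
  exact_mod_cast Nat.le_of_lt_succ (Finset.mem_range.1 hj)

theorem gaussian_poincare (p : MvPolynomial σ ℝ) :
    gaussMean (p ^ 2) - gaussMean p ^ 2 ≤ gaussMean (carre p p) := by
  obtain ⟨c, hp, hc⟩ := exists_sum_ouEigenspace _ (le_refl p.totalDegree)
  have hc0 : gaussMean (c 0 ^ 2) = gaussMean p ^ 2 := by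
    have hconst := totalDegree_eq_zero_iff_eq_C.1
      (Nat.le_zero.1 (totalDegree_le_of_mem_ouEigenspace (hc 0)))
    have hmean : gaussMean p = gaussMean (c 0) := by
      rw [hp, map_sum, Finset.sum_eq_single_of_mem 0 (by simp) fun j _ hj => ?_]
      rw [← mul_one (c j)]
      exact gaussMean_mul_eq_zero_of_totalDegree_lt (hc j) (by simpa using Nat.pos_of_ne_zero hj)
    rw [hmean, hconst, ← C_pow, gaussMean_C, gaussMean_C]
  rw [hp, gaussMean_carre_sum_sum hc, gaussMean_sum_sq hc, ← hp, Finset.sum_range_succ',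
    Finset.sum_range_succ', hc0, add_sub_cancel_right, Nat.cast_zero, zero_mul, add_zero]
  refine Finset.sum_le_sum fun j _ => le_mul_of_one_le_left (gaussMean_sq_nonneg _) ?_
  exact_mod_cast Nat.succ_pos j

/-- The operator `(L + a) / 2`: on a product of eigenfunctions whose eigenvalues sum to `-a` it
returns their carré du champ, see `carre_eq_ouShift`. -/
noncomputable def ouShift (a : ℝ) : MvPolynomial σ ℝ →ₗ[ℝ] MvPolynomial σ ℝ :=
  (1 / 2 : ℝ) • (ouGen + a • LinearMap.id)

lemma ouShift_apply (a : ℝ) (p : MvPolynomial σ ℝ) :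
    ouShift a p = (1 / 2 : ℝ) • (ouGen p + a • p) := rfl

lemma ouShift_C (a b : ℝ) : ouShift a (C b : MvPolynomial σ ℝ) = C (a / 2 * b) := by
  rw [ouShift_apply, ouGen_C, zero_add, smul_smul, smul_eq_C_mul, ← C_mul]
  ring_nf

lemma carre_eq_ouShift {a b : ℝ} {p q : MvPolynomial σ ℝ} (hp : p ∈ ouEigenspace a)
    (hq : q ∈ ouEigenspace b) : carre p q = ouShift (a + b) (p * q) := by
  rw [ouShift_apply, ouGen_mul, mem_ouEigenspace.1 hp, mem_ouEigenspace.1 hq]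
  simp only [mul_neg, mul_smul_comm, mul_comm q p, two_mul]
  module

lemma ouShift_sum {c : ℕ → MvPolynomial σ ℝ} (hc : ∀ j : ℕ, c j ∈ ouEigenspace (j : ℝ))
    (s : Finset ℕ) (a : ℝ) : ouShift a (∑ j ∈ s, c j) = ∑ j ∈ s, ((a - j) / 2) • c j := by
  rw [map_sum]
  refine Finset.sum_congr rfl fun j _ => ?_
  rw [ouShift_apply, mem_ouEigenspace.1 (hc j), neg_add_eq_sub, ← sub_smul, smul_smul]
  ring_nf

lemma gaussMean_ouShift_sq_le_mul {D : ℕ} {p : MvPolynomial σ ℝ} (hp : p.totalDegree ≤ D) :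
    gaussMean (ouShift D p ^ 2) ≤ D / 2 * gaussMean (p * ouShift D p) := by
  obtain ⟨c, rfl, hc⟩ := exists_sum_ouEigenspace D hp
  have h := gaussMean_sum_smul_mul_sum_smul hc (Finset.range (D + 1)) 1 (fun j => (D - j) / 2)
  simp only [Pi.one_apply, one_smul, one_mul] at h
  rw [ouShift_sum hc, sq, gaussMean_sum_smul_mul_sum_smul hc, h, Finset.mul_sum]
  refine Finset.sum_le_sum fun j hj => ?_
  have hj : (j : ℝ) ≤ D := by exact_mod_cast Nat.le_of_lt_succ (Finset.mem_range.1 hj)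
  rw [← mul_assoc]
  refine mul_le_mul_of_nonneg_right ?_ (gaussMean_sq_nonneg _)
  nlinarith [hj, j.cast_nonneg (α := ℝ)]

lemma gaussMean_ouShift_sq_le {D : ℕ} {p : MvPolynomial σ ℝ} (hp : p.totalDegree ≤ D) :
    gaussMean (ouShift D p ^ 2) ≤ (D / 2) ^ 2 * gaussMean (p ^ 2) := by
  obtain ⟨c, rfl, hc⟩ := exists_sum_ouEigenspace D hp
  rw [ouShift_sum hc, sq, gaussMean_sum_smul_mul_sum_smul hc, gaussMean_sum_sq hc, Finset.mul_sum]
  refine Finset.sum_le_sum fun j hj => mul_le_mul_of_nonneg_right ?_ (gaussMean_sq_nonneg _)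
  have hj : (j : ℝ) ≤ D := by exact_mod_cast Nat.le_of_lt_succ (Finset.mem_range.1 hj)
  nlinarith [hj, j.cast_nonneg (α := ℝ)]

lemma pderiv_mem_ouEigenspace {a : ℝ} {p : MvPolynomial σ ℝ} (hp : p ∈ ouEigenspace a) (k : σ) :
    pderiv k p ∈ ouEigenspace (a - 1) := by
  have h := pderiv_ouGen k p
  rw [mem_ouEigenspace.1 hp, map_neg, Derivation.map_smul] at h
  rw [mem_ouEigenspace, sub_smul, one_smul]
  linear_combination -h

end Spectrum

section Hermite

open Polynomial in
lemma derivative_hermite_succ (n : ℕ) :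
    derivative (hermite (n + 1)) = (n + 1 : ℤ[X]) * hermite n := by
  induction n with
  | zero => simp
  | succ n ih =>
    rw [hermite_succ (n + 1), map_sub, derivative_mul, ih, derivative_mul, hermite_succ n]
    simp only [derivative_X, derivative_add, derivative_natCast, derivative_one]
    push_cast
    ring

open Polynomial in
lemma derivative_derivative_hermite_sub (n : ℕ) :
    derivative (derivative (hermite n)) - Polynomial.X * derivative (hermite n) =
      -((n : ℤ[X]) * hermite n) := by
  cases n with
  | zero => simp
  | succ n =>
    rw [derivative_hermite_succ, derivative_mul, hermite_succ n]
    simp only [derivative_add, derivative_natCast, derivative_one]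
    push_cast
    ring

lemma pderiv_aeval_X {R τ : Type*} [CommRing R] (l i : τ) (q : Polynomial ℤ) :
    pderiv l (Polynomial.aeval (X i : MvPolynomial τ R) q) =
      Polynomial.aeval (X i) q.derivative * pderiv l (X i) :=
  Derivation.map_aeval (D := (pderiv l : Derivation R (MvPolynomial τ R) _).restrictScalars ℤ) q
    (X i)

variable {σ : Type} [Fintype σ]

lemma aeval_X_hermite_mem_ouEigenspace (i : σ) (n : ℕ) :
    Polynomial.aeval (X i) (Polynomial.hermite n) ∈ ouEigenspace (σ := σ) (n : ℝ) := by
  classical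
  have hode := congrArg (Polynomial.aeval (X i : MvPolynomial σ ℝ))
    (derivative_derivative_hermite_sub n)
  rw [mem_ouEigenspace, ouGen_apply, Finset.sum_eq_single_of_mem i (Finset.mem_univ i)]
  · simpa [pderiv_aeval_X, smul_eq_C_mul] using hode
  · intro l _ hl
    simp [pderiv_aeval_X, pderiv_X_of_ne hl.symm]

lemma mul_mem_ouEigenspace {a b : ℝ} {p q : MvPolynomial σ ℝ} (hp : p ∈ ouEigenspace a)
    (hq : q ∈ ouEigenspace b) (hpq : carre p q = 0) : p * q ∈ ouEigenspace (a + b) := by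
  rw [mem_ouEigenspace, ouGen_mul, mem_ouEigenspace.1 hp, mem_ouEigenspace.1 hq, hpq, add_smul,
    mul_neg, mul_neg, mul_smul_comm, mul_smul_comm, mul_comm q, mul_zero]
  abel

lemma prod_hermite_mem_ouEigenspace (k : σ → ℕ) (s : Finset σ) :
    ∏ i ∈ s, Polynomial.aeval (X i) (Polynomial.hermite (k i)) ∈
      ouEigenspace (σ := σ) ((∑ i ∈ s, k i : ℕ) : ℝ) := by
  classical
  induction s using Finset.induction_on with
  | empty =>
    rw [mem_ouEigenspace, Finset.prod_empty, ← C_1, ouGen_C]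
    simp
  | insert a s ha ih =>
    rw [Finset.prod_insert ha, Finset.sum_insert ha, Nat.cast_add]
    refine mul_mem_ouEigenspace (aeval_X_hermite_mem_ouEigenspace a (k a)) ih ?_
    rw [carre_apply]
    refine Finset.sum_eq_zero fun l _ => ?_
    rcases eq_or_ne l a with rfl | hl
    · have hprod : pderiv l (∏ i ∈ s, Polynomial.aeval (X i : MvPolynomial σ ℝ)
          (Polynomial.hermite (k i))) = 0 := by
        refine Finset.prod_induction _ (fun p => pderiv l p = 0) (fun p q hp hq => ?_) pderiv_one
          fun i hi => ?_
        · rw [Derivation.leibniz, hp, hq, smul_zero, smul_zero, add_zero]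
        · rw [pderiv_aeval_X, pderiv_X_of_ne (ne_of_mem_of_not_mem hi ha), mul_zero]
      rw [hprod, mul_zero]
    · rw [pderiv_aeval_X, pderiv_X_of_ne hl.symm, mul_zero, zero_mul]

theorem chaos_le_ouEigenspace (K m : ℕ) : chaos K m ≤ ouEigenspace (m : ℝ) := by
  refine Submodule.span_le.2 ?_
  rintro _ ⟨k, rfl, rfl⟩
  exact prod_hermite_mem_ouEigenspace k Finset.univ

end Hermite

section Hypercontractivity

variable {σ : Type} [Fintype σ]

lemma gaussMean_carre_sum_sq_le {α : Type*} [Fintype α] (F : α → MvPolynomial σ ℝ) :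
    gaussMean (carre (∑ a, F a ^ 2) (∑ a, F a ^ 2)) ≤
      4 * gaussMean ((∑ a, F a ^ 2) * ∑ a, carre (F a) (F a)) := by
  rw [← gaussMean_C_mul]
  refine gaussMean_mono fun x => ?_
  have hderiv (k : σ) : eval x (pderiv k (∑ a, F a ^ 2)) =
      2 * ∑ a, eval x (F a) * eval x (pderiv k (F a)) := by
    simp [Derivation.leibniz_pow, Finset.mul_sum]
  have hsum : eval x (∑ a, carre (F a) (F a)) = ∑ k, ∑ a, eval x (pderiv k (F a)) ^ 2 := by
    rw [map_sum, Finset.sum_comm]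
    simp only [eval_carre, sq]
  rw [eval_carre, map_mul, map_mul, eval_C, hsum, Finset.mul_sum, Finset.mul_sum]
  refine Finset.sum_le_sum fun k _ => ?_
  have hcs := Finset.sum_mul_sq_le_sq_mul_sq Finset.univ (fun a => eval x (F a))
    fun a => eval x (pderiv k (F a))
  rw [hderiv, map_sum]
  simp only [map_pow]
  linarith

lemma gaussMean_sub_smul_sq (p q : MvPolynomial σ ℝ) (a : ℝ) :
    gaussMean ((p - a • q) ^ 2) =
      gaussMean (p ^ 2) - 2 * a * gaussMean (p * q) + a ^ 2 * gaussMean (q ^ 2) := by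
  have h : (p - a • q) ^ 2 = p ^ 2 - (2 * a) • (p * q) + a ^ 2 • q ^ 2 := by
    simp only [smul_eq_C_mul, C_mul, C_pow, map_ofNat]
    ring
  rw [h, map_add, map_sub, map_smul, map_smul, smul_eq_mul, smul_eq_mul]

lemma exists_gaussMean_sum_sq_sq_le (m : ℕ) :
    ∃ c : ℝ, 0 ≤ c ∧ ∀ (σ α : Type) [Fintype σ] [Fintype α] (F : α → MvPolynomial σ ℝ),
      (∀ a, (F a).totalDegree ≤ m) →
        gaussMean ((∑ a, F a ^ 2) ^ 2) ≤ c * gaussMean (∑ a, F a ^ 2) ^ 2 := by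
  induction m with
  | zero =>
    refine ⟨1, zero_le_one, fun σ α _ _ F hF => le_of_eq ?_⟩
    have hconst : ∑ a, F a ^ 2 = C (∑ a, coeff 0 (F a) ^ 2) := by
      rw [map_sum]
      refine Finset.sum_congr rfl fun a _ => ?_
      rw [C_pow, ← totalDegree_eq_zero_iff_eq_C.1 (Nat.le_zero.1 (hF a))]
    rw [hconst, ← C_pow, gaussMean_C, gaussMean_C, one_mul]
  | succ m ih =>
    obtain ⟨c, hc, ih⟩ := ih
    refine ⟨2 + 16 * c * (m + 1) ^ 2, by positivity, fun σ α _ _ F hF => ?_⟩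
    set S := ∑ a, F a ^ 2 with hS
    set T := ∑ a, carre (F a) (F a) with hT
    have hT_eq : T = ∑ b : α × σ, pderiv b.2 (F b.1) ^ 2 := by
      rw [Fintype.sum_prod_type, hT]
      simp only [carre_apply, sq]
    have hTT : gaussMean (T ^ 2) ≤ c * gaussMean T ^ 2 := by
      rw [hT_eq]
      exact ih σ (α × σ) _ fun b => totalDegree_pderiv_le b.2 (hF b.1)
    have hT_nonneg : 0 ≤ gaussMean T := by
      rw [hT_eq, map_sum]
      exact Finset.sum_nonneg fun b _ => gaussMean_sq_nonneg _
    have hTS : gaussMean T ≤ (m + 1) * gaussMean S := by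
      rw [hT, hS, map_sum, map_sum, Finset.mul_sum]
      exact Finset.sum_le_sum fun a _ => by exact_mod_cast gaussMean_carre_self_le (hF a)
    have hTT' : gaussMean (T ^ 2) ≤ c * ((m + 1) * gaussMean S) ^ 2 :=
      hTT.trans (mul_le_mul_of_nonneg_left (pow_le_pow_left₀ hT_nonneg hTS 2) hc)
    have hST : 4 * gaussMean (S * T) ≤ gaussMean (S ^ 2) / 2 + 8 * gaussMean (T ^ 2) := by
      have h := gaussMean_sq_nonneg (S - (4 : ℝ) • T)
      rw [gaussMean_sub_smul_sq] at h
      linarith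
    linarith [gaussian_poincare S, gaussMean_carre_sum_sq_le F]

theorem exists_gaussMean_sum_sq_pow_le (m k : ℕ) :
    ∃ c : ℝ, 0 ≤ c ∧ ∀ (σ α : Type) [Fintype σ] [Fintype α] (F : α → MvPolynomial σ ℝ),
      (∀ a, (F a).totalDegree ≤ m) →
        gaussMean ((∑ a, F a ^ 2) ^ 2 ^ k) ≤ c * gaussMean (∑ a, F a ^ 2) ^ 2 ^ k := by
  induction k generalizing m with
  | zero => exact ⟨1, zero_le_one, fun σ α _ _ F _ => by simp⟩
  | succ k ih =>
    obtain ⟨c, hc, hsq⟩ := exists_gaussMean_sum_sq_sq_le m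
    obtain ⟨c', hc', hpow⟩ := ih (m + m)
    refine ⟨c' * c ^ 2 ^ k, by positivity, fun σ α _ _ F hF => ?_⟩
    have hS_sq : (∑ a, F a ^ 2) ^ 2 = ∑ b : α × α, (F b.1 * F b.2) ^ 2 := by
      rw [sq, Finset.sum_mul_sum, Fintype.sum_prod_type]
      simp only [mul_pow]
    calc gaussMean ((∑ a, F a ^ 2) ^ 2 ^ (k + 1))
        = gaussMean ((∑ b : α × α, (F b.1 * F b.2) ^ 2) ^ 2 ^ k) := by
          rw [← hS_sq, ← pow_mul, pow_succ']
      _ ≤ c' * gaussMean ((∑ a, F a ^ 2) ^ 2) ^ 2 ^ k := by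
          rw [hS_sq]
          exact hpow σ (α × α) _ fun b => totalDegree_mul_le (hF b.1) (hF b.2)
      _ ≤ c' * (c * gaussMean (∑ a, F a ^ 2) ^ 2) ^ 2 ^ k := by
          refine mul_le_mul_of_nonneg_left (pow_le_pow_left₀ (gaussMean_sq_nonneg _) ?_ _) hc'
          exact hsq σ α F hF
      _ = c' * c ^ 2 ^ k * gaussMean (∑ a, F a ^ 2) ^ 2 ^ (k + 1) := by
          rw [mul_pow, ← pow_mul, ← pow_succ', mul_assoc]

end Hypercontractivity

section QuadraticForms

variable {σ : Type} [Fintype σ]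

lemma gaussMean_X_mul_X [DecidableEq σ] (k l : σ) :
    gaussMean (X k * X l : MvPolynomial σ ℝ) = if k = l then 1 else 0 := by
  rw [gaussMean_X_mul, pderiv_X]
  rcases eq_or_ne k l with rfl | h
  · rw [Pi.single_eq_same, if_pos rfl, ← C_1, gaussMean_C]
  · rw [Pi.single_eq_of_ne h.symm, if_neg h, map_zero]

lemma gaussMean_linearForm_sq (b : σ → ℝ) :
    gaussMean ((∑ k, b k • X k : MvPolynomial σ ℝ) ^ 2) = ∑ k, b k ^ 2 := by
  classical
  simp only [sq, Finset.sum_mul_sum, smul_mul_smul_comm, map_sum, map_smul, gaussMean_X_mul_X,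
    smul_eq_mul, mul_ite, mul_one, mul_zero, Finset.sum_ite_eq, Finset.mem_univ, if_true]

lemma pderiv_quadraticForm (A : σ → σ → ℝ) (c : σ) :
    pderiv c (∑ k, ∑ l, A k l • (X k * X l : MvPolynomial σ ℝ)) =
      ∑ l, (A c l + A l c) • X l := by
  classical
  simp only [map_sum, Derivation.map_smul, Derivation.leibniz, pderiv_X, Pi.single_apply,
    smul_eq_mul, mul_ite, mul_one, mul_zero, smul_add, Finset.sum_add_distrib, smul_ite, smul_zero,
    Finset.sum_ite_eq', Finset.mem_univ, if_true, add_smul]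
  rw [add_comm]
  congr 1
  rw [Finset.sum_comm]
  simp

lemma gaussMean_quadraticForm_sub_sq_le (A : σ → σ → ℝ) (t : ℝ) :
    gaussMean ((∑ k, ∑ l, A k l • (X k * X l) - C t : MvPolynomial σ ℝ) ^ 2) ≤
      4 * ∑ k, ∑ l, A k l ^ 2 + (∑ k, A k k - t) ^ 2 := by
  classical
  set q : MvPolynomial σ ℝ := ∑ k, ∑ l, A k l • (X k * X l) with hq
  have hmean : gaussMean (q - C t) = ∑ k, A k k - t := by
    simp [hq, gaussMean_X_mul_X]
  have hcarre : gaussMean (carre (q - C t) (q - C t)) = ∑ c, ∑ l, (A c l + A l c) ^ 2 := by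
    rw [carre_apply, map_sum]
    refine Finset.sum_congr rfl fun c _ => ?_
    rw [← sq, map_sub, pderiv_C, sub_zero, hq, pderiv_quadraticForm, gaussMean_linearForm_sq]
  have hsym : ∑ c, ∑ l, (A c l + A l c) ^ 2 ≤ 4 * ∑ c, ∑ l, A c l ^ 2 := by
    calc ∑ c, ∑ l, (A c l + A l c) ^ 2
        ≤ ∑ c, ∑ l, (2 * A c l ^ 2 + 2 * A l c ^ 2) := by
          gcongr with c _ l _
          linarith [sq_nonneg (A c l - A l c)]
      _ = 4 * ∑ c, ∑ l, A c l ^ 2 := by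
          simp only [Finset.sum_add_distrib, ← Finset.mul_sum]
          rw [Finset.sum_comm (f := fun c l => A l c ^ 2)]
          ring
  have hpoincare := gaussian_poincare (q - C t)
  rw [hmean, hcarre] at hpoincare
  linarith

end QuadraticForms

section SecondOrder

variable {σ : Type} [Fintype σ]

lemma two_mul_gaussMean_carre_le (p q : MvPolynomial σ ℝ) :
    2 * gaussMean (carre p q) ≤ gaussMean (carre p p) + gaussMean (carre q q) := by
  have h : 0 ≤ gaussMean (carre (p - q) (p - q)) := by
    simp only [carre_apply, ← sq, map_sum]
    exact Finset.sum_nonneg fun k _ => gaussMean_sq_nonneg _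
  simp only [map_sub, LinearMap.sub_apply, carre_comm q p] at h
  linarith

lemma pderiv_carre_self (p : MvPolynomial σ ℝ) (s : σ) :
    pderiv s (carre p p) = 2 * ∑ k, pderiv k p * pderiv s (pderiv k p) := by
  simp only [carre_apply, map_sum, Derivation.leibniz, smul_eq_mul, ← two_mul, ← Finset.mul_sum]

lemma carre_carre_self_carre_self (p q : MvPolynomial σ ℝ) :
    carre (carre p p) (carre q q) =
      4 * ∑ k, ∑ l, pderiv k p * pderiv l q * carre (pderiv k p) (pderiv l q) := by
  have hterm (s : σ) : pderiv s (carre p p) * pderiv s (carre q q) =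
      4 * ∑ k, ∑ l, pderiv k p * pderiv l q *
        (pderiv s (pderiv k p) * pderiv s (pderiv l q)) := by
    rw [pderiv_carre_self, pderiv_carre_self, mul_mul_mul_comm, Finset.sum_mul_sum]
    norm_num only
    simp only [mul_mul_mul_comm]
  rw [carre_apply]
  simp only [hterm, ← Finset.mul_sum]
  rw [Finset.sum_comm]
  congr 1
  refine Finset.sum_congr rfl fun k _ => ?_
  rw [Finset.sum_comm]
  simp only [carre_apply, Finset.mul_sum]

lemma gaussMean_carre_carre_self_le {n : ℕ} {p : MvPolynomial σ ℝ} (hp : p.totalDegree ≤ n)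
    (c : ℝ) : gaussMean (carre (carre p p) (carre p p)) ≤
      ((n - 1 + (n - 1) : ℕ) : ℝ) * gaussMean ((carre p p - C c) ^ 2) := by
  have h := gaussMean_carre_self_le (totalDegree_sub_C_le (totalDegree_carre_le hp hp) c)
  simpa only [map_sub, LinearMap.sub_apply, carre_C_left, carre_C_right, sub_zero] using h

lemma gaussMean_carre_carre_self_carre_self_le {p q : MvPolynomial σ ℝ} {a b : ℕ}
    (ha : 1 ≤ a) (hb : 1 ≤ b) (hp : p.totalDegree ≤ a) (hq : q.totalDegree ≤ b) {c c' τ : ℝ}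
    (hpp : gaussMean ((carre p p - C c) ^ 2) ≤ τ) (hqq : gaussMean ((carre q q - C c') ^ 2) ≤ τ) :
    gaussMean (carre (carre p p) (carre q q)) ≤ ((a - 1) + (b - 1)) * τ := by
  have hp' := (gaussMean_carre_carre_self_le hp c).trans
    (mul_le_mul_of_nonneg_left hpp (Nat.cast_nonneg _))
  have hq' := (gaussMean_carre_carre_self_le hq c').trans
    (mul_le_mul_of_nonneg_left hqq (Nat.cast_nonneg _))
  have := two_mul_gaussMean_carre_le (carre p p) (carre q q)
  push_cast [Nat.cast_sub ha, Nat.cast_sub hb] at hp' hq'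
  linarith

lemma sum_gaussMean_carre_pderiv_sq_le {p q : MvPolynomial σ ℝ} {a b : ℕ} (ha : 1 ≤ a)
    (hb : 1 ≤ b) (hp : p ∈ ouEigenspace (a : ℝ)) (hq : q ∈ ouEigenspace (b : ℝ)) {c c' τ : ℝ}
    (hpp : gaussMean ((carre p p - C c) ^ 2) ≤ τ) (hqq : gaussMean ((carre q q - C c') ^ 2) ≤ τ) :
    ∑ k, ∑ l, gaussMean (carre (pderiv k p) (pderiv l q) ^ 2) ≤ (a + b) ^ 2 * τ := by
  set D : ℕ := (a - 1) + (b - 1) with hD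
  have hD_cast : (D : ℝ) = (a - 1) + (b - 1) := by
    rw [hD, Nat.cast_add, Nat.cast_sub ha, Nat.cast_sub hb, Nat.cast_one]
  have hpd := totalDegree_le_of_mem_ouEigenspace hp
  have hqd := totalDegree_le_of_mem_ouEigenspace hq
  have hτ : 0 ≤ τ := (gaussMean_sq_nonneg _).trans hpp
  have hterm (k l : σ) : gaussMean (carre (pderiv k p) (pderiv l q) ^ 2) ≤
      D / 2 * gaussMean (pderiv k p * pderiv l q * carre (pderiv k p) (pderiv l q)) := by
    rw [carre_eq_ouShift (pderiv_mem_ouEigenspace hp k) (pderiv_mem_ouEigenspace hq l), ← hD_cast]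
    exact gaussMean_ouShift_sq_le_mul
      (totalDegree_mul_le (totalDegree_pderiv_le k hpd) (totalDegree_pderiv_le l hqd))
  have hsum : 4 * ∑ k, ∑ l,
      gaussMean (pderiv k p * pderiv l q * carre (pderiv k p) (pderiv l q)) =
        gaussMean (carre (carre p p) (carre q q)) := by
    rw [carre_carre_self_carre_self, ← map_ofNat C 4, gaussMean_C_mul]
    simp only [map_sum]
  have hcarre : gaussMean (carre (carre p p) (carre q q)) ≤ D * τ :=
    hD_cast ▸ gaussMean_carre_carre_self_carre_self_le ha hb hpd hqd hpp hqq
  have hD_le : (D : ℝ) ^ 2 ≤ (a + b) ^ 2 :=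
    pow_le_pow_left₀ D.cast_nonneg (by exact_mod_cast (by omega : D ≤ a + b)) 2
  calc ∑ k, ∑ l, gaussMean (carre (pderiv k p) (pderiv l q) ^ 2)
      ≤ ∑ k, ∑ l, D / 2 * gaussMean (pderiv k p * pderiv l q *
          carre (pderiv k p) (pderiv l q)) :=
        Finset.sum_le_sum fun k _ => Finset.sum_le_sum fun l _ => hterm k l
    _ = D / 8 * gaussMean (carre (carre p p) (carre q q)) := by
        rw [← hsum]
        simp only [← Finset.mul_sum]
        ring
    _ ≤ D / 8 * (D * τ) := mul_le_mul_of_nonneg_left hcarre (by positivity)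
    _ ≤ (a + b) ^ 2 * τ := by nlinarith [hD_le, hτ, mul_nonneg (sq_nonneg (D : ℝ)) hτ]

lemma gaussMean_sum_carre_pderiv_sub_sq_le {p q : MvPolynomial σ ℝ} {a b : ℕ} (ha : 1 ≤ a)
    (hb : 1 ≤ b) (hp : p ∈ ouEigenspace (a : ℝ)) (hq : q ∈ ouEigenspace (b : ℝ)) (c : ℝ) :
    gaussMean ((∑ k, carre (pderiv k p) (pderiv k q) - C ((a + b - 2) / 2 * c)) ^ 2) ≤
      (a + b) ^ 2 * gaussMean ((carre p q - C c) ^ 2) := by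
  set D : ℕ := (a - 1) + (b - 1) with hD
  have hD_cast : (D : ℝ) = (a - 1) + (b - 1) := by
    rw [hD, Nat.cast_add, Nat.cast_sub ha, Nat.cast_sub hb, Nat.cast_one]
  have hsum : ∑ k, carre (pderiv k p) (pderiv k q) = ouShift D (carre p q) := by
    rw [carre_apply p q, map_sum, hD_cast]
    exact Finset.sum_congr rfl fun k _ =>
      carre_eq_ouShift (pderiv_mem_ouEigenspace hp k) (pderiv_mem_ouEigenspace hq k)
  have hdeg : (carre p q).totalDegree ≤ D :=
    totalDegree_carre_le (totalDegree_le_of_mem_ouEigenspace hp)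
      (totalDegree_le_of_mem_ouEigenspace hq)
  have hcoeff : ((a + b - 2) / 2 * c : ℝ) = D / 2 * c := by
    rw [hD_cast]
    ring
  rw [hsum, hcoeff, ← ouShift_C, ← map_sub]
  refine (gaussMean_ouShift_sq_le (totalDegree_sub_C_le hdeg c)).trans
    (mul_le_mul_of_nonneg_right (pow_le_pow_left₀ (by positivity) ?_ 2) (gaussMean_sq_nonneg _))
  rw [hD_cast]
  linarith [(a.cast_nonneg : (0 : ℝ) ≤ a), (b.cast_nonneg : (0 : ℝ) ≤ b)]

end SecondOrder

section Rotation

variable {σ : Type}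

/-- The infinitesimal generator of the rotations of `(N, N')`, for independent `N` and `N'` whose
coordinates are indexed by the left and right copies of `σ`. -/
noncomputable def rotDeriv : Derivation ℝ (MvPolynomial (σ ⊕ σ) ℝ) (MvPolynomial (σ ⊕ σ) ℝ) :=
  mkDerivation ℝ (Sum.elim (fun k => X (Sum.inr k)) fun k => -X (Sum.inl k))

/-- Composition with the rotation `(N, N') ↦ (cos t N + sin t N', cos t N' - sin t N)`. -/
noncomputable def gaussRot (t : ℝ) : MvPolynomial (σ ⊕ σ) ℝ →ₐ[ℝ] MvPolynomial (σ ⊕ σ) ℝ :=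
  aeval fun i => Real.cos t • X i + Real.sin t • rotDeriv (X i)

lemma gaussRot_X (t : ℝ) (i : σ ⊕ σ) :
    gaussRot t (X i) = Real.cos t • X i + Real.sin t • rotDeriv (X i) :=
  aeval_X _ i

lemma gaussRot_C (t a : ℝ) : gaussRot t (C a : MvPolynomial (σ ⊕ σ) ℝ) = C a :=
  aeval_C _ a

lemma gaussRot_zero (p : MvPolynomial (σ ⊕ σ) ℝ) : gaussRot 0 p = p := by
  simp [gaussRot]

lemma rotDeriv_rotDeriv_X (i : σ ⊕ σ) : rotDeriv (rotDeriv (X i)) = -X i := by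
  rcases i with i | i <;> simp [rotDeriv, mkDerivation_X]

lemma gaussRot_rotDeriv_X (t : ℝ) (i : σ ⊕ σ) :
    gaussRot t (rotDeriv (X i)) = Real.cos t • rotDeriv (X i) - Real.sin t • X i := by
  rcases i with i | i
  · simp only [rotDeriv, mkDerivation_X, Sum.elim_inl, gaussRot_X, Sum.elim_inr, smul_neg]
    abel
  · simp only [rotDeriv, mkDerivation_X, Sum.elim_inl, gaussRot_X, Sum.elim_inr, smul_neg, map_neg]
    abel

lemma gaussRot_rotDeriv (t : ℝ) (p : MvPolynomial (σ ⊕ σ) ℝ) :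
    gaussRot t (rotDeriv p) = rotDeriv (gaussRot t p) := by
  induction p using MvPolynomial.induction_on with
  | C a => simp
  | add p q hp hq => rw [map_add, map_add, hp, hq, map_add, map_add]
  | mul_X p i hp =>
    have hX : gaussRot t (rotDeriv (X i)) = rotDeriv (gaussRot t (X i)) := by
      rw [gaussRot_rotDeriv_X, gaussRot_X, map_add, Derivation.map_smul, Derivation.map_smul,
        rotDeriv_rotDeriv_X, smul_neg, ← sub_eq_add_neg]
    rw [Derivation.leibniz, map_add, smul_eq_mul, smul_eq_mul, map_mul, map_mul, map_mul, hp, hX,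
      Derivation.leibniz, smul_eq_mul, smul_eq_mul]

lemma hasDerivAt_gaussRot (p : MvPolynomial (σ ⊕ σ) ℝ) (ℓ : MvPolynomial (σ ⊕ σ) ℝ →ₗ[ℝ] ℝ)
    (t : ℝ) : HasDerivAt (fun t => ℓ (gaussRot t p)) (ℓ (gaussRot t (rotDeriv p))) t := by
  induction p using MvPolynomial.induction_on generalizing ℓ with
  | C a => simpa [gaussRot_C] using hasDerivAt_const t (ℓ (C a))
  | add p q hp hq => simp only [map_add]; exact (hp ℓ).add (hq ℓ)
  | mul_X p i hp =>
    have hmul (u : MvPolynomial (σ ⊕ σ) ℝ) :=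
      hp (ℓ ∘ₗ LinearMap.mulRight ℝ u)
    have hfun : (fun t => ℓ (gaussRot t (p * X i))) = fun t =>
        Real.cos t * ℓ (gaussRot t p * X i) + Real.sin t * ℓ (gaussRot t p * rotDeriv (X i)) := by
      funext t
      rw [map_mul, gaussRot_X, mul_add, map_add, mul_smul_comm, mul_smul_comm, map_smul, map_smul,
        smul_eq_mul, smul_eq_mul]
    rw [hfun]
    refine (((Real.hasDerivAt_cos t).mul (hmul (X i))).add
      ((Real.hasDerivAt_sin t).mul (hmul (rotDeriv (X i))))).congr_deriv ?_
    simp only [LinearMap.comp_apply, LinearMap.mulRight_apply, Derivation.leibniz, smul_eq_mul,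
      map_add, map_mul, gaussRot_rotDeriv_X, gaussRot_X, mul_add, mul_sub,
      mul_smul_comm, map_sub, map_smul, mul_comm (X i)]
    ring

lemma totalDegree_gaussRot_le (t : ℝ) {p : MvPolynomial (σ ⊕ σ) ℝ} {m : ℕ}
    (hp : p.totalDegree ≤ m) : (gaussRot t p).totalDegree ≤ m := by
  have hX (i : σ ⊕ σ) : (gaussRot t (X i)).totalDegree ≤ 1 := by
    rw [gaussRot_X]
    refine (totalDegree_add _ _).trans (max_le ?_ ?_)
    · exact (totalDegree_smul_le _ _).trans (totalDegree_X _).le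
    · refine (totalDegree_smul_le _ _).trans ?_
      rcases i with i | i <;> simp [rotDeriv, mkDerivation_X]
  rw [← mem_restrictTotalDegree]
  refine map_mem_of_totalDegree_le (gaussRot t).toLinearMap _ (fun s a hs => ?_) hp
  rw [mem_restrictTotalDegree, AlgHom.toLinearMap_apply, monomial_eq, map_mul, gaussRot_C,
    Finsupp.prod, map_prod, C_mul']
  refine (totalDegree_smul_le _ _).trans ((totalDegree_finsetProd _ _).trans (le_trans ?_ hs))
  refine Finset.sum_le_sum fun i _ => ?_
  rw [map_pow]
  exact (totalDegree_pow _ _).trans (mul_le_of_le_one_right' (hX i))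

lemma eval_gaussRot_rename_inl (t : ℝ) (p : MvPolynomial σ ℝ) (x y : σ → ℝ) :
    eval (Sum.elim x y) (gaussRot t (rename Sum.inl p)) =
      eval (fun k => Real.cos t * x k + Real.sin t * y k) p := by
  induction p using MvPolynomial.induction_on with
  | C a => simp
  | add p q hp hq => simp only [map_add, hp, hq]
  | mul_X p i hp => simp [hp, gaussRot_X, rotDeriv, mkDerivation_X, smul_eval]

variable [Fintype σ]

lemma rotDeriv_apply (p : MvPolynomial (σ ⊕ σ) ℝ) : rotDeriv p =
    ∑ k, (X (Sum.inr k) * pderiv (Sum.inl k) p - X (Sum.inl k) * pderiv (Sum.inr k) p) := by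
  classical
  induction p using MvPolynomial.induction_on with
  | C a => simp
  | add p q hp hq =>
    rw [map_add, hp, hq, ← Finset.sum_add_distrib]
    exact Finset.sum_congr rfl fun k _ => by simp only [map_add]; ring
  | mul_X p i hp =>
    have hX : rotDeriv (X i : MvPolynomial (σ ⊕ σ) ℝ) = ∑ k,
        (X (Sum.inr k) * pderiv (Sum.inl k) (X i) - X (Sum.inl k) * pderiv (Sum.inr k) (X i)) := by
      rcases i with i | i <;> simp [rotDeriv, mkDerivation_X, pderiv_X, Pi.single_apply]
    simp only [Derivation.leibniz, smul_eq_mul]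
    rw [hX, hp, Finset.mul_sum, Finset.mul_sum, ← Finset.sum_add_distrib]
    exact Finset.sum_congr rfl fun k _ => by ring

lemma gaussMean_rotDeriv (p : MvPolynomial (σ ⊕ σ) ℝ) : gaussMean (rotDeriv p) = 0 := by
  rw [rotDeriv_apply, map_sum]
  refine Finset.sum_eq_zero fun k _ => ?_
  rw [map_sub, gaussMean_X_mul, gaussMean_X_mul, pderiv_pderiv_comm, sub_self]

theorem gaussMean_gaussRot (t : ℝ) (p : MvPolynomial (σ ⊕ σ) ℝ) :
    gaussMean (gaussRot t p) = gaussMean p := by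
  have hderiv (t : ℝ) : HasDerivAt (fun t => gaussMean (gaussRot t p)) 0 t := by
    simpa only [gaussRot_rotDeriv, gaussMean_rotDeriv] using hasDerivAt_gaussRot p gaussMean t
  simpa only [gaussRot_zero] using
    is_const_of_deriv_eq_zero (fun t => (hderiv t).differentiableAt) (fun t => (hderiv t).deriv) t 0

lemma gaussMean_mul_sq_le (p q : MvPolynomial σ ℝ) :
    gaussMean (p * q) ^ 2 ≤ gaussMean (p ^ 2) * gaussMean (q ^ 2) := by
  have h := LinearMap.BilinForm.apply_sq_le_of_symm ((LinearMap.mul ℝ _).compr₂ gaussMean)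
    (fun p : MvPolynomial σ ℝ => by simpa [sq] using gaussMean_sq_nonneg p)
    ⟨fun p q => by simp [mul_comm]⟩ p q
  simpa [sq] using h

lemma abs_sub_sub_mul_le_of_hasDerivAt {f f' f'' : ℝ → ℝ} {M t : ℝ} (ht : 0 ≤ t)
    (hf : ∀ s, HasDerivAt f (f' s) s) (hf' : ∀ s, HasDerivAt f' (f'' s) s)
    (hM : ∀ s, |f'' s| ≤ M) : |f t - f 0 - t * f' 0| ≤ t ^ 2 * M := by
  have hfirst (s : ℝ) (hs : 0 ≤ s) : |f' s - f' 0| ≤ M * s := by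
    simpa using norm_image_sub_le_of_norm_deriv_le_segment' (fun x _ => (hf' x).hasDerivWithinAt)
      (fun x _ => hM x) s ⟨hs, le_rfl⟩
  have h := norm_image_sub_le_of_norm_deriv_le_segment' (f := fun s => f s - s * f' 0)
    (f' := fun s => f' s - 1 * f' 0) (C := M * t)
    (fun x _ => ((hf x).sub ((hasDerivAt_id x).mul_const _)).hasDerivWithinAt) (fun x hx => ?_)
    t ⟨ht, le_rfl⟩
  · calc |f t - f 0 - t * f' 0| = ‖f t - t * f' 0 - (f 0 - 0 * f' 0)‖ := by
          rw [Real.norm_eq_abs]; ring_nf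
      _ ≤ M * t * (t - 0) := h
      _ = t ^ 2 * M := by ring
  · rw [one_mul]
    exact (hfirst x hx.1).trans
      (mul_le_mul_of_nonneg_left hx.2.le ((abs_nonneg _).trans (hM 0)))

theorem gaussMean_gaussRot_taylor_sq_le (p : MvPolynomial (σ ⊕ σ) ℝ) {t : ℝ} (ht : 0 ≤ t) :
    gaussMean ((gaussRot t p - p - t • rotDeriv p) ^ 2) ≤
      t ^ 4 * gaussMean (rotDeriv (rotDeriv p) ^ 2) := by
  obtain ⟨r, hr⟩ : ∃ r, r = gaussRot t p - p - t • rotDeriv p := ⟨_, rfl⟩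
  obtain ⟨A, hA, hA_sq⟩ : ∃ A, 0 ≤ A ∧ A ^ 2 = gaussMean (r ^ 2) :=
    ⟨_, Real.sqrt_nonneg _, Real.sq_sqrt (gaussMean_sq_nonneg r)⟩
  obtain ⟨B, hB, hB_sq⟩ : ∃ B, 0 ≤ B ∧ B ^ 2 = gaussMean (rotDeriv (rotDeriv p) ^ 2) :=
    ⟨_, Real.sqrt_nonneg _, Real.sq_sqrt (gaussMean_sq_nonneg _)⟩
  have hbound (s : ℝ) : |gaussMean (gaussRot s (rotDeriv (rotDeriv p)) * r)| ≤ B * A := by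
    refine abs_le_of_sq_le_sq ?_ (by positivity)
    have h := gaussMean_mul_sq_le (gaussRot s (rotDeriv (rotDeriv p))) r
    rwa [← map_pow (gaussRot s), gaussMean_gaussRot, ← hA_sq, ← hB_sq, ← mul_pow] at h
  have hderiv (q : MvPolynomial (σ ⊕ σ) ℝ) (s : ℝ) := by
    simpa only [LinearMap.comp_apply, LinearMap.mulRight_apply] using
      hasDerivAt_gaussRot q (gaussMean ∘ₗ LinearMap.mulRight ℝ r) s
  have htaylor := abs_sub_sub_mul_le_of_hasDerivAt ht (hderiv p) (hderiv (rotDeriv p)) hbound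
  have hA_le : A ^ 2 ≤ t ^ 2 * (B * A) := by
    have hr_mul : A ^ 2 = gaussMean (gaussRot t p * r) - gaussMean (p * r) -
        t * gaussMean (rotDeriv p * r) := by
      rw [hA_sq, ← smul_eq_mul t, ← map_smul, ← map_sub, ← map_sub, ← smul_mul_assoc, ← sub_mul,
        ← sub_mul, ← hr, sq]
    rw [gaussRot_zero, gaussRot_zero, ← hr_mul] at htaylor
    exact (le_abs_self _).trans htaylor
  have hAB : A ≤ t ^ 2 * B := by
    by_contra! hlt
    have hA_pos : 0 < A := lt_of_le_of_lt (by positivity) hlt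
    nlinarith [hA_le, hlt, hA_pos]
  calc gaussMean ((gaussRot t p - p - t • rotDeriv p) ^ 2) = A ^ 2 := by rw [hA_sq, hr]
    _ ≤ (t ^ 2 * B) ^ 2 := pow_le_pow_left₀ hA hAB 2
    _ = t ^ 4 * gaussMean (rotDeriv (rotDeriv p) ^ 2) := by rw [mul_pow, hB_sq]; ring

end Rotation

section RotationRemainder

variable {σ τ : Type} [Fintype σ] [Fintype τ]

lemma measurePreserving_sumElim : MeasurePreserving
    (fun z : (σ → ℝ) × (τ → ℝ) => (Sum.elim z.1 z.2 : σ ⊕ τ → ℝ))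
    ((gaussPi σ).prod (gaussPi τ)) (gaussPi (σ ⊕ τ)) :=
  (measurePreserving_sumPiEquivProdPi fun _ : σ ⊕ τ => gaussianReal 0 1).symm

@[fun_prop]
lemma measurable_eval_comp {ι α : Type*} [Countable ι] [MeasurableSpace α] (p : MvPolynomial ι ℝ)
    {f : α → ι → ℝ} (hf : Measurable f) : Measurable fun a => eval (f a) p :=
  (MvPolynomial.continuous_eval p).measurable.comp hf

lemma integrable_eval_sumElim (p : MvPolynomial (σ ⊕ τ) ℝ) :
    Integrable (fun z : (σ → ℝ) × (τ → ℝ) => eval (Sum.elim z.1 z.2) p)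
      ((gaussPi σ).prod (gaussPi τ)) :=
  measurePreserving_sumElim.integrable_comp_of_integrable (integrable_eval_gaussPi p)

lemma gaussMean_eq_integral_prod (p : MvPolynomial (σ ⊕ τ) ℝ) :
    gaussMean p = ∫ z, eval (Sum.elim z.1 z.2) p ∂((gaussPi σ).prod (gaussPi τ)) := by
  rw [gaussMean_apply, ← measurePreserving_sumElim.map_eq,
    integral_map measurePreserving_sumElim.aemeasurable (by fun_prop)]

lemma gaussMean_ouGen_sq_le {D : ℕ} {p : MvPolynomial σ ℝ} (hp : p.totalDegree ≤ D) :
    gaussMean (ouGen p ^ 2) ≤ D ^ 2 * gaussMean (p ^ 2) := by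
  obtain ⟨c, rfl, hc⟩ := exists_sum_ouEigenspace D hp
  have hL : ouGen (∑ j ∈ Finset.range (D + 1), c j) =
      ∑ j ∈ Finset.range (D + 1), (-j : ℝ) • c j := by
    rw [map_sum]
    exact Finset.sum_congr rfl fun j _ => by rw [mem_ouEigenspace.1 (hc j), neg_smul]
  rw [hL, sq, gaussMean_sum_smul_mul_sum_smul hc, gaussMean_sum_sq hc, Finset.mul_sum]
  refine Finset.sum_le_sum fun j hj => mul_le_mul_of_nonneg_right ?_ (gaussMean_sq_nonneg _)
  have hj : (j : ℝ) ≤ D := by exact_mod_cast Nat.le_of_lt_succ (Finset.mem_range.1 hj)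
  nlinarith [hj, j.cast_nonneg (α := ℝ)]

lemma sum_gaussMean_pderiv_sq_le {D : ℕ} {p : MvPolynomial σ ℝ} (hp : p.totalDegree ≤ D) :
    ∑ k, gaussMean (pderiv k p ^ 2) ≤ D * gaussMean (p ^ 2) := by
  simpa only [carre_apply, ← sq, map_sum] using gaussMean_carre_self_le hp

lemma rotDeriv_rename_inl (p : MvPolynomial σ ℝ) :
    rotDeriv (rename Sum.inl p) = ∑ k, X (Sum.inr k) * rename Sum.inl (pderiv k p) := by
  classical
  have hinl (k : σ) : pderiv (Sum.inl k : σ ⊕ σ) (rename Sum.inl p) = rename Sum.inl (pderiv k p) :=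
    pderiv_rename Sum.inl_injective k p
  have hinr (k : σ) : pderiv (Sum.inr k : σ ⊕ σ) (rename Sum.inl p) = 0 :=
    pderiv_eq_zero_of_notMem_vars fun h => by
      simpa using vars_rename _ _ h
  simp only [rotDeriv_apply, hinl, hinr, mul_zero, sub_zero]

lemma eval_rotDeriv_rotDeriv_rename_inl (p : MvPolynomial σ ℝ) (x y : σ → ℝ) :
    eval (Sum.elim x y) (rotDeriv (rotDeriv (rename Sum.inl p))) =
      eval y (∑ k, ∑ l, eval x (pderiv l (pderiv k p)) • (X k * X l) -
        C (∑ k, x k * eval x (pderiv k p))) := by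
  rw [rotDeriv_rename_inl]
  simp only [map_sum, Derivation.leibniz, rotDeriv_rename_inl]
  simp only [rotDeriv, mkDerivation_X, Sum.elim_inr, smul_eq_mul, map_add, map_mul, map_sum,
    map_neg, eval_X, eval_rename, Sum.elim_comp_inl, Sum.elim_inl, map_sub, eval_C, smul_eval]
  rw [← Finset.sum_sub_distrib]
  refine Finset.sum_congr rfl fun k _ => ?_
  rw [Finset.mul_sum, sub_eq_add_neg]
  congr 1
  · exact Finset.sum_congr rfl fun l _ => by ring
  · ring

lemma gaussMean_rotDeriv_rotDeriv_sq_le {D : ℕ} {p : MvPolynomial σ ℝ} (hp : p.totalDegree ≤ D) :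
    gaussMean (rotDeriv (rotDeriv (rename Sum.inl p)) ^ 2) ≤ 5 * D ^ 2 * gaussMean (p ^ 2) := by
  have hfibre (x : σ → ℝ) :
      ∫ y, eval (Sum.elim x y) (rotDeriv (rotDeriv (rename Sum.inl p)) ^ 2) ∂gaussPi σ ≤
        eval x ((4 : ℝ) • ∑ k, ∑ l, pderiv l (pderiv k p) ^ 2 + ouGen p ^ 2) := by
    simp only [map_pow, eval_rotDeriv_rotDeriv_rename_inl]
    simp only [← map_pow, ← gaussMean_apply]
    refine (gaussMean_quadraticForm_sub_sq_le _ _).trans_eq ?_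
    simp [ouGen_apply]
  have hhess : ∑ k, ∑ l, gaussMean (pderiv l (pderiv k p) ^ 2) ≤ D * (D * gaussMean (p ^ 2)) := by
    calc ∑ k, ∑ l, gaussMean (pderiv l (pderiv k p) ^ 2)
        ≤ ∑ k, D * gaussMean (pderiv k p ^ 2) := Finset.sum_le_sum fun k _ =>
          sum_gaussMean_pderiv_sq_le ((totalDegree_pderiv_le k hp).trans (Nat.sub_le _ _))
      _ ≤ D * (D * gaussMean (p ^ 2)) := by
          rw [← Finset.mul_sum]
          exact mul_le_mul_of_nonneg_left (sum_gaussMean_pderiv_sq_le hp) D.cast_nonneg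
  have hint := integrable_eval_sumElim (rotDeriv (rotDeriv (rename Sum.inl p)) ^ 2)
  calc gaussMean (rotDeriv (rotDeriv (rename Sum.inl p)) ^ 2)
      ≤ gaussMean ((4 : ℝ) • ∑ k, ∑ l, pderiv l (pderiv k p) ^ 2 + ouGen p ^ 2) := by
        rw [gaussMean_eq_integral_prod, integral_prod _ hint]
        exact integral_mono hint.integral_prod_left (integrable_eval_gaussPi _) hfibre
    _ = 4 * ∑ k, ∑ l, gaussMean (pderiv l (pderiv k p) ^ 2) + gaussMean (ouGen p ^ 2) := by
        simp only [map_add, map_smul, smul_eq_mul, map_sum]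
    _ ≤ 5 * D ^ 2 * gaussMean (p ^ 2) := by linarith [gaussMean_ouGen_sq_le hp]

/-- The remainder of the first-order expansion in `t` of `p (cos t N + sin t N')`. -/
noncomputable def rotRemainder (t : ℝ) (p : MvPolynomial σ ℝ) : MvPolynomial (σ ⊕ σ) ℝ :=
  gaussRot t (rename Sum.inl p) - rename Sum.inl p - t • rotDeriv (rename Sum.inl p)

lemma gaussMean_rotRemainder_sq_le {D : ℕ} {p : MvPolynomial σ ℝ} (hp : p.totalDegree ≤ D) {t : ℝ}
    (ht : 0 ≤ t) : gaussMean (rotRemainder t p ^ 2) ≤ t ^ 4 * (5 * D ^ 2 * gaussMean (p ^ 2)) :=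
  (gaussMean_gaussRot_taylor_sq_le _ ht).trans
    (mul_le_mul_of_nonneg_left (gaussMean_rotDeriv_rotDeriv_sq_le hp) (by positivity))

lemma eval_rotation_eq (t : ℝ) (p : MvPolynomial σ ℝ) (x y : σ → ℝ) :
    eval (fun k => Real.cos t * x k + Real.sin t * y k) p =
      eval x p + t * ∑ k, eval x (pderiv k p) * y k + eval (Sum.elim x y) (rotRemainder t p) := by
  simp only [rotRemainder, map_sub, eval_gaussRot_rename_inl, smul_eval, rotDeriv_rename_inl,
    map_sum, map_mul, eval_X, Sum.elim_inr, eval_rename, Sum.elim_comp_inl, mul_comm (y _)]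
  ring

lemma totalDegree_rotRemainder_le {ι : Type} [Finite ι] {D : ℕ} (t : ℝ) {p : MvPolynomial ι ℝ}
    (hp : p.totalDegree ≤ D) : (rotRemainder t p).totalDegree ≤ D + 1 := by
  cases nonempty_fintype ι
  have hrename {q : MvPolynomial ι ℝ} (hq : q.totalDegree ≤ D) :
      (rename (Sum.inl : ι → ι ⊕ ι) q).totalDegree ≤ D := (totalDegree_rename_le _ _).trans hq
  refine (totalDegree_sub _ _).trans (max_le ((totalDegree_sub _ _).trans (max_le ?_ ?_)) ?_)
  · exact (totalDegree_gaussRot_le t (hrename hp)).trans (Nat.le_succ D)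
  · exact (hrename hp).trans (Nat.le_succ D)
  · refine (totalDegree_smul_le _ _).trans ?_
    rw [rotDeriv_rename_inl, add_comm D]
    exact totalDegree_finsetSum_le fun k _ => totalDegree_mul_le (totalDegree_X _).le
      (hrename ((totalDegree_pderiv_le k hp).trans (Nat.sub_le _ _)))

end RotationRemainder

section GradientFourier

variable {σ α κ : Type} [Fintype σ] [Fintype α] [Fintype κ]

lemma integrable_exp_of_nonpos {Ω : Type*} [MeasurableSpace Ω] {μ : Measure Ω} [IsFiniteMeasure μ]
    {f : Ω → ℝ} (hf : Measurable f) (hf_nonpos : ∀ x, f x ≤ 0) :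
    Integrable (fun x => Real.exp (f x)) μ := by
  refine Integrable.of_bound hf.exp.aestronglyMeasurable 1 (ae_of_all _ fun x => ?_)
  rw [Real.norm_eq_abs, Real.abs_exp]
  exact Real.exp_le_one_iff.2 (hf_nonpos x)

lemma integral_exp_le_one {Ω : Type*} [MeasurableSpace Ω] {μ : Measure Ω} [IsProbabilityMeasure μ]
    {f : Ω → ℝ} (hf : ∀ x, f x ≤ 0) : ∫ x, Real.exp (f x) ∂μ ≤ 1 := by
  refine (integral_mono_of_nonneg (ae_of_all _ fun x => (Real.exp_pos _).le)
    (integrable_const (1 : ℝ)) (ae_of_all _ fun x => Real.exp_le_one_iff.2 (hf x))).trans_eq ?_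
  simp

lemma gaussianReal_prod_map_rotation (t : ℝ) :
    ((gaussianReal 0 1).prod (gaussianReal 0 1)).map
      (fun z : ℝ × ℝ => Real.cos t * z.1 + Real.sin t * z.2) = gaussianReal 0 1 := by
  have hcomp : (fun z : ℝ × ℝ => Real.cos t * z.1 + Real.sin t * z.2) =
      (fun z : ℝ × ℝ => z.1 + z.2) ∘ Prod.map (Real.cos t * ·) (Real.sin t * ·) := rfl
  rw [hcomp, ← Measure.map_map (by fun_prop) (by fun_prop),
    ← Measure.map_prod_map _ _ (by fun_prop) (by fun_prop), gaussianReal_map_const_mul,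
    gaussianReal_map_const_mul]
  refine gaussianReal_conv_gaussianReal.trans ?_
  congr 1
  · simp
  · ext
    simp

lemma measurePreserving_rotation (t : ℝ) : MeasurePreserving
    (fun z : (σ → ℝ) × (σ → ℝ) => fun k => Real.cos t * z.1 k + Real.sin t * z.2 k)
    ((gaussPi σ).prod (gaussPi σ)) (gaussPi σ) := by
  have hrot : MeasurePreserving (fun z : ℝ × ℝ => Real.cos t * z.1 + Real.sin t * z.2)
      ((gaussianReal 0 1).prod (gaussianReal 0 1)) (gaussianReal 0 1) :=
    ⟨by fun_prop, gaussianReal_prod_map_rotation t⟩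
  exact (measurePreserving_pi _ _ fun _ => hrot).comp
    (measurePreserving_arrowProdEquivProdArrow ℝ ℝ σ _ _).symm

lemma integral_cexp_linearForm (b : σ → ℝ) :
    ∫ y, Complex.exp ((∑ k, b k * y k : ℝ) * Complex.I) ∂gaussPi σ =
      Real.exp (-(1 / 2) * ∑ k, b k ^ 2) := by
  have hprod (y : σ → ℝ) : Complex.exp ((∑ k, b k * y k : ℝ) * Complex.I) =
      ∏ k, Complex.exp ((b k : ℂ) * (y k : ℂ) * Complex.I) := by
    rw [← Complex.exp_sum]
    push_cast
    rw [Finset.sum_mul]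
  simp only [hprod, gaussPi]
  rw [integral_fintype_prod_eq_prod
    (f := fun k (x : ℝ) => Complex.exp ((b k : ℂ) * (x : ℂ) * Complex.I))]
  simp only [← charFun_apply_real, charFun_gaussianReal]
  rw [← Complex.exp_sum]
  push_cast
  rw [Finset.mul_sum]
  congr 1
  exact Finset.sum_congr rfl fun k _ => by simp; ring

lemma integral_cos_add_linearForm (c : ℝ) (b : σ → ℝ) :
    ∫ y, Real.cos (c + ∑ k, b k * y k) ∂gaussPi σ =
      Real.cos c * Real.exp (-(1 / 2) * ∑ k, b k ^ 2) := by
  have hint : Integrable (fun y : σ → ℝ => Complex.exp ((c : ℂ) * Complex.I) *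
      Complex.exp ((∑ k, b k * y k : ℝ) * Complex.I)) (gaussPi σ) := by
    refine Integrable.of_bound (Measurable.aestronglyMeasurable (by fun_prop)) 1
      (ae_of_all _ fun y => ?_)
    rw [norm_mul, Complex.norm_exp_ofReal_mul_I, Complex.norm_exp_ofReal_mul_I, one_mul]
  have hre (y : σ → ℝ) : Real.cos (c + ∑ k, b k * y k) = RCLike.re
      (Complex.exp ((c : ℂ) * Complex.I) * Complex.exp ((∑ k, b k * y k : ℝ) * Complex.I)) := by
    rw [← Complex.exp_add, ← add_mul, ← Complex.ofReal_add]
    exact (Complex.exp_ofReal_mul_I_re _).symm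
  simp only [hre]
  rw [integral_re hint, integral_const_mul, integral_cexp_linearForm, RCLike.re_eq_complex_re,
    Complex.re_mul_ofReal, Complex.exp_ofReal_mul_I_re]

theorem integral_exp_neg_sum_sq_affine_le (x : α → ℝ) (A : α → σ → ℝ) :
    ∫ y, Real.exp (-(1 / 2) * ∑ a, (x a + ∑ k, A a k * y k) ^ 2) ∂gaussPi σ ≤
      ∫ ξ, Real.exp (-(1 / 2) * ∑ k, (∑ a, ξ a * A a k) ^ 2) ∂gaussPi α := by
  have hcos (y : σ → ℝ) : Real.exp (-(1 / 2) * ∑ a, (x a + ∑ k, A a k * y k) ^ 2) =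
      ∫ ξ, Real.cos (∑ a, ξ a * (x a + ∑ k, A a k * y k)) ∂gaussPi α := by
    have h := integral_cos_add_linearForm 0 fun a => x a + ∑ k, A a k * y k
    simp only [Real.cos_zero, one_mul, zero_add] at h
    simp only [← h, mul_comm]
  have hint : Integrable (Function.uncurry fun (y : σ → ℝ) (ξ : α → ℝ) =>
      Real.cos (∑ a, ξ a * (x a + ∑ k, A a k * y k))) ((gaussPi σ).prod (gaussPi α)) := by
    refine Integrable.of_bound (Measurable.aestronglyMeasurable ?_) 1
      (ae_of_all _ fun z => Real.abs_cos_le_one _)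
    unfold Function.uncurry
    fun_prop
  have hswap (ξ : α → ℝ) (y : σ → ℝ) : ∑ a, ξ a * (x a + ∑ k, A a k * y k) =
      ∑ a, ξ a * x a + ∑ k, (∑ a, ξ a * A a k) * y k := by
    simp only [mul_add, Finset.sum_add_distrib, Finset.mul_sum, Finset.sum_mul, mul_assoc]
    rw [Finset.sum_comm (γ := σ)]
  simp only [hcos]
  rw [integral_integral_swap hint]
  refine integral_mono hint.integral_prod_right (integrable_exp_of_nonpos (by fun_prop) fun ξ =>
    mul_nonpos_of_nonpos_of_nonneg (by norm_num) (by positivity)) fun ξ => ?_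
  simp only [hswap, integral_cos_add_linearForm]
  exact mul_le_of_le_one_left (Real.exp_pos _).le (Real.cos_le_one _)

/-- The function `u ↦ 𝔼 exp (-‖∑ i, u i • ∇ F i‖² / 2)` of a vector `F` of polynomials in Gaussian
variables; its decay at infinity controls the negative moments of the Malliavin determinant. -/
noncomputable def gradCharFun (F : α → MvPolynomial σ ℝ) (u : α → ℝ) : ℝ :=
  ∫ x, Real.exp (-(1 / 2) * ∑ k, (∑ i, u i * eval x (pderiv k (F i))) ^ 2) ∂gaussPi σ

lemma gradCharFun_le_one (F : α → MvPolynomial σ ℝ) (u : α → ℝ) : gradCharFun F u ≤ 1 :=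
  integral_exp_le_one fun _ => mul_nonpos_of_nonpos_of_nonneg (by norm_num) (by positivity)

lemma gradCharFun_nonneg (F : α → MvPolynomial σ ℝ) (u : α → ℝ) : 0 ≤ gradCharFun F u :=
  integral_nonneg fun _ => (Real.exp_pos _).le

lemma gradCharFun_sum_smul (Y : α × κ → MvPolynomial σ ℝ) (u : κ → ℝ) (v : α → ℝ) :
    gradCharFun (fun a => ∑ i, u i • Y (a, i)) v = gradCharFun Y fun b => v b.1 * u b.2 := by
  simp only [gradCharFun, map_sum, Derivation.map_smul, smul_eval, Fintype.sum_prod_type,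
    Finset.mul_sum, mul_assoc]

lemma integral_exp_neg_sum_sq_taylor_le (p : α → MvPolynomial σ ℝ) (x : α → ℝ) (t : ℝ) :
    ∫ z, Real.exp (-(1 / 2) * ∑ a, (x a + eval z.1 (p a) +
      ∑ k, t * eval z.1 (pderiv k (p a)) * z.2 k) ^ 2) ∂((gaussPi σ).prod (gaussPi σ)) ≤
      ∫ ξ, gradCharFun p (t • ξ) ∂gaussPi α := by
  have hnonpos {s : ℝ} (hs : 0 ≤ s) : -(1 / 2) * s ≤ 0 :=
    mul_nonpos_of_nonpos_of_nonneg (by norm_num) hs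
  have hint : Integrable (Function.uncurry fun (y : σ → ℝ) (ξ : α → ℝ) =>
      Real.exp (-(1 / 2) * ∑ k, (∑ a, ξ a * (t * eval y (pderiv k (p a)))) ^ 2))
      ((gaussPi σ).prod (gaussPi α)) :=
    integrable_exp_of_nonpos (by fun_prop) fun z => hnonpos (by positivity)
  have hint_taylor : Integrable (fun z : (σ → ℝ) × (σ → ℝ) => Real.exp (-(1 / 2) * ∑ a, (x a +
      eval z.1 (p a) + ∑ k, t * eval z.1 (pderiv k (p a)) * z.2 k) ^ 2))
      ((gaussPi σ).prod (gaussPi σ)) :=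
    integrable_exp_of_nonpos (by fun_prop) fun z => hnonpos (by positivity)
  calc _ = ∫ y, ∫ h, Real.exp (-(1 / 2) * ∑ a, (x a + eval y (p a) +
        ∑ k, t * eval y (pderiv k (p a)) * h k) ^ 2) ∂gaussPi σ ∂gaussPi σ :=
        integral_prod _ hint_taylor
    _ ≤ ∫ y, ∫ ξ, Real.exp (-(1 / 2) * ∑ k, (∑ a, ξ a * (t * eval y (pderiv k (p a)))) ^ 2)
        ∂gaussPi α ∂gaussPi σ :=
        integral_mono hint_taylor.integral_prod_left hint.integral_prod_left fun y =>
          integral_exp_neg_sum_sq_affine_le (fun a => x a + eval y (p a))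
            fun a k => t * eval y (pderiv k (p a))
    _ = ∫ ξ, gradCharFun p (t • ξ) ∂gaussPi α := by
        rw [integral_integral_swap hint]
        simp only [gradCharFun, Pi.smul_apply, smul_eq_mul, mul_left_comm, mul_assoc]

end GradientFourier

section SmallBall

lemma gaussianPDFReal_standard_le (x : ℝ) : gaussianPDFReal 0 1 x ≤ 1 / 2 := by
  have hsqrt : 2 ≤ √(2 * Real.pi) :=
    Real.le_sqrt_of_sq_le (by linarith [Real.pi_gt_three])
  have hexp : Real.exp (-x ^ 2 / 2) ≤ 1 :=
    Real.exp_le_one_iff.2 (by linarith [sq_nonneg x])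
  calc gaussianPDFReal 0 1 x = (√(2 * Real.pi))⁻¹ * Real.exp (-x ^ 2 / 2) := by
        simp [gaussianPDFReal]
    _ ≤ 2⁻¹ * 1 := by gcongr
    _ = 1 / 2 := by norm_num

lemma gaussianReal_Icc_le {η : ℝ} (hη : 0 ≤ η) :
    (gaussianReal 0 1).real (Set.Icc (-η) η) ≤ η := by
  refine ENNReal.toReal_le_of_le_ofReal hη ?_
  rw [gaussianReal_apply 0 one_ne_zero]
  calc ∫⁻ x in Set.Icc (-η) η, gaussianPDF 0 1 x
      ≤ ∫⁻ _ in Set.Icc (-η) η, ENNReal.ofReal (1 / 2) :=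
        lintegral_mono fun x => ENNReal.ofReal_le_ofReal (gaussianPDFReal_standard_le x)
    _ = ENNReal.ofReal η := by
        rw [setLIntegral_const, Real.volume_Icc, ← ENNReal.ofReal_mul (by norm_num)]
        congr 1
        ring

variable {α : Type} [Fintype α]

lemma gaussPi_cube_le {η : ℝ} (hη : 0 ≤ η) :
    (gaussPi α).real (Set.univ.pi fun _ => Set.Icc (-η) η) ≤ η ^ Fintype.card α := by
  rw [Measure.real, gaussPi, Measure.pi_pi, ENNReal.toReal_prod]
  simp only [Finset.prod_const, Finset.card_univ]
  exact pow_le_pow_left₀ ENNReal.toReal_nonneg (gaussianReal_Icc_le hη) _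

lemma integral_smul_le_of_decay {φ : (α → ℝ) → ℝ} {M : ℕ} {C t η : ℝ} (hφ_nonneg : ∀ v, 0 ≤ φ v)
    (hφ_le : ∀ v, φ v ≤ 1) (hφ : ∀ v, φ v * (∑ a, v a ^ 2) ^ M ≤ C) (ht : 0 < t) (hη : 0 < η) :
    ∫ ξ, φ (t • ξ) ∂gaussPi α ≤ η ^ Fintype.card α + C / (t ^ 2 * η ^ 2) ^ M := by
  set S : Set (α → ℝ) := Set.univ.pi fun _ => Set.Icc (-η) η
  have hS : MeasurableSet S := MeasurableSet.univ_pi fun _ => measurableSet_Icc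
  have hC : 0 ≤ C := (mul_nonneg (hφ_nonneg 0) (by positivity)).trans (hφ 0)
  have hint : Integrable (S.indicator fun _ => (1 : ℝ)) (gaussPi α) :=
    (integrable_const _).indicator hS
  have hle (ξ : α → ℝ) : φ (t • ξ) ≤ S.indicator (fun _ => 1) ξ + C / (t ^ 2 * η ^ 2) ^ M := by
    by_cases hξ : ξ ∈ S
    · rw [Set.indicator_of_mem hξ]
      exact (hφ_le _).trans (le_add_of_nonneg_right (by positivity))
    · rw [Set.indicator_of_notMem hξ, zero_add, le_div_iff₀ (by positivity)]
      refine (mul_le_mul_of_nonneg_left (pow_le_pow_left₀ (by positivity) ?_ _)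
        (hφ_nonneg _)).trans (hφ (t • ξ))
      obtain ⟨a, ha⟩ : ∃ a, η < |ξ a| := by
        by_contra! h
        exact hξ fun a _ => abs_le.1 (h a)
      calc t ^ 2 * η ^ 2 ≤ t ^ 2 * |ξ a| ^ 2 := by gcongr
        _ = (t • ξ) a ^ 2 := by rw [sq_abs, Pi.smul_apply, smul_eq_mul, mul_pow]
        _ ≤ ∑ a, (t • ξ) a ^ 2 :=
          Finset.single_le_sum (f := fun a => (t • ξ) a ^ 2) (fun _ _ => sq_nonneg _)
            (Finset.mem_univ a)
  calc ∫ ξ, φ (t • ξ) ∂gaussPi α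
      ≤ ∫ ξ, (S.indicator (fun _ => 1) ξ + C / (t ^ 2 * η ^ 2) ^ M) ∂gaussPi α :=
        integral_mono_of_nonneg (ae_of_all _ fun _ => hφ_nonneg _) (hint.add (integrable_const _))
          (ae_of_all _ hle)
    _ = (gaussPi α).real S + C / (t ^ 2 * η ^ 2) ^ M := by
        rw [integral_add hint (integrable_const _), integral_indicator_const _ hS]
        simp
    _ ≤ η ^ Fintype.card α + C / (t ^ 2 * η ^ 2) ^ M := by gcongr; exact gaussPi_cube_le hη.le

end SmallBall

section SmoothedDecay

variable {σ α κ : Type} [Fintype σ] [Fintype α] [Fintype κ]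

lemma exp_neg_sum_add_sq_le (f g : α → ℝ) {W : ℝ} (n : ℕ) (hW : ∑ a, g a ^ 2 ≤ W) :
    Real.exp (-∑ a, (f a + g a) ^ 2) ≤
      Real.exp 1 * Real.exp (-(1 / 2) * ∑ a, f a ^ 2) + W ^ n := by
  have hW_nonneg : 0 ≤ W := le_trans (by positivity) hW
  rcases le_total W 1 with hW_le | hW_ge
  · refine le_trans ?_ (le_add_of_nonneg_right (pow_nonneg hW_nonneg n))
    rw [← Real.exp_add, Real.exp_le_exp]
    have hsq : 1 / 2 * ∑ a, f a ^ 2 - ∑ a, g a ^ 2 ≤ ∑ a, (f a + g a) ^ 2 := by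
      rw [Finset.mul_sum, ← Finset.sum_sub_distrib]
      exact Finset.sum_le_sum fun a _ => by nlinarith [sq_nonneg (f a + 2 * g a)]
    linarith
  · have hexp : Real.exp (-∑ a, (f a + g a) ^ 2) ≤ 1 :=
      Real.exp_le_one_iff.2 (neg_nonpos.2 (by positivity))
    exact (hexp.trans (one_le_pow₀ hW_ge)).trans (le_add_of_nonneg_left (by positivity))

theorem integral_exp_neg_sum_sq_le (p : α → MvPolynomial σ ℝ) (x : α → ℝ) (t : ℝ) (n : ℕ) :
    ∫ y, Real.exp (-∑ a, (x a + eval y (p a)) ^ 2) ∂gaussPi σ ≤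
      Real.exp 1 * ∫ ξ, gradCharFun p (t • ξ) ∂gaussPi α +
        gaussMean ((∑ a, rotRemainder t (p a) ^ 2) ^ n) := by
  have hle (z : (σ → ℝ) × (σ → ℝ)) : Real.exp (-∑ a, (x a +
      eval (fun k => Real.cos t * z.1 k + Real.sin t * z.2 k) (p a)) ^ 2) ≤
      Real.exp 1 * Real.exp (-(1 / 2) * ∑ a, (x a + eval z.1 (p a) +
        ∑ k, t * eval z.1 (pderiv k (p a)) * z.2 k) ^ 2) +
        eval (Sum.elim z.1 z.2) ((∑ a, rotRemainder t (p a) ^ 2) ^ n) := by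
    have hsplit (a : α) : x a + eval (fun k => Real.cos t * z.1 k + Real.sin t * z.2 k) (p a) =
        x a + eval z.1 (p a) + ∑ k, t * eval z.1 (pderiv k (p a)) * z.2 k +
          eval (Sum.elim z.1 z.2) (rotRemainder t (p a)) := by
      rw [eval_rotation_eq, Finset.mul_sum]
      simp only [mul_assoc, add_assoc]
    simp only [hsplit, map_pow, map_sum]
    exact exp_neg_sum_add_sq_le _ _ n le_rfl
  have hint : Integrable (fun z : (σ → ℝ) × (σ → ℝ) => Real.exp 1 * Real.exp (-(1 / 2) * ∑ a,
      (x a + eval z.1 (p a) + ∑ k, t * eval z.1 (pderiv k (p a)) * z.2 k) ^ 2))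
      ((gaussPi σ).prod (gaussPi σ)) :=
    (integrable_exp_of_nonpos (by fun_prop) fun z =>
      mul_nonpos_of_nonpos_of_nonneg (by norm_num) (by positivity)).const_mul _
  rw [← (measurePreserving_rotation t).map_eq, integral_map
    (measurePreserving_rotation t).aemeasurable (Measurable.aestronglyMeasurable (by fun_prop))]
  refine (integral_mono_of_nonneg (ae_of_all _ fun _ => (Real.exp_pos _).le)
    (hint.add (integrable_eval_sumElim _)) (ae_of_all _ hle)).trans ?_
  refine (integral_add hint (integrable_eval_sumElim _)).trans_le ?_
  rw [integral_const_mul, ← gaussMean_eq_integral_prod]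
  gcongr
  exact integral_exp_neg_sum_sq_taylor_le p x t

lemma gaussMean_sum_smul_sq_le (u : κ → ℝ) (f : κ → MvPolynomial σ ℝ) :
    gaussMean ((∑ i, u i • f i) ^ 2) ≤ (∑ i, u i ^ 2) * ∑ i, gaussMean (f i ^ 2) := by
  rw [← map_sum, ← gaussMean_C_mul]
  refine gaussMean_mono fun x => ?_
  simpa [smul_eval] using Finset.sum_mul_sq_le_sq_mul_sq Finset.univ u fun i => eval x (f i)

lemma gradCharFun_sum_smul_decay {Y : α × κ → MvPolynomial σ ℝ} {M : ℕ} {C : ℝ}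
    (hY : ∀ w, gradCharFun Y w * (∑ b, w b ^ 2) ^ M ≤ C) {u : κ → ℝ} (hu : 0 < ∑ i, u i ^ 2)
    (v : α → ℝ) : gradCharFun (fun a => ∑ i, u i • Y (a, i)) v * (∑ a, v a ^ 2) ^ M ≤
      C / (∑ i, u i ^ 2) ^ M := by
  have hsum : ∑ b : α × κ, (v b.1 * u b.2) ^ 2 = (∑ a, v a ^ 2) * ∑ i, u i ^ 2 := by
    simp only [Fintype.sum_prod_type, mul_pow, Finset.sum_mul_sum]
  have h := hY fun b => v b.1 * u b.2
  rw [hsum, mul_pow, ← mul_assoc] at h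
  rwa [gradCharFun_sum_smul, le_div_iff₀ (pow_pos hu M)]

lemma exists_gaussMean_sum_rotRemainder_sq_pow_le (D k : ℕ) : ∃ c, 0 ≤ c ∧
    ∀ (σ α : Type) [Fintype σ] [Fintype α] (p : α → MvPolynomial σ ℝ) {t : ℝ},
      (∀ a, (p a).totalDegree ≤ D) → 0 ≤ t →
        gaussMean ((∑ a, rotRemainder t (p a) ^ 2) ^ 2 ^ k) ≤
          c * (t ^ 4 * ∑ a, gaussMean (p a ^ 2)) ^ 2 ^ k := by
  obtain ⟨c, hc_nonneg, hc⟩ := exists_gaussMean_sum_sq_pow_le (D + 1) k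
  refine ⟨c * (5 * D ^ 2) ^ 2 ^ k, by positivity, fun σ α _ _ p t hp ht => ?_⟩
  have hsum : gaussMean (∑ a, rotRemainder t (p a) ^ 2) ≤
      5 * D ^ 2 * (t ^ 4 * ∑ a, gaussMean (p a ^ 2)) := by
    rw [map_sum, Finset.mul_sum, Finset.mul_sum]
    exact Finset.sum_le_sum fun a _ =>
      (gaussMean_rotRemainder_sq_le (hp a) ht).trans_eq (by ring)
  have hsum_nonneg : 0 ≤ gaussMean (∑ a, rotRemainder t (p a) ^ 2) := by
    rw [map_sum]
    exact Finset.sum_nonneg fun a _ => gaussMean_sq_nonneg _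
  calc _ ≤ c * gaussMean (∑ a, rotRemainder t (p a) ^ 2) ^ 2 ^ k :=
        hc _ _ _ fun a => totalDegree_rotRemainder_le t (hp a)
    _ ≤ c * (5 * D ^ 2 * (t ^ 4 * ∑ a, gaussMean (p a ^ 2))) ^ 2 ^ k := by gcongr
    _ = _ := by rw [mul_pow _ (t ^ 4 * _), mul_assoc]

lemma mul_pow_le_of_le_add {M r n : ℕ} (hr : 16 * M ≤ r) (hn : 2 * M ≤ n) {ρ a C c K E : ℝ}
    (hρ : 1 ≤ ρ) (ha : 0 ≤ a) (hc : 0 ≤ c) (hK : 0 ≤ K)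
    (hE : E ≤ a * (ρ⁻¹ ^ r + C / (ρ ^ 2) ^ (8 * M)) + c * (ρ⁻¹ ^ 8 * K) ^ n) :
    E * (ρ ^ 16) ^ M ≤ a * (1 + C) + c * K ^ n := by
  have hρ_pos : 0 < ρ := one_pos.trans_le hρ
  have hfst : ρ⁻¹ ^ r * (ρ ^ 16) ^ M ≤ 1 := by
    rw [← pow_mul, inv_pow, inv_mul_le_iff₀ (by positivity), mul_one]
    exact pow_le_pow_right₀ hρ hr
  have hsnd : C / (ρ ^ 2) ^ (8 * M) * (ρ ^ 16) ^ M = C := by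
    rw [← pow_mul, ← pow_mul, ← mul_assoc 2 8 M]
    exact div_mul_cancel₀ C (pow_pos hρ_pos _).ne'
  have hthd : (ρ⁻¹ ^ 8 * K) ^ n * (ρ ^ 16) ^ M ≤ K ^ n := by
    rw [mul_pow, ← pow_mul, ← pow_mul, inv_pow, mul_assoc, inv_mul_le_iff₀ (by positivity),
      mul_comm]
    exact mul_le_mul_of_nonneg_right (pow_le_pow_right₀ hρ (by lia)) (by positivity)
  calc E * (ρ ^ 16) ^ M
      ≤ (a * (ρ⁻¹ ^ r + C / (ρ ^ 2) ^ (8 * M)) + c * (ρ⁻¹ ^ 8 * K) ^ n) * (ρ ^ 16) ^ M := by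
        gcongr
    _ = a * (ρ⁻¹ ^ r * (ρ ^ 16) ^ M + C / (ρ ^ 2) ^ (8 * M) * (ρ ^ 16) ^ M) +
        c * ((ρ⁻¹ ^ 8 * K) ^ n * (ρ ^ 16) ^ M) := by ring
    _ ≤ a * (1 + C) + c * K ^ n := by rw [hsnd]; gcongr

-- With `s = ρ ^ 16`, rotate by the angle `t = ρ⁻¹ ^ 6` and cut off the Gaussian average at
-- `η = ρ⁻¹`: the main term decays since `t ^ 2 * η ^ 2 * s = ρ ^ 2`, and the Taylor remainder since
-- `t ^ 4 * s = ρ⁻¹ ^ 8`.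
lemma exists_integral_exp_neg_sum_sq_mul_pow_le (D : ℕ) {M k : ℕ} (hα : 16 * M ≤ Fintype.card α)
    (hk : 2 * M ≤ 2 ^ k) : ∃ c, 0 ≤ c ∧ ∀ (σ : Type) [Fintype σ] (p : α → MvPolynomial σ ℝ)
      (x : α → ℝ) {s C K : ℝ}, (∀ a, (p a).totalDegree ≤ D) → 1 ≤ s → 0 ≤ K →
      ∑ a, gaussMean (p a ^ 2) ≤ s * K →
      (∀ v, gradCharFun p v * (∑ a, v a ^ 2) ^ (8 * M) ≤ C / s ^ (8 * M)) →
      (∫ y, Real.exp (-∑ a, (x a + eval y (p a)) ^ 2) ∂gaussPi σ) * s ^ M ≤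
        Real.exp 1 * (1 + C) + c * K ^ 2 ^ k := by
  obtain ⟨c, hc_nonneg, hc⟩ := exists_gaussMean_sum_rotRemainder_sq_pow_le D k
  refine ⟨c, hc_nonneg, fun σ _ p x s C K hpdeg hs hK hp_sq hp => ?_⟩
  obtain ⟨ρ, hρ_ge, rfl⟩ : ∃ ρ, 1 ≤ ρ ∧ s = ρ ^ 16 :=
    ⟨s ^ ((16 : ℕ) : ℝ)⁻¹, Real.one_le_rpow hs (by positivity),
      (Real.rpow_inv_natCast_pow (zero_le_one.trans hs) (by norm_num)).symm⟩
  have hρ_pos : 0 < ρ := one_pos.trans_le hρ_ge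
  have hmain : ∫ ξ, gradCharFun p ((ρ⁻¹ ^ 6) • ξ) ∂gaussPi α ≤
      ρ⁻¹ ^ Fintype.card α + C / (ρ ^ 2) ^ (8 * M) := by
    have hscale : (ρ ^ 16) * ((ρ⁻¹ ^ 6) ^ 2 * ρ⁻¹ ^ 2) = ρ ^ 2 := by field_simp
    have h := integral_smul_le_of_decay (gradCharFun_nonneg p) (gradCharFun_le_one p) hp
      (pow_pos (inv_pos.2 hρ_pos) 6) (inv_pos.2 hρ_pos)
    rwa [div_div, ← mul_pow (ρ ^ 16), hscale] at h
  have hrem : gaussMean ((∑ a, rotRemainder (ρ⁻¹ ^ 6) (p a) ^ 2) ^ 2 ^ k) ≤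
      c * (ρ⁻¹ ^ 8 * K) ^ 2 ^ k := by
    have hscale : ρ⁻¹ ^ 8 * K = (ρ⁻¹ ^ 6) ^ 4 * (ρ ^ 16 * K) := by field_simp
    have hsum_nonneg : 0 ≤ ∑ a, gaussMean (p a ^ 2) :=
      Finset.sum_nonneg fun a _ => gaussMean_sq_nonneg _
    refine (hc σ α p hpdeg (by positivity)).trans ?_
    rw [hscale]
    gcongr
  refine mul_pow_le_of_le_add hα hk hρ_ge (Real.exp_pos 1).le hc_nonneg hK
    ((integral_exp_neg_sum_sq_le p x (ρ⁻¹ ^ 6) (2 ^ k)).trans ?_)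
  gcongr

theorem exists_integral_exp_neg_sum_sq_linearComb_mul_pow_le (D : ℕ) {M k : ℕ} {B C : ℝ}
    (hB : 0 ≤ B) (hα : 16 * M ≤ Fintype.card α) (hk : 2 * M ≤ 2 ^ k) :
    ∃ C', ∀ (σ : Type) [Fintype σ] (Y : α × κ → MvPolynomial σ ℝ),
      (∀ b, (Y b).totalDegree ≤ D) → (∀ b, gaussMean (Y b ^ 2) ≤ B) →
      (∀ w, gradCharFun Y w * (∑ b, w b ^ 2) ^ (8 * M) ≤ C) → ∀ (x : α → ℝ) (u : κ → ℝ),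
      (∫ y, Real.exp (-∑ a, (x a + ∑ i, u i * eval y (Y (a, i))) ^ 2) ∂gaussPi σ) *
        (∑ i, u i ^ 2) ^ M ≤ C' := by
  obtain ⟨c, -, hc⟩ := exists_integral_exp_neg_sum_sq_mul_pow_le (α := α) D hα hk
  have hK : 0 ≤ Fintype.card (α × κ) * B := by positivity
  refine ⟨max 1 (Real.exp 1 * (1 + C) + c * (Fintype.card (α × κ) * B) ^ 2 ^ k),
    fun σ _ Y hYdeg hYB hY x u => ?_⟩
  have hu_nonneg : 0 ≤ ∑ i, u i ^ 2 := by positivity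
  rcases le_or_gt (∑ i, u i ^ 2) 1 with hu_le | hu_gt
  · exact (mul_le_one₀ (integral_exp_le_one fun _ => neg_nonpos.2 (by positivity))
      (by positivity) (pow_le_one₀ hu_nonneg hu_le)).trans (le_max_left _ _)
  have hdeg (a : α) : (∑ i, u i • Y (a, i)).totalDegree ≤ D := totalDegree_finsetSum_le fun i _ =>
    (totalDegree_smul_le _ _).trans (hYdeg (a, i))
  have hsq : ∑ a, gaussMean ((∑ i, u i • Y (a, i)) ^ 2) ≤
      (∑ i, u i ^ 2) * (Fintype.card (α × κ) * B) := by
    calc ∑ a, gaussMean ((∑ i, u i • Y (a, i)) ^ 2)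
        ≤ ∑ a, (∑ i, u i ^ 2) * ∑ i, gaussMean (Y (a, i) ^ 2) :=
          Finset.sum_le_sum fun a _ => gaussMean_sum_smul_sq_le _ _
      _ = (∑ i, u i ^ 2) * ∑ b, gaussMean (Y b ^ 2) := by
          rw [← Finset.mul_sum, Fintype.sum_prod_type]
      _ ≤ (∑ i, u i ^ 2) * (Fintype.card (α × κ) * B) := mul_le_mul_of_nonneg_left
          ((Finset.sum_le_card_nsmul _ _ B fun b _ => hYB b).trans_eq (nsmul_eq_mul _ _)) hu_nonneg
  refine le_trans ?_ (le_max_right _ _)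
  simpa only [map_sum, smul_eval] using hc σ (fun a => ∑ i, u i • Y (a, i)) x hdeg hu_gt.le hK hsq
    (gradCharFun_sum_smul_decay hY (one_pos.trans hu_gt))

end SmoothedDecay

section RandomDirections

variable {σ κ α : Type} [Fintype σ]

/-- The directional derivative `∑ k, g k • ∂_k`. -/
noncomputable def dirDeriv (g : σ → ℝ) : MvPolynomial σ ℝ →ₗ[ℝ] MvPolynomial σ ℝ :=
  ∑ k, g k • (pderiv k).toLinearMap

lemma dirDeriv_apply (g : σ → ℝ) (p : MvPolynomial σ ℝ) :
    dirDeriv g p = ∑ k, g k • pderiv k p := by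
  simp [dirDeriv]

lemma totalDegree_dirDeriv_le (g : σ → ℝ) {p : MvPolynomial σ ℝ} {m : ℕ}
    (hp : p.totalDegree ≤ m) : (dirDeriv g p).totalDegree ≤ m - 1 := by
  rw [dirDeriv_apply, ← mem_restrictTotalDegree]
  exact Submodule.sum_mem _ fun k _ => Submodule.smul_mem _ _
    ((mem_restrictTotalDegree _ _ _).2 (totalDegree_pderiv_le k hp))

lemma dirDeriv_mem_ouEigenspace (g : σ → ℝ) {a : ℝ} {p : MvPolynomial σ ℝ}
    (hp : p ∈ ouEigenspace a) : dirDeriv g p ∈ ouEigenspace (a - 1) := by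
  rw [dirDeriv_apply]
  exact Submodule.sum_mem _ fun k _ => Submodule.smul_mem _ _ (pderiv_mem_ouEigenspace hp k)

lemma carre_dirDeriv_dirDeriv (g h : σ → ℝ) (p q : MvPolynomial σ ℝ) :
    carre (dirDeriv g p) (dirDeriv h q) =
      ∑ k, ∑ l, (g k * h l) • carre (pderiv k p) (pderiv l q) := by
  simp only [dirDeriv_apply, map_sum, map_smul, LinearMap.sum_apply, LinearMap.smul_apply,
    Finset.smul_sum, mul_smul]
  rw [Finset.sum_comm]
  exact Finset.sum_congr rfl fun k _ => Finset.sum_congr rfl fun l _ => smul_comm _ _ _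

/-- The derivatives of the members of a family `F` in the directions given by the rows of `G`;
`G` is used as a Gaussian matrix. -/
noncomputable def dirDerivFamily (G : α × σ → ℝ) (F : κ → MvPolynomial σ ℝ) (b : α × κ) :
    MvPolynomial σ ℝ :=
  dirDeriv (fun k => G (b.1, k)) (F b.2)

lemma dirDerivFamily_sub (G : α × σ → ℝ) (F Q : κ → MvPolynomial σ ℝ) (b : α × κ) :
    dirDerivFamily G F b - dirDerivFamily G Q b = dirDerivFamily G (F - Q) b :=
  (map_sub _ _ _).symm

lemma eval_dirDerivFamily_sq (G : α × σ → ℝ) (F : κ → MvPolynomial σ ℝ) (b : α × κ) (x : σ → ℝ) :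
    eval x (dirDerivFamily G F b ^ 2) = eval (Sum.elim G x)
      ((∑ k, X (Sum.inl (b.1, k)) * rename Sum.inr (pderiv k (F b.2))) ^ 2) := by
  simp [dirDerivFamily, dirDeriv_apply, eval_rename]

lemma eval_carre_dirDerivFamily_sub_sq (G : α × σ → ℝ) (Q : κ → MvPolynomial σ ℝ) (b b' : α × κ)
    (t : ℝ) (x : σ → ℝ) :
    eval x ((carre (dirDerivFamily G Q b) (dirDerivFamily G Q b') - C t) ^ 2) =
      eval (Sum.elim G x) ((∑ k, ∑ l, X (Sum.inl (b.1, k)) * X (Sum.inl (b'.1, l)) *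
        rename Sum.inr (carre (pderiv k (Q b.2)) (pderiv l (Q b'.2))) - C t) ^ 2) := by
  simp [dirDerivFamily, carre_dirDeriv_dirDeriv, eval_rename]

section Parameters

variable [Fintype κ] {h : (κ → ℝ) → MvPolynomial σ ℝ} {P : MvPolynomial (κ ⊕ σ) ℝ}

lemma integrable_gaussMean_of_eval_eq (hP : ∀ g x, eval x (h g) = eval (Sum.elim g x) P) :
    Integrable (fun g => gaussMean (h g)) (gaussPi κ) := by
  simp only [gaussMean_apply, hP]
  exact (integrable_eval_sumElim P).integral_prod_left

lemma integral_gaussMean_le_of_eval_eq (hP : ∀ g x, eval x (h g) = eval (Sum.elim g x) P)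
    {q : MvPolynomial σ ℝ} (hq : ∀ x, ∫ g, eval x (h g) ∂gaussPi κ ≤ eval x q) :
    ∫ g, gaussMean (h g) ∂gaussPi κ ≤ gaussMean q := by
  simp only [gaussMean_apply, hP] at hq ⊢
  have hint := integrable_eval_sumElim P
  rw [integral_integral_swap (f := fun g x => eval (Sum.elim g x) P) hint]
  exact integral_mono hint.integral_prod_right (integrable_eval_gaussPi q) hq

end Parameters

variable [Fintype α]

lemma integrable_gaussMean_dirDerivFamily_sq (F : κ → MvPolynomial σ ℝ) (b : α × κ) :
    Integrable (fun G => gaussMean (dirDerivFamily G F b ^ 2)) (gaussPi (α × σ)) :=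
  integrable_gaussMean_of_eval_eq fun G x => eval_dirDerivFamily_sq G F b x

lemma gaussMean_row_sq (a : α) (v : σ → ℝ) :
    gaussMean ((∑ k, v k • X (a, k) : MvPolynomial (α × σ) ℝ) ^ 2) = ∑ k, v k ^ 2 := by
  classical
  have h := gaussMean_linearForm_sq fun c : α × σ => if c.1 = a then v c.2 else 0
  simpa [Fintype.sum_prod_type, ite_smul, ite_pow, Finset.sum_ite_irrel] using h

lemma integral_gaussMean_dirDerivFamily_sq_le (F : κ → MvPolynomial σ ℝ) (b : α × κ) :
    ∫ G, gaussMean (dirDerivFamily G F b ^ 2) ∂gaussPi (α × σ) ≤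
      gaussMean (carre (F b.2) (F b.2)) := by
  refine integral_gaussMean_le_of_eval_eq (fun G x => eval_dirDerivFamily_sq G F b x)
    fun x => le_of_eq ?_
  have h := gaussMean_row_sq b.1 fun k => eval x (pderiv k (F b.2))
  rw [gaussMean_apply] at h
  simpa [dirDerivFamily, dirDeriv_apply, eval_carre, mul_comm, ← sq] using h

lemma integrable_gaussMean_carre_dirDerivFamily_sub_sq (Q : κ → MvPolynomial σ ℝ) (b b' : α × κ)
    (t : ℝ) : Integrable (fun G => gaussMean
      ((carre (dirDerivFamily G Q b) (dirDerivFamily G Q b') - C t) ^ 2)) (gaussPi (α × σ)) :=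
  integrable_gaussMean_of_eval_eq fun G x => eval_carre_dirDerivFamily_sub_sq G Q b b' t x

lemma gaussMean_rows_sub_sq_le [DecidableEq α] (a a' : α) (A : σ → σ → ℝ) (t : ℝ) :
    gaussMean ((∑ k, ∑ l, A k l • (X (a, k) * X (a', l)) - C t : MvPolynomial (α × σ) ℝ) ^ 2) ≤
      4 * ∑ k, ∑ l, A k l ^ 2 + ((if a = a' then ∑ k, A k k else 0) - t) ^ 2 := by
  have h := gaussMean_quadraticForm_sub_sq_le
    (fun c d : α × σ => if c.1 = a then if d.1 = a' then A c.2 d.2 else 0 else 0) t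
  simpa [Fintype.sum_prod_type, ite_smul, ite_pow, Finset.sum_ite_irrel] using h

lemma integral_gaussMean_carre_dirDerivFamily_sub_sq_le [DecidableEq α]
    (Q : κ → MvPolynomial σ ℝ) (b b' : α × κ) (t : ℝ) :
    ∫ G, gaussMean ((carre (dirDerivFamily G Q b) (dirDerivFamily G Q b') - C t) ^ 2)
        ∂gaussPi (α × σ) ≤
      4 * ∑ k, ∑ l, gaussMean (carre (pderiv k (Q b.2)) (pderiv l (Q b'.2)) ^ 2) +
      gaussMean (((if b.1 = b'.1 then ∑ k, carre (pderiv k (Q b.2)) (pderiv k (Q b'.2)) else 0)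
        - C t) ^ 2) := by
  refine (integral_gaussMean_le_of_eval_eq
    (fun G x => eval_carre_dirDerivFamily_sub_sq G Q b b' t x)
    (q := (4 : ℝ) • ∑ k, ∑ l, carre (pderiv k (Q b.2)) (pderiv l (Q b'.2)) ^ 2 +
      ((if b.1 = b'.1 then ∑ k, carre (pderiv k (Q b.2)) (pderiv k (Q b'.2)) else 0)
        - C t) ^ 2) fun x => ?_).trans_eq ?_
  · have h := gaussMean_rows_sub_sq_le b.1 b'.1
      (fun k l => eval x (carre (pderiv k (Q b.2)) (pderiv l (Q b'.2)))) t
    rw [gaussMean_apply] at h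
    simpa [dirDerivFamily, carre_dirDeriv_dirDeriv, mul_comm, apply_ite (eval x)] using h
  · simp only [map_add, map_smul, map_sum, smul_eq_mul]

end RandomDirections

section NearConstCarre

/-- The inductive hypothesis of the proof: `F i` has degree at most `m i` and second moment at most
`B`, `Q i` is its component in the `m i`-th chaos, and the carré du champ matrix of `Q` is within
`τ` of the constant matrix `c` in squared `L²` norm. -/
structure HasNearConstCarre {σ κ : Type} [Fintype σ] (m : κ → ℕ) (c : κ → κ → ℝ) (B τ : ℝ)
    (F Q : κ → MvPolynomial σ ℝ) : Prop where
  mem_ouEigenspace : ∀ i, Q i ∈ ouEigenspace (m i : ℝ)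
  totalDegree_le : ∀ i, (F i).totalDegree ≤ m i
  totalDegree_sub_le : ∀ i, (F i - Q i).totalDegree ≤ m i - 1
  gaussMean_sq_le : ∀ i, gaussMean (F i ^ 2) ≤ B
  gaussMean_carre_sub_sq_le : ∀ i j, gaussMean ((carre (Q i) (Q j) - C (c i j)) ^ 2) ≤ τ

/-- The constant matrix which the carré du champ matrix of `dirDerivFamily G Q` approximates for
typical `G`, when that of `Q` approximates `c`. -/
noncomputable def derivCov {α κ : Type} [DecidableEq α] (m : κ → ℕ) (c : κ → κ → ℝ)
    (b b' : α × κ) : ℝ :=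
  if b.1 = b'.1 then (m b.2 + m b'.2 - 2) / 2 * c b.2 b'.2 else 0

lemma exists_measurableSet_forall_le_two_mul {Ω : Type*} [MeasurableSpace Ω] {μ : Measure Ω}
    [IsProbabilityMeasure μ] {f : Ω → ℝ} (hf : 0 ≤ f) (hf_int : Integrable f μ) {A : ℝ}
    (hA : 0 < A) (hfA : ∫ x, f x ∂μ ≤ A) :
    ∃ S, MeasurableSet S ∧ 1 / 2 ≤ μ.real S ∧ ∀ x ∈ S, f x ≤ 2 * A := by
  have hnull : NullMeasurableSet {x | f x ≤ 2 * A} μ :=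
    nullMeasurableSet_le hf_int.aemeasurable aemeasurable_const
  obtain ⟨S, hS_sub, hS, hS_ae⟩ := hnull.exists_measurable_subset_ae_eq
  refine ⟨S, hS, ?_, hS_sub⟩
  have hmarkov := mul_meas_ge_le_integral_of_nonneg (ae_of_all _ hf) hf_int (2 * A)
  have hcompl : {x | f x ≤ 2 * A}ᶜ ⊆ {x | 2 * A ≤ f x} :=
    fun x (hx : ¬ f x ≤ 2 * A) => (not_le.1 hx).le
  have hle := measureReal_mono hcompl (measure_ne_top μ _)
  rw [probReal_compl_eq_one_sub₀ hnull, ← measureReal_congr hS_ae] at hle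
  nlinarith

lemma exists_measurableSet_forall_le_card_mul {Ω ι : Type*} [MeasurableSpace Ω] {μ : Measure Ω}
    [IsProbabilityMeasure μ] [Fintype ι] {f : ι → Ω → ℝ} (hf : ∀ i, 0 ≤ f i)
    (hf_int : ∀ i, Integrable (f i) μ) {A : ι → ℝ} (hA : ∀ i, 0 < A i)
    (hfA : ∀ i, ∫ x, f i x ∂μ ≤ A i) :
    ∃ S, MeasurableSet S ∧ 1 / 2 ≤ μ.real S ∧ ∀ x ∈ S, ∀ i, f i x ≤ 2 * Fintype.card ι * A i := by
  cases isEmpty_or_nonempty ι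
  · exact ⟨Set.univ, MeasurableSet.univ, by norm_num, fun _ _ i => isEmptyElim i⟩
  have hcard : (0 : ℝ) < Fintype.card ι := Nat.cast_pos.2 Fintype.card_pos
  have hquot_nonneg (i x) : 0 ≤ f i x / A i := div_nonneg (hf i x) (hA i).le
  have hsum : ∫ x, ∑ i, f i x / A i ∂μ ≤ Fintype.card ι := by
    rw [integral_finsetSum _ fun i _ => (hf_int i).div_const _]
    refine (Finset.sum_le_card_nsmul _ _ 1 fun i _ => ?_).trans_eq (by simp)
    rw [integral_div]
    exact (div_le_one (hA i)).2 (hfA i)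
  obtain ⟨S, hS, hS_half, hS_le⟩ := exists_measurableSet_forall_le_two_mul
    (fun x => Finset.sum_nonneg fun i _ => hquot_nonneg i x)
    (integrable_finsetSum _ fun i _ => (hf_int i).div_const _) hcard hsum
  refine ⟨S, hS, hS_half, fun x hx i => (div_le_iff₀ (hA i)).1 ?_⟩
  exact (Finset.single_le_sum (fun i _ => hquot_nonneg i x) (Finset.mem_univ i)).trans (hS_le x hx)

namespace HasNearConstCarre

variable {σ κ α : Type} [Fintype σ] {m : κ → ℕ} {c : κ → κ → ℝ} {B τ : ℝ}
  {F Q : κ → MvPolynomial σ ℝ}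

lemma nonneg (H : HasNearConstCarre m c B τ F Q) (i : κ) : 0 ≤ τ :=
  (gaussMean_sq_nonneg _).trans (H.gaussMean_carre_sub_sq_le i i)

lemma map_dirDerivFamily [DecidableEq α] {B' τ' : ℝ} (hm : ∀ i, 1 ≤ m i)
    (H : HasNearConstCarre m c B τ F Q) {G : α × σ → ℝ}
    (hF : ∀ b : α × κ, gaussMean (dirDerivFamily G F b ^ 2) ≤ B')
    (hQ : ∀ b b' : α × κ, gaussMean
      ((carre (dirDerivFamily G Q b) (dirDerivFamily G Q b') - C (derivCov m c b b')) ^ 2) ≤ τ') :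
    HasNearConstCarre (fun b : α × κ => m b.2 - 1) (derivCov m c) B' τ'
      (dirDerivFamily G F) (dirDerivFamily G Q) where
  mem_ouEigenspace b := by
    rw [Nat.cast_sub (hm _), Nat.cast_one]
    exact dirDeriv_mem_ouEigenspace _ (H.mem_ouEigenspace _)
  totalDegree_le b := totalDegree_dirDeriv_le _ (H.totalDegree_le _)
  totalDegree_sub_le b := by
    rw [dirDerivFamily_sub]
    exact totalDegree_dirDeriv_le _ (H.totalDegree_sub_le _)
  gaussMean_sq_le := hF
  gaussMean_carre_sub_sq_le := hQ

variable [Fintype α]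

lemma integral_dirDerivFamily_sq_le (H : HasNearConstCarre m c B τ F Q) (b : α × κ) :
    ∫ G, gaussMean (dirDerivFamily G F b ^ 2) ∂gaussPi (α × σ) ≤ m b.2 * B :=
  (integral_gaussMean_dirDerivFamily_sq_le F b).trans <|
    (gaussMean_carre_self_le (H.totalDegree_le _)).trans <|
      mul_le_mul_of_nonneg_left (H.gaussMean_sq_le _) (Nat.cast_nonneg _)

variable [DecidableEq α]

lemma integral_carre_dirDerivFamily_sub_sq_le (hm : ∀ i, 1 ≤ m i)
    (H : HasNearConstCarre m c B τ F Q) (b b' : α × κ) :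
    ∫ G, gaussMean ((carre (dirDerivFamily G Q b) (dirDerivFamily G Q b')
        - C (derivCov m c b b')) ^ 2) ∂gaussPi (α × σ) ≤ 5 * (m b.2 + m b'.2) ^ 2 * τ := by
  have hHS := sum_gaussMean_carre_pderiv_sq_le (hm b.2) (hm b'.2) (H.mem_ouEigenspace _)
    (H.mem_ouEigenspace _) (H.gaussMean_carre_sub_sq_le _ _) (H.gaussMean_carre_sub_sq_le _ _)
  have htrace := gaussMean_sum_carre_pderiv_sub_sq_le (hm b.2) (hm b'.2) (H.mem_ouEigenspace _)
    (H.mem_ouEigenspace _) (c b.2 b'.2)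
  refine (integral_gaussMean_carre_dirDerivFamily_sub_sq_le Q b b' _).trans ?_
  have hsq : (0 : ℝ) ≤ (m b.2 + m b'.2) ^ 2 := sq_nonneg _
  rw [derivCov]
  split_ifs
  · have := mul_le_mul_of_nonneg_left (H.gaussMean_carre_sub_sq_le b.2 b'.2) hsq
    linarith
  · have := mul_nonneg hsq (H.nonneg b.2)
    simp only [map_zero, sub_zero, ne_eq, OfNat.ofNat_ne_zero, not_false_eq_true, zero_pow]
    linarith

lemma exists_measurableSet_dirDerivFamily [Fintype κ] (hm : ∀ i, 1 ≤ m i)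
    (H : HasNearConstCarre m c B τ F Q) {A T N : ℝ} (hA : 0 < A) (hT : 0 < T)
    (hN : 2 * Fintype.card (α × κ ⊕ (α × κ) × (α × κ)) ≤ N)
    (hF : ∀ b : α × κ, ∫ G, gaussMean (dirDerivFamily G F b ^ 2) ∂gaussPi (α × σ) ≤ A)
    (hQ : ∀ b b' : α × κ, ∫ G, gaussMean ((carre (dirDerivFamily G Q b) (dirDerivFamily G Q b')
      - C (derivCov m c b b')) ^ 2) ∂gaussPi (α × σ) ≤ T) :
    ∃ S, MeasurableSet S ∧ 1 / 2 ≤ (gaussPi (α × σ)).real S ∧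
      ∀ G ∈ S, HasNearConstCarre (fun b : α × κ => m b.2 - 1) (derivCov m c) (N * A) (N * T)
        (dirDerivFamily G F) (dirDerivFamily G Q) := by
  obtain ⟨S, hS, hS_half, hS_le⟩ := exists_measurableSet_forall_le_card_mul
    (μ := gaussPi (α × σ)) (ι := α × κ ⊕ (α × κ) × (α × κ))
    (f := Sum.elim (fun b G => gaussMean (dirDerivFamily G F b ^ 2)) fun b G => gaussMean
      ((carre (dirDerivFamily G Q b.1) (dirDerivFamily G Q b.2) - C (derivCov m c b.1 b.2)) ^ 2))
    (A := Sum.elim (fun _ => A) fun _ => T)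
    (by rintro (b | b) G <;> exact gaussMean_sq_nonneg _)
    (Sum.forall.2 ⟨integrable_gaussMean_dirDerivFamily_sq F,
      fun b => integrable_gaussMean_carre_dirDerivFamily_sub_sq Q b.1 b.2 _⟩)
    (Sum.forall.2 ⟨fun _ => hA, fun _ => hT⟩) (Sum.forall.2 ⟨hF, fun b => hQ b.1 b.2⟩)
  refine ⟨S, hS, hS_half, fun G hG => H.map_dirDerivFamily hm (fun b => ?_) fun b b' => ?_⟩
  · exact (hS_le G hG (Sum.inl b)).trans (mul_le_mul_of_nonneg_right hN hA.le)
  · exact (hS_le G hG (Sum.inr (b, b'))).trans (mul_le_mul_of_nonneg_right hN hT.le)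

lemma exists_dirDerivFamily [Finite κ] (hm : ∀ i, 1 ≤ m i) (hB : 0 ≤ B) :
    ∃ B' > 0, ∀ τ' > 0, ∃ τ > 0, ∀ (σ : Type) [Fintype σ] (F Q : κ → MvPolynomial σ ℝ),
      HasNearConstCarre m c B τ F Q →
        ∃ S, MeasurableSet S ∧ 1 / 2 ≤ (gaussPi (α × σ)).real S ∧
          ∀ G ∈ S, HasNearConstCarre (fun b : α × κ => m b.2 - 1) (derivCov m c) B' τ'
            (dirDerivFamily G F) (dirDerivFamily G Q) := by
  cases nonempty_fintype κ
  set s : ℝ := ∑ i, (m i : ℝ)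
  have hm_le (i) : (m i : ℝ) ≤ s :=
    Finset.single_le_sum (f := fun i => (m i : ℝ)) (fun _ _ => Nat.cast_nonneg _)
      (Finset.mem_univ i)
  have hs : 0 ≤ s := by positivity
  set N : ℝ := 2 * Fintype.card (α × κ ⊕ (α × κ) × (α × κ)) + 1
  have hN : 0 < N := by positivity
  have hL : 0 < s * B + 1 := add_pos_of_nonneg_of_pos (mul_nonneg hs hB) one_pos
  refine ⟨N * (s * B + 1), by positivity, fun τ' hτ' => ?_⟩
  set τ := τ' / (N * (20 * s ^ 2 + 1))
  have hτ : 0 < τ := by positivity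
  have hτ_eq : (20 * s ^ 2 + 1) * τ = τ' / N := by simp only [τ]; field_simp
  refine ⟨τ, hτ, fun σ _ F Q H => ?_⟩
  rw [← mul_div_cancel₀ τ' hN.ne']
  refine H.exists_measurableSet_dirDerivFamily hm hL (div_pos hτ' hN)
    (le_add_of_nonneg_right zero_le_one) (fun b => ?_) fun b b' => ?_
  · linarith [H.integral_dirDerivFamily_sq_le b, mul_le_mul_of_nonneg_right (hm_le b.2) hB]
  · refine (H.integral_carre_dirDerivFamily_sub_sq_le hm b b').trans ?_
    rw [← hτ_eq]
    refine mul_le_mul_of_nonneg_right ?_ hτ.le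
    have hle : (m b.2 : ℝ) + m b'.2 ≤ 2 * s := by linarith [hm_le b.2, hm_le b'.2]
    have := pow_le_pow_left₀ (by positivity) hle 2
    linarith

end HasNearConstCarre

section Averaging

variable {σ κ α : Type} [Fintype σ] [Fintype κ]

lemma exp_neg_two_mul_integral_le {Ω : Type*} [MeasurableSpace Ω] {μ : Measure Ω}
    [IsProbabilityMeasure μ] {f : Ω → ℝ} (hf : 0 ≤ f) (hf_int : Integrable f μ) {S : Set Ω}
    (hS : 1 / 2 ≤ μ.real S) :
    Real.exp (-(2 * ∫ x, f x ∂μ)) ≤ 2 * ∫ x in S, Real.exp (-f x) ∂μ := by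
  set M := ∫ x, f x ∂μ
  have hM : 0 ≤ M := integral_nonneg hf
  have htangent (x) : Real.exp (-(2 * M)) * (1 + 2 * M - f x) ≤ Real.exp (-f x) := by
    calc Real.exp (-(2 * M)) * (1 + 2 * M - f x)
        ≤ Real.exp (-(2 * M)) * Real.exp (2 * M - f x) := by
          gcongr; linarith [Real.add_one_le_exp (2 * M - f x)]
      _ = Real.exp (-f x) := by rw [← Real.exp_add]; ring_nf
  have hint : Integrable (fun x => Real.exp (-f x)) (μ.restrict S) :=
    Integrable.of_bound (Real.continuous_exp.comp_aestronglyMeasurable hf_int.1.restrict.neg) 1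
      (ae_of_all _ fun x => by simpa using hf x)
  have hle : Real.exp (-(2 * M)) * ∫ x in S, (1 + 2 * M - f x) ∂μ ≤
      ∫ x in S, Real.exp (-f x) ∂μ := by
    rw [← integral_const_mul]
    exact integral_mono (((integrable_const _).sub hf_int.integrableOn).const_mul _) hint htangent
  rw [integral_sub (integrable_const _) hf_int.integrableOn, setIntegral_const, smul_eq_mul] at hle
  have hfS : ∫ x in S, f x ∂μ ≤ M := setIntegral_le_integral hf_int (ae_of_all _ hf)
  have hhalf : 1 / 2 ≤ μ.real S * (1 + 2 * M) - ∫ x in S, f x ∂μ := by nlinarith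
  linarith [mul_le_mul_of_nonneg_left hhalf (Real.exp_nonneg (-(2 * M)))]

lemma integral_exp_neg_two_mul_integral_le {Ω Ω' : Type*} [MeasurableSpace Ω] [MeasurableSpace Ω']
    {μ : Measure Ω} {ν : Measure Ω'} [IsProbabilityMeasure μ] [IsProbabilityMeasure ν]
    {f : Ω → Ω' → ℝ} (hf : ∀ x y, 0 ≤ f x y) (hf_meas : Measurable (Function.uncurry f))
    (hf_int : ∀ x, Integrable (f x) ν) {S : Set Ω'} (hS : MeasurableSet S)
    (hS_half : 1 / 2 ≤ ν.real S) {E : ℝ} (hE : ∀ y ∈ S, ∫ x, Real.exp (-f x y) ∂μ ≤ E) :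
    ∫ x, Real.exp (-(2 * ∫ y, f x y ∂ν)) ∂μ ≤ 2 * E := by
  have hint : Integrable (Function.uncurry fun x y => Real.exp (-f x y)) (μ.prod (ν.restrict S)) :=
    integrable_exp_of_nonpos hf_meas.neg fun z => neg_nonpos.2 (hf _ _)
  obtain ⟨y, hy⟩ : S.Nonempty := by
    refine nonempty_of_measure_ne_zero (μ := ν) fun h => ?_
    rw [measureReal_def, h, ENNReal.toReal_zero] at hS_half
    norm_num at hS_half
  have hE_nonneg : 0 ≤ E := (integral_nonneg fun _ => (Real.exp_nonneg _)).trans (hE y hy)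
  calc ∫ x, Real.exp (-(2 * ∫ y, f x y ∂ν)) ∂μ
      ≤ ∫ x, 2 * ∫ y in S, Real.exp (-f x y) ∂ν ∂μ :=
        integral_mono_of_nonneg (ae_of_all _ fun _ => (Real.exp_nonneg _))
          (hint.integral_prod_left.const_mul 2)
          (ae_of_all _ fun x => exp_neg_two_mul_integral_le (hf x) (hf_int x) hS_half)
    _ = 2 * ∫ y in S, ∫ x, Real.exp (-f x y) ∂μ ∂ν := by
        rw [integral_const_mul, integral_integral_swap hint]
    _ ≤ 2 * ∫ _ in S, E ∂ν := by
        gcongr 2 * ?_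
        exact setIntegral_mono_on hint.integral_prod_right (integrable_const _) hS hE
    _ ≤ 2 * E := by
        rw [setIntegral_const, smul_eq_mul]
        nlinarith [measureReal_le_one (μ := ν) (s := S)]

lemma eval_sum_smul_dirDerivFamily (G : α × σ → ℝ) (F : κ → MvPolynomial σ ℝ) (u : κ → ℝ) (a : α)
    (x : σ → ℝ) : ∑ i, u i * eval x (dirDerivFamily G F (a, i)) =
      eval G (∑ k, (∑ i, u i * eval x (pderiv k (F i))) • X (a, k)) := by
  simp only [dirDerivFamily, dirDeriv_apply, map_sum, smul_eval, eval_X, Finset.mul_sum,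
    Finset.sum_mul]
  rw [Finset.sum_comm]
  exact Finset.sum_congr rfl fun k _ => Finset.sum_congr rfl fun i _ => by ring

variable [Fintype α]

lemma gradCharFun_le_of_forall_mem {S : Set (α × σ → ℝ)} (hS : MeasurableSet S)
    (hS_half : 1 / 2 ≤ (gaussPi (α × σ)).real S) (F : κ → MvPolynomial σ ℝ) (u : κ → ℝ) {E : ℝ}
    (hE : ∀ G ∈ S, ∫ x, Real.exp (-∑ a : α, (∑ i, u i * eval x (dirDerivFamily G F (a, i))) ^ 2)
      ∂gaussPi σ ≤ E) :
    gradCharFun F (fun i => 2 * √(Fintype.card α) * u i) ≤ 2 * E := by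
  have hf_eval (x : σ → ℝ) (G : α × σ → ℝ) :
      ∑ a : α, (∑ i, u i * eval x (dirDerivFamily G F (a, i))) ^ 2 = eval G
        (∑ a : α, (∑ k, (∑ i, u i * eval x (pderiv k (F i))) • X (a, k)) ^ 2) := by
    simp only [eval_sum_smul_dirDerivFamily, map_sum, map_pow]
  have hf_mean (x : σ → ℝ) : ∫ G, ∑ a : α, (∑ i, u i * eval x (dirDerivFamily G F (a, i))) ^ 2
      ∂gaussPi (α × σ) = Fintype.card α * ∑ k, (∑ i, u i * eval x (pderiv k (F i))) ^ 2 := by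
    simp_rw [hf_eval]
    rw [← gaussMean_apply, map_sum]
    simp only [gaussMean_row_sq, Finset.sum_const, Finset.card_univ, nsmul_eq_mul]
  refine le_of_eq_of_le (integral_congr_ae (ae_of_all _ fun x => ?_))
    (integral_exp_neg_two_mul_integral_le (fun _ _ => by positivity) ?_ (fun x => ?_)
      hS hS_half hE)
  · simp only [hf_mean, mul_assoc, ← Finset.mul_sum]
    simp only [mul_pow, ← Finset.mul_sum, Real.sq_sqrt (Nat.cast_nonneg (Fintype.card α))]
    ring_nf
  · simp only [Function.uncurry_def, dirDerivFamily, dirDeriv_apply, map_sum, smul_eval]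
    fun_prop
  · simp only [hf_eval]
    exact integrable_eval_gaussPi _

end Averaging

end NearConstCarre

section DegreeOne

lemma exp_neg_mul_mul_pow_le (M : ℕ) {a s : ℝ} (ha : 0 < a) (hs : 0 ≤ s) :
    Real.exp (-(a * s)) * s ^ M ≤ M.factorial / a ^ M := by
  have hexp := Real.pow_div_factorial_le_exp (a * s) (by positivity) M
  rw [div_le_iff₀ (by positivity), mul_pow] at hexp
  rw [Real.exp_neg, inv_mul_le_iff₀ (Real.exp_pos _), mul_div_assoc', le_div_iff₀ (by positivity)]
  linarith

lemma div_pow_mul_pow_le_one {M p : ℕ} (hp : 2 * M ≤ p) {s₁ s₂ : ℝ} (h₁ : 1 < s₁) (h₂ : 0 ≤ s₂)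
    (h : s₂ ^ 2 ≤ s₁) : (s₂ / s₁) ^ p * s₁ ^ M ≤ 1 := by
  have hs₁ : 0 < s₁ := by linarith
  have hle : s₂ / s₁ ≤ 1 := (div_le_one hs₁).2 (by nlinarith)
  calc (s₂ / s₁) ^ p * s₁ ^ M ≤ (s₂ / s₁) ^ (2 * M) * s₁ ^ M :=
        mul_le_mul_of_nonneg_right (pow_le_pow_of_le_one (by positivity) hle hp) (by positivity)
    _ = (s₂ ^ 2 / s₁) ^ M := by
        rw [pow_mul, ← mul_pow]
        congr 1
        field_simp
    _ ≤ 1 := pow_le_one₀ (by positivity) ((div_le_one hs₁).2 h)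

lemma mul_add_pow_le {M p : ℕ} (hp : 2 * M ≤ p) {f s₁ s₂ C₁ C₂ a : ℝ} (hf₀ : 0 ≤ f) (hf₁ : f ≤ 1)
    (h₁ : 0 ≤ s₁) (h₂ : 0 ≤ s₂) (ha : 0 < a) (hC₁ : 0 ≤ C₁) (hC₂ : 0 ≤ C₂)
    (hdecay₂ : f * s₂ ^ (2 * M) ≤ C₁)
    (hdecay₁ : 0 < s₁ → f ≤ Real.exp (-(a * s₁)) + C₂ * (s₂ / s₁) ^ p) :
    f * (s₁ + s₂) ^ M ≤ 2 ^ M * (1 + C₁ + (M.factorial / a ^ M + C₂)) := by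
  have hfac : (0 : ℝ) ≤ M.factorial / a ^ M := by positivity
  have hpow : (0 : ℝ) < 2 ^ M := by positivity
  have hbounded (h : s₁ + s₂ ≤ 2) :
      f * (s₁ + s₂) ^ M ≤ 2 ^ M * (1 + C₁ + (M.factorial / a ^ M + C₂)) :=
    calc f * (s₁ + s₂) ^ M ≤ 1 * 2 ^ M := by gcongr
      _ ≤ _ := by nlinarith
  rcases le_or_gt s₁ (s₂ ^ 2) with h | h
  · rcases le_or_gt s₂ 1 with hs₂ | hs₂
    · exact hbounded (by nlinarith)
    calc f * (s₁ + s₂) ^ M ≤ f * (2 * s₂ ^ 2) ^ M := by gcongr; nlinarith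
      _ = 2 ^ M * (f * s₂ ^ (2 * M)) := by ring
      _ ≤ _ := by gcongr; linarith
  · rcases le_or_gt s₁ 1 with hs₁ | hs₁
    · exact hbounded (by nlinarith)
    have hle : s₂ ≤ s₁ := by nlinarith
    calc f * (s₁ + s₂) ^ M
        ≤ (Real.exp (-(a * s₁)) + C₂ * (s₂ / s₁) ^ p) * (2 * s₁) ^ M :=
          mul_le_mul (hdecay₁ (by linarith)) (by gcongr; linarith) (by positivity) (by positivity)
      _ = 2 ^ M * (Real.exp (-(a * s₁)) * s₁ ^ M + C₂ * ((s₂ / s₁) ^ p * s₁ ^ M)) := by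
          rw [mul_pow]
          ring
      _ ≤ 2 ^ M * (M.factorial / a ^ M + C₂ * 1) := by
          gcongr
          exacts [exp_neg_mul_mul_pow_le M ha h₁, div_pow_mul_pow_le_one hp hs₁ h₂ h.le]
      _ ≤ _ := mul_le_mul_of_nonneg_left (by linarith) hpow.le

lemma exp_neg_half_sum_add_sq_le {α : Type*} [Fintype α] {v w : α → ℝ} (p : ℕ) {A W : ℝ}
    (hA : 0 < A) (hv : A ≤ ∑ k, v k ^ 2) (hw : ∑ k, w k ^ 2 ≤ W) :
    Real.exp (-(1 / 2) * ∑ k, (v k + w k) ^ 2) ≤ Real.exp (-(A / 8)) + (4 / A * W) ^ p := by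
  have hw_nonneg : 0 ≤ ∑ k, w k ^ 2 := by positivity
  have hsq : 1 / 2 * ∑ k, v k ^ 2 - ∑ k, w k ^ 2 ≤ ∑ k, (v k + w k) ^ 2 := by
    rw [Finset.mul_sum, ← Finset.sum_sub_distrib]
    exact Finset.sum_le_sum fun k _ => by nlinarith [sq_nonneg (v k + 2 * w k)]
  have hW : 0 ≤ 4 / A * W := mul_nonneg (by positivity) (hw_nonneg.trans hw)
  rcases le_or_gt (4 / A * W) 1 with h | h
  · rw [div_mul_eq_mul_div, div_le_one hA] at h
    exact le_add_of_le_of_nonneg (Real.exp_le_exp.2 (by linarith)) (pow_nonneg hW p)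
  · have hexp : Real.exp (-(1 / 2) * ∑ k, (v k + w k) ^ 2) ≤ 1 :=
      Real.exp_le_one_iff.2 (mul_nonpos_of_nonpos_of_nonneg (by norm_num) (by positivity))
    exact le_add_of_nonneg_of_le (Real.exp_pos _).le (hexp.trans (one_le_pow₀ h.le))

lemma half_mul_sum_sq_le_of_abs_sub_le {κ : Type*} [Fintype κ] {A c : κ → κ → ℝ} {c₀ : ℝ}
    (hc₀ : 0 < c₀) (hdiag : ∀ i, c₀ ≤ c i i) (hoff : ∀ i j, i ≠ j → c i j = 0)
    (hA : ∀ i j, |A i j - c i j| ≤ c₀ / (2 * (Fintype.card κ + 1))) (u : κ → ℝ) :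
    c₀ / 2 * ∑ i, u i ^ 2 ≤ ∑ i, ∑ j, u i * u j * A i j := by
  set ε : ℝ := c₀ / (2 * (Fintype.card κ + 1))
  have hterm (i j : κ) : u i * u j * c i j - ε * (|u i| * |u j|) ≤ u i * u j * A i j := by
    have h : |u i * u j * (A i j - c i j)| ≤ |u i| * |u j| * ε := by
      rw [abs_mul, abs_mul]
      exact mul_le_mul_of_nonneg_left (hA i j) (by positivity)
    linarith [neg_le_of_abs_le h]
  have hmain : c₀ * ∑ i, u i ^ 2 ≤ ∑ i, ∑ j, u i * u j * c i j := by
    rw [Finset.mul_sum]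
    refine Finset.sum_le_sum fun i _ => ?_
    rw [Fintype.sum_eq_single i fun j hj => by rw [hoff i j hj.symm, mul_zero]]
    nlinarith [hdiag i, sq_nonneg (u i)]
  have herror : ε * ∑ i, |u i| * ∑ j, |u j| ≤ c₀ / 2 * ∑ i, u i ^ 2 := by
    have hsq : (∑ i, |u i|) ^ 2 ≤ Fintype.card κ * ∑ i, u i ^ 2 := by
      simpa using sq_sum_le_card_mul_sum_sq (s := Finset.univ) (f := fun i => |u i|)
    have hε : ε * Fintype.card κ ≤ c₀ / 2 := by
      rw [div_mul_eq_mul_div, div_le_div_iff₀ (by positivity) two_pos]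
      nlinarith
    calc ε * ∑ i, |u i| * ∑ j, |u j| = ε * (∑ i, |u i|) ^ 2 := by rw [sq, Finset.sum_mul]
      _ ≤ ε * (Fintype.card κ * ∑ i, u i ^ 2) := by gcongr
      _ = ε * Fintype.card κ * ∑ i, u i ^ 2 := by ring
      _ ≤ _ := by gcongr
  have hsum := Finset.sum_le_sum fun i (_ : i ∈ Finset.univ) =>
    Finset.sum_le_sum fun j (_ : j ∈ Finset.univ) => hterm i j
  simp only [Finset.sum_sub_distrib, ← Finset.mul_sum] at hsum
  linarith

lemma sum_sq_sum_mul_eval_pderiv {σ κ : Type} [Fintype σ] [Fintype κ] (F : κ → MvPolynomial σ ℝ)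
    (u : κ → ℝ) (x : σ → ℝ) : ∑ k, (∑ i, u i * eval x (pderiv k (F i))) ^ 2 =
      ∑ i, ∑ j, u i * u j * eval x (carre (F i) (F j)) := by
  simp only [eval_carre, sq, Finset.sum_mul_sum]
  simp only [Finset.mul_sum]
  rw [Finset.sum_comm]
  refine Finset.sum_congr rfl fun i _ => ?_
  rw [Finset.sum_comm]
  exact Finset.sum_congr rfl fun j _ => Finset.sum_congr rfl fun k _ => by ring

namespace HasNearConstCarre

variable {σ κ ι : Type} [Fintype σ] {m : κ → ℕ} {c : κ → κ → ℝ} {B τ τ' : ℝ}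
  {F Q : κ → MvPolynomial σ ℝ}

lemma mono (h : HasNearConstCarre m c B τ F Q) (hτ : τ ≤ τ') : HasNearConstCarre m c B τ' F Q :=
  { h with gaussMean_carre_sub_sq_le := fun i j => (h.gaussMean_carre_sub_sq_le i j).trans hτ }

lemma reindex (h : HasNearConstCarre m c B τ F Q) (e : ι → κ) :
    HasNearConstCarre (fun i => m (e i)) (fun i j => c (e i) (e j)) B τ
      (fun i => F (e i)) (fun i => Q (e i)) where
  mem_ouEigenspace i := h.mem_ouEigenspace (e i)
  totalDegree_le i := h.totalDegree_le (e i)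
  totalDegree_sub_le i := h.totalDegree_sub_le (e i)
  gaussMean_sq_le i := h.gaussMean_sq_le (e i)
  gaussMean_carre_sub_sq_le i j := h.gaussMean_carre_sub_sq_le (e i) (e j)

lemma carre_eq_carre (h : HasNearConstCarre m c B τ F Q) {i j : κ} (hi : m i = 1) (hj : m j = 1) :
    carre (F i) (F j) = carre (Q i) (Q j) := by
  have hpderiv (i : κ) (hi : m i = 1) (k : σ) : pderiv k (F i) = pderiv k (Q i) := by
    have hdeg : (F i - Q i).totalDegree = 0 := by
      simpa only [hi, Nat.sub_self, Nat.le_zero] using h.totalDegree_sub_le i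
    rw [← sub_eq_zero, ← map_sub, totalDegree_eq_zero_iff_eq_C.1 hdeg, pderiv_C]
  simp only [carre_apply, hpderiv i hi, hpderiv j hj]

lemma abs_eval_carre_sub_le {ε : ℝ} (h : HasNearConstCarre m c B (ε ^ 2) F Q) (hε : 0 ≤ ε)
    {i j : κ} (hi : m i = 1) (hj : m j = 1) (x : σ → ℝ) :
    |eval x (carre (F i) (F j)) - c i j| ≤ ε := by
  have hdeg : (carre (F i) (F j)).totalDegree = 0 := by
    have hle := totalDegree_carre_le (h.totalDegree_le i) (h.totalDegree_le j)
    omega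
  have hC := totalDegree_eq_zero_iff_eq_C.1 hdeg
  have hsq := h.gaussMean_carre_sub_sq_le i j
  rw [← h.carre_eq_carre hi hj, hC, ← C_sub, ← C_pow, gaussMean_C] at hsq
  rw [hC, eval_C]
  exact abs_le_of_sq_le_sq hsq hε

lemma half_mul_sum_sq_le [Fintype κ] {c₀ : ℝ} (hc₀ : 0 < c₀) (hdiag : ∀ i, c₀ ≤ c i i)
    (hoff : ∀ i j, i ≠ j → c i j = 0) (hm : ∀ i, m i = 1)
    (h : HasNearConstCarre m c B ((c₀ / (2 * (Fintype.card κ + 1))) ^ 2) F Q)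
    (u : κ → ℝ) (x : σ → ℝ) :
    c₀ / 2 * ∑ i, u i ^ 2 ≤ ∑ k, (∑ i, u i * eval x (pderiv k (F i))) ^ 2 := by
  rw [sum_sq_sum_mul_eval_pderiv]
  exact half_mul_sum_sq_le_of_abs_sub_le hc₀ hdiag hoff
    (fun i j => h.abs_eval_carre_sub_le (by positivity) (hm i) (hm j) x) u

end HasNearConstCarre

end DegreeOne

section Decay

variable {κ : Type}

lemma derivCov_self_pos {α : Type} [DecidableEq α] {m : κ → ℕ} {c : κ → κ → ℝ} {b : α × κ}
    (hm : 2 ≤ m b.2) (hc : 0 < c b.2 b.2) : 0 < derivCov m c b b := by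
  have hm' : (2 : ℝ) ≤ m b.2 := by exact_mod_cast hm
  rw [derivCov, if_pos rfl]
  exact mul_pos (by linarith) hc

lemma derivCov_eq_zero {α : Type} [DecidableEq α] (m : κ → ℕ) {c : κ → κ → ℝ}
    (hc : ∀ i j, i ≠ j → c i j = 0) {b b' : α × κ} (hb : b ≠ b') : derivCov m c b b' = 0 := by
  rw [derivCov]
  split_ifs with h
  · rw [hc _ _ fun h' => hb (Prod.ext h h'), mul_zero]
  · rfl

variable [Fintype κ]

lemma exists_gaussMean_sum_pderiv_sq_pow_le (D k : ℕ) {B : ℝ} (hB : 0 ≤ B) :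
    ∃ C : ℝ, 0 ≤ C ∧ ∀ (σ : Type) [Fintype σ] (F : κ → MvPolynomial σ ℝ),
      (∀ i, (F i).totalDegree ≤ D) → (∀ i, gaussMean (F i ^ 2) ≤ B) →
        gaussMean ((∑ b : κ × σ, pderiv b.2 (F b.1) ^ 2) ^ 2 ^ k) ≤ C := by
  obtain ⟨c, hc, hpow⟩ := exists_gaussMean_sum_sq_pow_le D k
  refine ⟨c * (Fintype.card κ * (D * B)) ^ 2 ^ k, by positivity, fun σ _ F hF hFB => ?_⟩
  have hsum : gaussMean (∑ b : κ × σ, pderiv b.2 (F b.1) ^ 2) ≤ Fintype.card κ * (D * B) := by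
    rw [Fintype.sum_prod_type, map_sum, ← nsmul_eq_mul]
    refine Finset.sum_le_card_nsmul _ _ _ fun i _ => ?_
    simp only [sq, ← carre_apply]
    exact (gaussMean_carre_self_le (hF i)).trans (by gcongr; exact hFB i)
  have hnonneg : 0 ≤ gaussMean (∑ b : κ × σ, pderiv b.2 (F b.1) ^ 2) := by
    rw [map_sum]
    exact Finset.sum_nonneg fun b _ => gaussMean_sq_nonneg _
  refine (hpow σ (κ × σ) _ fun b => ?_).trans (by gcongr)
  exact (totalDegree_pderiv_le b.2 (hF b.1)).trans (Nat.sub_le _ _)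

lemma exp_neg_half_sum_sq_eval_pderiv_le {σ : Type} [Fintype σ] (P : κ → Prop) [DecidablePred P]
    {c₀ : ℝ} (hc₀ : 0 < c₀) (F : κ → MvPolynomial σ ℝ) {u : κ → ℝ} {x : σ → ℝ}
    (hu : 0 < ∑ i : {i // ¬ P i}, u i ^ 2)
    (hlow : c₀ / 2 * ∑ i : {i // ¬ P i}, u i ^ 2 ≤
      ∑ k, (∑ i : {i // ¬ P i}, u i * eval x (pderiv k (F i))) ^ 2) (n : ℕ) :
    Real.exp (-(1 / 2) * ∑ k, (∑ i, u i * eval x (pderiv k (F i))) ^ 2) ≤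
      Real.exp (-(c₀ / 16 * ∑ i : {i // ¬ P i}, u i ^ 2)) +
        (8 / c₀ * ((∑ i : {i // P i}, u i ^ 2) / ∑ i : {i // ¬ P i}, u i ^ 2)) ^ n *
          eval x ((∑ b : {i // P i} × σ, pderiv b.2 (F b.1) ^ 2) ^ n) := by
  have hsplit (k : σ) : ∑ i, u i * eval x (pderiv k (F i)) =
      ∑ i : {i // ¬ P i}, u i * eval x (pderiv k (F i)) +
        ∑ i : {i // P i}, u i * eval x (pderiv k (F i)) := by
    rw [add_comm, Fintype.sum_subtype_add_sum_subtype P fun i => u i * eval x (pderiv k (F i))]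
  have hhigh : ∑ k, (∑ i : {i // P i}, u i * eval x (pderiv k (F i))) ^ 2 ≤
      (∑ i : {i // P i}, u i ^ 2) *
        eval x (∑ b : {i // P i} × σ, pderiv b.2 (F b.1) ^ 2) := by
    rw [map_sum, Fintype.sum_prod_type, Finset.sum_comm, Finset.mul_sum]
    refine Finset.sum_le_sum fun k _ => (Finset.sum_mul_sq_le_sq_mul_sq _ _ _).trans_eq ?_
    simp only [map_pow]
  simp_rw [hsplit]
  refine (exp_neg_half_sum_add_sq_le n (by positivity) hlow hhigh).trans_eq ?_
  rw [map_pow, ← mul_pow]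
  congr 2
  · ring
  · field_simp
    ring

lemma exists_gradCharFun_le_exp_add {m : κ → ℕ} {c : κ → κ → ℝ} {B c₀ : ℝ} (hm : ∀ i, 1 ≤ m i)
    (hc₀ : 0 < c₀) (hdiag : ∀ i, c₀ ≤ c i i) (hoff : ∀ i j, i ≠ j → c i j = 0) (hB : 0 ≤ B)
    (k : ℕ) : ∃ τ > 0, ∃ C : ℝ, 0 ≤ C ∧ ∀ (σ : Type) [Fintype σ] (F Q : κ → MvPolynomial σ ℝ),
      HasNearConstCarre m c B τ F Q → ∀ u : κ → ℝ, 0 < ∑ i : {i // ¬ 2 ≤ m i}, u i ^ 2 →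
        gradCharFun F u ≤ Real.exp (-(c₀ / 16 * ∑ i : {i // ¬ 2 ≤ m i}, u i ^ 2)) +
          C * ((∑ i : {i // 2 ≤ m i}, u i ^ 2) / ∑ i : {i // ¬ 2 ≤ m i}, u i ^ 2) ^ 2 ^ k := by
  obtain ⟨c', hc', hmoment⟩ :=
    exists_gaussMean_sum_pderiv_sq_pow_le (κ := {i // 2 ≤ m i}) (∑ i, m i) k hB
  refine ⟨(c₀ / (2 * (Fintype.card {i // ¬ 2 ≤ m i} + 1))) ^ 2, by positivity,
    (8 / c₀) ^ 2 ^ k * c', by positivity, fun σ _ F Q h u hu => ?_⟩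
  have hone (i : {i // ¬ 2 ≤ m i}) : m i = 1 := le_antisymm (Nat.not_lt.1 i.2) (hm i)
  have hlow := HasNearConstCarre.half_mul_sum_sq_le (κ := {i // ¬ 2 ≤ m i})
    (c := fun i j => c i j) hc₀
    (fun i => hdiag i) (fun i j hij => hoff i j (Subtype.coe_ne_coe.2 hij)) hone
    (h.reindex fun i : {i // ¬ 2 ≤ m i} => (i : κ)) (fun i => u i)
  have hpow := hmoment σ (fun i => F i)
    (fun i => (h.totalDegree_le i).trans (Finset.single_le_sum (fun _ _ => Nat.zero_le _)
      (Finset.mem_univ (i : κ)))) (fun i => h.gaussMean_sq_le i)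
  refine (integral_mono_of_nonneg (ae_of_all _ fun x => (Real.exp_pos _).le)
    ((integrable_const _).add ((integrable_eval_gaussPi _).const_mul _)) (ae_of_all _ fun x =>
      exp_neg_half_sum_sq_eval_pderiv_le (fun i => 2 ≤ m i) hc₀ F hu (hlow x) (2 ^ k))).trans ?_
  refine (integral_add (integrable_const _)
    ((integrable_eval_gaussPi _).const_mul _)).trans_le ?_
  rw [integral_const, probReal_univ, one_smul, integral_const_mul, ← gaussMean_apply, mul_pow,
    mul_right_comm]
  gcongr

lemma sum_mul_eval_dirDerivFamily_eq_add {σ α : Type} [Fintype σ] {m : κ → ℕ}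
    {F : κ → MvPolynomial σ ℝ} (hF : ∀ i, (F i).totalDegree ≤ m i) (G : α × σ → ℝ) (a : α)
    (u : κ → ℝ) (x : σ → ℝ) : ∑ i, u i * eval x (dirDerivFamily G F (a, i)) =
      ∑ i : {i // ¬ 2 ≤ m i}, u i * eval 0 (dirDerivFamily G F (a, i)) +
        ∑ i : {i // 2 ≤ m i},
          u i * eval x (dirDerivFamily G (fun i : {i // 2 ≤ m i} => F i) (a, i)) := by
  rw [← Fintype.sum_subtype_add_sum_subtype (fun i => 2 ≤ m i), add_comm]
  congr 1
  refine Finset.sum_congr rfl fun i _ => ?_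
  have hdeg : (dirDerivFamily G F (a, (i : κ))).totalDegree = 0 := by
    have hle : (dirDerivFamily G F (a, (i : κ))).totalDegree ≤ m i - 1 :=
      totalDegree_dirDeriv_le _ (hF i)
    exact Nat.le_zero.1 (hle.trans (Nat.sub_le_of_le_add (Nat.not_lt.1 i.2)))
  rw [totalDegree_eq_zero_iff_eq_C.1 hdeg, eval_C, eval_C]

lemma gradCharFun_mul_pow_le_of_forall_mem {σ α : Type} [Fintype σ] [Fintype α] [Nonempty α]
    {m : κ → ℕ} {F : κ → MvPolynomial σ ℝ} (hF : ∀ i, (F i).totalDegree ≤ m i)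
    {S : Set (α × σ → ℝ)} (hS : MeasurableSet S) (hS_half : 1 / 2 ≤ (gaussPi (α × σ)).real S)
    {C : ℝ} (hC : 0 ≤ C) {M : ℕ} (hbound : ∀ G ∈ S, ∀ (y : α → ℝ) (u : {i // 2 ≤ m i} → ℝ),
      (∫ x, Real.exp (-∑ a, (y a + ∑ i, u i *
        eval x (dirDerivFamily G (fun i : {i // 2 ≤ m i} => F i) (a, i))) ^ 2) ∂gaussPi σ) *
          (∑ i, u i ^ 2) ^ M ≤ C) (u : κ → ℝ) :
    gradCharFun F u * (∑ i : {i // 2 ≤ m i}, u i ^ 2) ^ M ≤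
      2 * (4 * Fintype.card α) ^ M * C := by
  have hpow : 0 ≤ (∑ i : {i // 2 ≤ m i}, u i ^ 2) ^ M := by positivity
  rcases hpow.eq_or_lt with h₀ | h₀
  · rw [← h₀, mul_zero]
    positivity
  have hcard : (0 : ℝ) < Fintype.card α := Nat.cast_pos.2 Fintype.card_pos
  set v : κ → ℝ := fun i => u i / (2 * √(Fintype.card α))
  have huv : (fun i => 2 * √(Fintype.card α) * v i) = u := by
    ext i
    simp only [v]
    field_simp
  have hv : ∑ i : {i // 2 ≤ m i}, v i ^ 2 =
      (∑ i : {i // 2 ≤ m i}, u i ^ 2) / (4 * Fintype.card α) := by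
    simp only [v, div_pow, mul_pow, Real.sq_sqrt hcard.le, Finset.sum_div]
    norm_num
  have hle := gradCharFun_le_of_forall_mem hS hS_half F v
    (E := C / (∑ i : {i // 2 ≤ m i}, v i ^ 2) ^ M) fun G hG => by
      simp_rw [sum_mul_eval_dirDerivFamily_eq_add hF]
      refine (le_div_iff₀ ?_).2 (hbound G hG _ _)
      rw [hv, div_pow]
      positivity
  rw [huv, hv] at hle
  calc gradCharFun F u * (∑ i : {i // 2 ≤ m i}, u i ^ 2) ^ M
      ≤ _ := mul_le_mul_of_nonneg_right hle hpow
    _ = 2 * (4 * Fintype.card α) ^ M * C := by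
      rw [div_pow]
      field_simp

/-- Polynomial decay of order `2 * M` of `gradCharFun F`, uniformly over all vectors `F` whose
carré du champ matrix is close enough to `c`, in any number of Gaussian variables. -/
def HasUniformGradDecay (m : κ → ℕ) (c : κ → κ → ℝ) (B : ℝ) (M : ℕ) : Prop :=
  ∃ τ > 0, ∃ C : ℝ, ∀ (σ : Type) [Fintype σ] (F Q : κ → MvPolynomial σ ℝ),
    HasNearConstCarre m c B τ F Q → ∀ u : κ → ℝ, gradCharFun F u * (∑ i, u i ^ 2) ^ M ≤ C

lemma exists_gradCharFun_mul_pow_le {α : Type} [Fintype α] [Nonempty α] [DecidableEq α]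
    {m : κ → ℕ} {c : κ → κ → ℝ} {B : ℝ} {M : ℕ} (hα : 16 * M ≤ Fintype.card α) (hB : 0 ≤ B)
    (ih : ∀ B' > 0, HasUniformGradDecay (fun b : α × {i // 2 ≤ m i} => m b.2 - 1)
      (derivCov (fun i : {i // 2 ≤ m i} => m i) fun i j => c i j) B' (8 * M)) :
    ∃ τ > 0, ∃ C : ℝ, 0 ≤ C ∧ ∀ (σ : Type) [Fintype σ] (F Q : κ → MvPolynomial σ ℝ),
      HasNearConstCarre m c B τ F Q → ∀ u : κ → ℝ,
        gradCharFun F u * (∑ i : {i // 2 ≤ m i}, u i ^ 2) ^ M ≤ C := by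
  obtain ⟨B', hB', hfamily⟩ := HasNearConstCarre.exists_dirDerivFamily (α := α)
    (m := fun i : {i // 2 ≤ m i} => m i) (c := fun i j => c i j) (fun i => one_le_two.trans i.2) hB
  obtain ⟨τ', hτ', C', hdecay⟩ := ih B' hB'
  obtain ⟨τ, hτ, hgood⟩ := hfamily τ' hτ'
  obtain ⟨C, hC⟩ := exists_integral_exp_neg_sum_sq_linearComb_mul_pow_le (κ := {i // 2 ≤ m i})
    (∑ i, m i) hB'.le hα (k := 2 * M) Nat.lt_two_pow_self.le
  refine ⟨τ, hτ, 2 * (4 * Fintype.card α) ^ M * max C 0, by positivity, fun σ _ F Q h => ?_⟩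
  obtain ⟨S, hS, hS_half, hS_family⟩ := hgood σ _ _ (h.reindex fun i : {i // 2 ≤ m i} => (i : κ))
  refine gradCharFun_mul_pow_le_of_forall_mem h.totalDegree_le hS hS_half (le_max_right _ _)
    fun G hG y u => (hC σ _ (fun b => ?_) (hS_family G hG).gaussMean_sq_le
      (hdecay σ _ _ (hS_family G hG)) y u).trans (le_max_left _ _)
  exact ((hS_family G hG).totalDegree_le b).trans ((Nat.sub_le _ _).trans
    (Finset.single_le_sum (fun _ _ => Nat.zero_le _) (Finset.mem_univ (b.2 : κ))))

lemma HasUniformGradDecay.of_derivCov {α : Type} [Fintype α] [Nonempty α] [DecidableEq α]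
    {m : κ → ℕ} {c : κ → κ → ℝ} {B : ℝ} {M : ℕ} (hm : ∀ i, 1 ≤ m i) (hdiag : ∀ i, 0 < c i i)
    (hoff : ∀ i j, i ≠ j → c i j = 0) (hB : 0 ≤ B) (hα : 16 * (2 * M) ≤ Fintype.card α)
    (ih : ∀ B' > 0, HasUniformGradDecay (fun b : α × {i // 2 ≤ m i} => m b.2 - 1)
      (derivCov (fun i : {i // 2 ≤ m i} => m i) fun i j => c i j) B' (8 * (2 * M))) :
    HasUniformGradDecay m c B M := by
  obtain ⟨c₀, hc₀, hdiag₀⟩ : ∃ c₀ > 0, ∀ i, c₀ ≤ c i i := by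
    cases isEmpty_or_nonempty κ
    · exact ⟨1, one_pos, fun i => isEmptyElim i⟩
    · obtain ⟨i, hi⟩ := Finite.exists_min fun i => c i i
      exact ⟨c i i, hdiag i, hi⟩
  obtain ⟨τ₁, hτ₁, C₁, hC₁, hhigh⟩ := exists_gradCharFun_mul_pow_le hα hB ih
  obtain ⟨τ₂, hτ₂, C₂, hC₂, hlow⟩ := exists_gradCharFun_le_exp_add hm hc₀ hdiag₀ hoff hB (2 * M)
  refine ⟨min τ₁ τ₂, lt_min hτ₁ hτ₂, 2 ^ M * (1 + C₁ + (M.factorial / (c₀ / 16) ^ M + C₂)),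
    fun σ _ F Q h u => ?_⟩
  rw [← Fintype.sum_subtype_add_sum_subtype (fun i => 2 ≤ m i), add_comm]
  exact mul_add_pow_le Nat.lt_two_pow_self.le (gradCharFun_nonneg F u) (gradCharFun_le_one F u)
    (by positivity) (by positivity) (by positivity) hC₁ hC₂
    (hhigh σ F Q (h.mono (min_le_left _ _)) u) (hlow σ F Q (h.mono (min_le_right _ _)) u)

theorem hasUniformGradDecay (D : ℕ) {m : κ → ℕ} {c : κ → κ → ℝ} {B : ℝ} (hm : ∀ i, 1 ≤ m i)
    (hD : ∀ i, m i ≤ D) (hdiag : ∀ i, 0 < c i i) (hoff : ∀ i j, i ≠ j → c i j = 0) (hB : 0 ≤ B)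
    (M : ℕ) : HasUniformGradDecay m c B M := by
  induction D generalizing κ B M with
  | zero =>
    have : IsEmpty κ := ⟨fun i => by have := hm i; have := hD i; omega⟩
    refine ⟨1, one_pos, 1, fun σ _ F Q _ u => ?_⟩
    rw [Finset.univ_eq_empty, Finset.sum_empty]
    exact mul_le_one₀ (gradCharFun_le_one F u) (by positivity) (pow_le_one₀ le_rfl zero_le_one)
  | succ D ih =>
    refine HasUniformGradDecay.of_derivCov (α := Fin (16 * (2 * M) + 1)) hm hdiag hoff hB
      (by simp) fun B' hB' => ih (fun b => ?_) (fun b => ?_) (fun b => ?_) (fun b b' hb => ?_)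
        hB'.le (8 * (2 * M))
    · exact Nat.le_sub_one_of_lt b.2.2
    · exact Nat.sub_le_of_le_add (hD b.2)
    · exact derivCov_self_pos b.2.2 (hdiag b.2)
    · exact derivCov_eq_zero (fun i : {i // 2 ≤ m i} => m i)
        (fun i j hij => hoff i j (Subtype.coe_ne_coe.2 hij)) hb

end Decay

section ConvergenceInLaw

lemma abs_sub_clamp_le {A : ℝ} (hA : 0 < A) (t : ℝ) : |t - max (-A) (min A t)| ≤ t ^ 2 / A := by
  rw [le_div_iff₀ hA]
  rcases le_total t A with h | h
  · rw [min_eq_right h]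
    rcases le_total (-A) t with h' | h'
    · rw [max_eq_right h', sub_self, abs_zero, zero_mul]
      positivity
    · rw [max_eq_left h', abs_of_nonpos (by linarith)]
      nlinarith
  · rw [min_eq_left h, max_eq_right (by linarith), abs_of_nonneg (by linarith)]
    nlinarith

lemma abs_clamp_le {A : ℝ} (hA : 0 ≤ A) (t : ℝ) : |max (-A) (min A t)| ≤ A :=
  abs_le.2 ⟨le_max_left _ _, max_le (by linarith) (min_le_left _ _)⟩

lemma abs_integral_sub_integral_clamp_le {Ω : Type*} [MeasurableSpace Ω] {μ : Measure Ω}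
    [IsFiniteMeasure μ] {f : Ω → ℝ} (hf : MemLp f 2 μ) {A : ℝ} (hA : 0 < A) :
    |∫ x, f x ∂μ - ∫ x, max (-A) (min A (f x)) ∂μ| ≤ (∫ x, f x ^ 2 ∂μ) / A := by
  have hf_int : Integrable f μ := hf.integrable one_le_two
  have hclamp : Integrable (fun x => max (-A) (min A (f x))) μ :=
    (integrable_const _).sup ((integrable_const _).inf hf_int)
  rw [← integral_sub hf_int hclamp, ← integral_div]
  refine abs_integral_le_integral_abs.trans ?_
  exact integral_mono (hf_int.sub hclamp).abs (hf.integrable_sq.div_const A)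
    fun x => abs_sub_clamp_le hA (f x)

-- A bound on the second moments makes the truncation at level `A` of `f` cost `O(1 / A)` uniformly.
theorem TendstoInLaw.tendsto_integral {E : Type} [MeasurableSpace E] [TopologicalSpace E]
    {μs : ℕ → Measure E} {μ : Measure E} [∀ n, IsFiniteMeasure (μs n)] [IsFiniteMeasure μ]
    (h : TendstoInLaw μs μ) {f : E → ℝ} (hf : Continuous f) (hμs : ∀ n, MemLp f 2 (μs n))
    (hμ : MemLp f 2 μ) {B : ℝ} (hB : ∀ n, ∫ x, f x ^ 2 ∂μs n ≤ B) :
    Tendsto (fun n => ∫ x, f x ∂μs n) atTop (𝓝 (∫ x, f x ∂μ)) := by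
  rw [Metric.tendsto_atTop]
  intro ε hε
  have hμ_sq : 0 ≤ ∫ x, f x ^ 2 ∂μ := integral_nonneg fun _ => sq_nonneg _
  obtain ⟨A, hA, hAε⟩ : ∃ A > 0, (|B| + ∫ x, f x ^ 2 ∂μ) / A < ε / 3 := by
    refine ⟨3 * (|B| + ∫ x, f x ^ 2 ∂μ + 1) / ε, by positivity, ?_⟩
    rw [div_div_eq_mul_div, div_lt_div_iff₀ (by positivity) (by norm_num)]
    nlinarith
  let g : BoundedContinuousFunction E ℝ := .ofNormedAddCommGroup
    (fun y => max (-A) (min A (f y))) (by fun_prop) A fun _ => abs_clamp_le hA.le _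
  obtain ⟨N, hN⟩ := Metric.tendsto_atTop.1 (h g) (ε / 3) (by positivity)
  refine ⟨N, fun n hn => ?_⟩
  have hclamp_n : |∫ x, f x ∂μs n - ∫ x, g x ∂μs n| < ε / 3 := by
    refine (abs_integral_sub_integral_clamp_le (hμs n) hA).trans_lt (lt_of_le_of_lt ?_ hAε)
    gcongr
    linarith [hB n, le_abs_self B]
  have hclamp : |∫ x, f x ∂μ - ∫ x, g x ∂μ| < ε / 3 := by
    refine (abs_integral_sub_integral_clamp_le hμ hA).trans_lt (lt_of_le_of_lt ?_ hAε)
    gcongr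
    linarith [abs_nonneg B]
  have hg := hN n hn
  rw [Real.dist_eq, abs_lt] at hg ⊢
  rw [abs_lt] at hclamp_n hclamp
  constructor <;> linarith

lemma memLp_two_eval_gaussPi {σ : Type} [Fintype σ] (p : MvPolynomial σ ℝ) :
    MemLp (fun x => eval x p) 2 (gaussPi σ) :=
  (memLp_two_iff_integrable_sq (by fun_prop)).2 <|
    (integrable_eval_gaussPi (p ^ 2)).congr (.of_forall fun _ => eval_pow 2)

lemma eval_aeval_eq_eval {R σ τ : Type*} [CommSemiring R] (Q : τ → MvPolynomial σ R)
    (p : MvPolynomial τ R) (x : σ → R) :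
    eval x (aeval Q p) = eval (fun i => eval x (Q i)) p := by
  simpa only [aeval_eq_eval] using comp_aeval_apply Q (aeval x) p

variable {d : ℕ} {K : ℕ → ℕ} {Q : (n : ℕ) → Fin d → MvPolynomial (Fin (K n)) ℝ} {B : ℝ}

lemma tendsto_gaussMean_aeval
    (hlaw : TendstoInLaw (fun n => Measure.map (fun x i => eval x (Q n i)) (gaussPi (Fin (K n))))
      (gaussPi (Fin d))) (p : MvPolynomial (Fin d) ℝ)
    (hB : ∀ n, gaussMean (aeval (Q n) p ^ 2) ≤ B) :
    Tendsto (fun n => gaussMean (aeval (Q n) p)) atTop (𝓝 (gaussMean p)) := by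
  have hQ (n : ℕ) : Measurable fun (x : Fin (K n) → ℝ) i => eval x (Q n i) := by fun_prop
  have hmap {g : (Fin d → ℝ) → ℝ} (hg : Continuous g) (n : ℕ) :
      ∫ y, g y ∂Measure.map (fun x i => eval x (Q n i)) (gaussPi (Fin (K n))) =
        ∫ x, g (fun i => eval x (Q n i)) ∂gaussPi (Fin (K n)) :=
    integral_map (hQ n).aemeasurable hg.aestronglyMeasurable
  have hp := MvPolynomial.continuous_eval p
  have (n : ℕ) : IsProbabilityMeasure
      (Measure.map (fun x i => eval x (Q n i)) (gaussPi (Fin (K n)))) :=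
    Measure.isProbabilityMeasure_map (hQ n).aemeasurable
  simp only [gaussMean_apply, map_pow, eval_aeval_eq_eval] at hB ⊢
  simp only [← hmap hp, ← hmap (g := fun y => eval y p ^ 2) (hp.pow 2)] at hB ⊢
  refine hlaw.tendsto_integral hp (fun n => ?_) (memLp_two_eval_gaussPi p) hB
  rw [memLp_map_measure_iff hp.aestronglyMeasurable (hQ n).aemeasurable]
  simpa only [Function.comp_def, eval_aeval_eq_eval] using memLp_two_eval_gaussPi (aeval (Q n) p)

-- Hypercontractivity turns the second moment bound into a bound on all moments.
theorem tendsto_gaussMean_aeval_of_sq_le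
    (hlaw : TendstoInLaw (fun n => Measure.map (fun x i => eval x (Q n i)) (gaussPi (Fin (K n))))
      (gaussPi (Fin d))) {D : ℕ} (hD : ∀ n i, (Q n i).totalDegree ≤ D)
    (hB : ∀ n, gaussMean (∑ i, Q n i ^ 2) ≤ B) {p : MvPolynomial (Fin d) ℝ} {k : ℕ}
    (hp : ∀ y, eval y p ^ 2 ≤ (∑ i, y i ^ 2) ^ 2 ^ k) :
    Tendsto (fun n => gaussMean (aeval (Q n) p)) atTop (𝓝 (gaussMean p)) := by
  obtain ⟨c, hc, hmoment⟩ := exists_gaussMean_sum_sq_pow_le D k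
  refine tendsto_gaussMean_aeval hlaw p (B := c * B ^ 2 ^ k) fun n => ?_
  have hsum_nonneg : 0 ≤ gaussMean (∑ i, Q n i ^ 2) := by
    rw [map_sum]
    exact Finset.sum_nonneg fun i _ => gaussMean_sq_nonneg _
  calc gaussMean (aeval (Q n) p ^ 2)
      ≤ gaussMean ((∑ i, Q n i ^ 2) ^ 2 ^ k) := gaussMean_mono fun x => by
        simpa only [map_pow, map_sum, eval_aeval_eq_eval] using hp fun i => eval x (Q n i)
    _ ≤ c * gaussMean (∑ i, Q n i ^ 2) ^ 2 ^ k := hmoment _ _ _ (hD n)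
    _ ≤ c * B ^ 2 ^ k := by
        gcongr
        exact hB n

lemma sq_mul_sq_le_sum_sq_sq {ι : Type*} [Fintype ι] (y : ι → ℝ) (i j : ι) :
    y i ^ 2 * y j ^ 2 ≤ (∑ i, y i ^ 2) ^ 2 := by
  have hle (i : ι) : y i ^ 2 ≤ ∑ i, y i ^ 2 :=
    Finset.single_le_sum (f := fun i => y i ^ 2) (fun _ _ => sq_nonneg _) (Finset.mem_univ i)
  rw [sq (∑ i, y i ^ 2)]
  exact mul_le_mul (hle i) (hle j) (sq_nonneg _) ((sq_nonneg _).trans (hle i))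

lemma gaussMean_X_sq_mul_X_sq {σ : Type} [Fintype σ] [DecidableEq σ] (i j : σ) :
    gaussMean (X i ^ 2 * X j ^ 2 : MvPolynomial σ ℝ) = if i = j then 3 else 1 := by
  have hsplit : (X i ^ 2 * X j ^ 2 : MvPolynomial σ ℝ) = X i * (X i * (X j * X j)) := by ring
  rw [hsplit, gaussMean_X_mul]
  rcases eq_or_ne i j with rfl | h
  · have hderiv : pderiv i (X i * (X i * X i) : MvPolynomial σ ℝ) = (3 : ℝ) • (X i * X i) := by
      simp only [Derivation.leibniz, pderiv_X_self, smul_eq_mul, mul_one, ofNat_smul_eq_nsmul]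
      ring
    rw [hderiv, map_smul, gaussMean_X_mul_X]
    simp
  · have hderiv : pderiv i (X i * (X j * X j) : MvPolynomial σ ℝ) = X j * X j := by
      simp only [Derivation.leibniz, pderiv_X_self, smul_eq_mul, pderiv_X_of_ne h.symm]
      ring
    rw [hderiv, gaussMean_X_mul_X]
    simp [h]

variable {D : ℕ}

lemma tendsto_gaussMean_mul
    (hlaw : TendstoInLaw (fun n => Measure.map (fun x i => eval x (Q n i)) (gaussPi (Fin (K n))))
      (gaussPi (Fin d))) (hD : ∀ n i, (Q n i).totalDegree ≤ D)
    (hB : ∀ n, gaussMean (∑ i, Q n i ^ 2) ≤ B) (i j : Fin d) :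
    Tendsto (fun n => gaussMean (Q n i * Q n j)) atTop (𝓝 (if i = j then 1 else 0)) := by
  have h := tendsto_gaussMean_aeval_of_sq_le hlaw hD hB (p := X i * X j) (k := 1) fun y => by
    simpa only [map_mul, eval_X, mul_pow, pow_one] using sq_mul_sq_le_sum_sq_sq y i j
  simpa only [map_mul, aeval_X, gaussMean_X_mul_X] using h

lemma tendsto_gaussMean_sq_mul_sq
    (hlaw : TendstoInLaw (fun n => Measure.map (fun x i => eval x (Q n i)) (gaussPi (Fin (K n))))
      (gaussPi (Fin d))) (hD : ∀ n i, (Q n i).totalDegree ≤ D)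
    (hB : ∀ n, gaussMean (∑ i, Q n i ^ 2) ≤ B) (i j : Fin d) :
    Tendsto (fun n => gaussMean (Q n i ^ 2 * Q n j ^ 2)) atTop (𝓝 (if i = j then 3 else 1)) := by
  have h := tendsto_gaussMean_aeval_of_sq_le hlaw hD hB (p := X i ^ 2 * X j ^ 2) (k := 2)
    fun y => by
      rw [pow_succ 2 1, pow_one, pow_mul]
      simpa only [map_mul, map_pow, eval_X] using
        pow_le_pow_left₀ (by positivity) (sq_mul_sq_le_sum_sq_sq y i j) 2
  simpa only [map_mul, map_pow, aeval_X, gaussMean_X_sq_mul_X_sq] using h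

-- A degenerate limit is excluded by `cos (2 a) = 2 cos² a - 1`: the characteristic function of
-- the Gaussian law does not satisfy this identity.
lemma exists_totalDegree_ne_zero
    (hlaw : TendstoInLaw (fun n => Measure.map (fun x i => eval x (Q n i)) (gaussPi (Fin (K n))))
      (gaussPi (Fin d))) (i : Fin d) : ∃ n, (Q n i).totalDegree ≠ 0 := by
  by_contra! hconst
  have hcos (t : ℝ) : Tendsto (fun n => Real.cos (t * coeff 0 (Q n i))) atTop
      (𝓝 (Real.exp (-(1 / 2) * t ^ 2))) := by
    have hgauss := integral_cos_add_linearForm 0 (Pi.single i t : Fin d → ℝ)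
    simp only [Pi.single_apply, ite_mul, zero_mul, Finset.sum_ite_eq', Finset.mem_univ, if_true,
      zero_add, Real.cos_zero, one_mul, ite_pow, ne_eq, OfNat.ofNat_ne_zero, not_false_eq_true,
      zero_pow] at hgauss
    rw [← hgauss]
    refine (hlaw (.ofNormedAddCommGroup (fun y => Real.cos (t * y i)) (by fun_prop) 1
      fun y => Real.abs_cos_le_one _)).congr fun n => ?_
    rw [integral_map (by fun_prop) (BoundedContinuousFunction.continuous _).aestronglyMeasurable]
    simp only [BoundedContinuousFunction.coe_ofNormedAddCommGroup]
    rw [totalDegree_eq_zero_iff_eq_C.1 (hconst n)]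
    simp
  have hdouble := ((hcos 1).pow 2).const_mul 2 |>.sub_const 1
  simp only [one_mul, ← Real.cos_two_mul] at hdouble
  have heq : Real.exp (-(1 / 2) * 2 ^ 2) = 2 * Real.exp (-(1 / 2) * 1 ^ 2) ^ 2 - 1 :=
    tendsto_nhds_unique (hcos 2) hdouble
  have hsq : Real.exp (-(1 / 2) * 1 ^ 2) ^ 2 = Real.exp (-1) := by
    rw [← Real.exp_nat_mul]
    norm_num
  have hfourth : Real.exp (-(1 / 2) * 2 ^ 2) = Real.exp (-1) ^ 2 := by
    rw [← Real.exp_nat_mul]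
    norm_num
  have hlt : Real.exp (-1) < 1 := Real.exp_lt_one_iff.2 (by norm_num)
  rw [hsq, hfourth] at heq
  nlinarith

end ConvergenceInLaw

section FourthMoment

variable {σ : Type} [Fintype σ]

lemma gaussMean_carre_right {a : ℝ} {p : MvPolynomial σ ℝ} (hp : p ∈ ouEigenspace a)
    (r : MvPolynomial σ ℝ) : gaussMean (carre r p) = a * gaussMean (r * p) := by
  have h := gaussMean_mul_ouGen r p
  rw [mem_ouEigenspace.1 hp, mul_neg, mul_smul_comm, map_neg, map_smul, smul_eq_mul] at h
  linarith

lemma gaussMean_carre_sq_le {a b : ℕ} {p q : MvPolynomial σ ℝ}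
    (hp : p ∈ ouEigenspace (a : ℝ)) (hq : q ∈ ouEigenspace (b : ℝ)) :
    gaussMean (carre p q ^ 2) ≤ (a + b) / 2 * gaussMean (p * q * carre p q) := by
  have h := gaussMean_ouShift_sq_le_mul (totalDegree_mul_le
    (totalDegree_le_of_mem_ouEigenspace hp) (totalDegree_le_of_mem_ouEigenspace hq))
  rw [Nat.cast_add, ← carre_eq_ouShift hp hq] at h
  exact h

theorem gaussMean_carre_self_sub_sq_le {a : ℕ} {p : MvPolynomial σ ℝ}
    (hp : p ∈ ouEigenspace (a : ℝ)) :
    gaussMean ((carre p p - C (a : ℝ)) ^ 2) ≤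
      a ^ 2 / 3 * gaussMean (p ^ 2 * p ^ 2) - 2 * a ^ 2 * gaussMean (p * p) + a ^ 2 := by
  have hfourth : 3 * gaussMean (p * p * carre p p) = a * gaussMean (p ^ 2 * p ^ 2) := by
    have hcube : carre (p * (p * p)) p = (3 : ℝ) • (p * p * carre p p) := by
      rw [carre_mul_left, carre_mul_left, ofNat_smul_eq_nsmul]
      ring
    rw [← smul_eq_mul, ← map_smul, ← hcube, gaussMean_carre_right hp]
    ring_nf
  have hexpand : (carre p p - C (a : ℝ)) ^ 2 =
      carre p p ^ 2 - (2 * a : ℝ) • carre p p + C ((a : ℝ) ^ 2) := by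
    rw [smul_eq_C_mul, C_mul, C_pow, map_ofNat]
    ring
  rw [hexpand, map_add, map_sub, map_smul, smul_eq_mul, gaussMean_C, gaussMean_carre_right hp]
  linear_combination gaussMean_carre_sq_le hp hp + (a / 3 : ℝ) * hfourth

theorem gaussMean_carre_sq_le_of_covariance {a b : ℕ} {p q : MvPolynomial σ ℝ}
    (hp : p ∈ ouEigenspace (a : ℝ)) (hq : q ∈ ouEigenspace (b : ℝ)) :
    gaussMean (carre p q ^ 2) ≤
      (a + b) / 4 * (a * gaussMean (p ^ 2 * q ^ 2) - a * gaussMean (q * q) +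
        √(gaussMean ((carre p p - C (a : ℝ)) ^ 2) * gaussMean (q ^ 2 * q ^ 2))) := by
  have hparts : 2 * gaussMean (p * q * carre p q) = a * gaussMean (p ^ 2 * q ^ 2) -
      a * gaussMean (q * q) - gaussMean ((carre p p - C (a : ℝ)) * q ^ 2) := by
    have h := gaussMean_carre_right hp (p * (q * q))
    have hexpand : carre (p * (q * q)) p = (2 : ℝ) • (p * q * carre p q) +
        ((carre p p - C (a : ℝ)) * q ^ 2 + (a : ℝ) • (q * q)) := by
      rw [carre_mul_left, carre_mul_left, carre_comm q p, ofNat_smul_eq_nsmul, smul_eq_C_mul]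
      ring
    rw [hexpand, map_add, map_add, map_smul, map_smul, smul_eq_mul, smul_eq_mul,
      show p * (q * q) * p = p ^ 2 * q ^ 2 by ring] at h
    linarith
  have hsqrt : -gaussMean ((carre p p - C (a : ℝ)) * q ^ 2) ≤
      √(gaussMean ((carre p p - C (a : ℝ)) ^ 2) * gaussMean (q ^ 2 * q ^ 2)) := by
    refine (neg_le_abs _).trans (Real.abs_le_sqrt ?_)
    simpa only [← sq] using gaussMean_mul_sq_le (carre p p - C (a : ℝ)) (q ^ 2)
  calc gaussMean (carre p q ^ 2)
      ≤ (a + b) / 4 * (2 * gaussMean (p * q * carre p q)) :=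
        (gaussMean_carre_sq_le hp hq).trans_eq (by ring)
    _ ≤ _ := by
        rw [hparts]
        gcongr
        linarith

variable {d : ℕ} {m : Fin d → ℕ} {K : ℕ → ℕ} {Q : (n : ℕ) → Fin d → MvPolynomial (Fin (K n)) ℝ}
  {B : ℝ}

lemma totalDegree_le_sum_of_mem_ouEigenspace (hQ : ∀ n i, Q n i ∈ ouEigenspace (m i : ℝ))
    (n : ℕ) (i : Fin d) : (Q n i).totalDegree ≤ ∑ i, m i :=
  (totalDegree_le_of_mem_ouEigenspace (hQ n i)).trans
    (Finset.single_le_sum (fun _ _ => Nat.zero_le _) (Finset.mem_univ i))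

lemma tendsto_gaussMean_carre_self_sub_sq
    (hlaw : TendstoInLaw (fun n => Measure.map (fun x i => eval x (Q n i)) (gaussPi (Fin (K n))))
      (gaussPi (Fin d))) (hQ : ∀ n i, Q n i ∈ ouEigenspace (m i : ℝ))
    (hB : ∀ n, gaussMean (∑ i, Q n i ^ 2) ≤ B) (i : Fin d) :
    Tendsto (fun n => gaussMean ((carre (Q n i) (Q n i) - C (m i : ℝ)) ^ 2)) atTop (𝓝 0) := by
  have hD := totalDegree_le_sum_of_mem_ouEigenspace hQ
  have hbound := (((tendsto_gaussMean_sq_mul_sq hlaw hD hB i i).const_mul ((m i : ℝ) ^ 2 / 3)).sub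
    ((tendsto_gaussMean_mul hlaw hD hB i i).const_mul (2 * (m i : ℝ) ^ 2))).add_const
      ((m i : ℝ) ^ 2)
  rw [if_pos rfl, if_pos rfl,
    show (m i : ℝ) ^ 2 / 3 * 3 - 2 * (m i : ℝ) ^ 2 * 1 + (m i : ℝ) ^ 2 = 0 by ring] at hbound
  exact squeeze_zero (fun n => gaussMean_sq_nonneg _)
    (fun n => gaussMean_carre_self_sub_sq_le (hQ n i)) hbound

lemma tendsto_gaussMean_carre_sq
    (hlaw : TendstoInLaw (fun n => Measure.map (fun x i => eval x (Q n i)) (gaussPi (Fin (K n))))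
      (gaussPi (Fin d))) (hQ : ∀ n i, Q n i ∈ ouEigenspace (m i : ℝ))
    (hB : ∀ n, gaussMean (∑ i, Q n i ^ 2) ≤ B) {i j : Fin d} (hij : i ≠ j) :
    Tendsto (fun n => gaussMean (carre (Q n i) (Q n j) ^ 2)) atTop (𝓝 0) := by
  have hD := totalDegree_le_sum_of_mem_ouEigenspace hQ
  have hfourth := tendsto_gaussMean_sq_mul_sq hlaw hD hB
  have hbound := ((((hfourth i j).const_mul (m i : ℝ)).sub
    ((tendsto_gaussMean_mul hlaw hD hB j j).const_mul (m i : ℝ))).add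
      ((tendsto_gaussMean_carre_self_sub_sq hlaw hQ hB i).mul (hfourth j j)).sqrt).const_mul
        (((m i : ℝ) + m j) / 4)
  rw [if_neg hij, if_pos rfl, if_pos rfl, sub_self, zero_mul, Real.sqrt_zero, add_zero,
    mul_zero] at hbound
  exact squeeze_zero (fun n => gaussMean_sq_nonneg _)
    (fun n => gaussMean_carre_sq_le_of_covariance (hQ n i) (hQ n j)) hbound

theorem eventually_gaussMean_carre_sub_sq_le
    (hlaw : TendstoInLaw (fun n => Measure.map (fun x i => eval x (Q n i)) (gaussPi (Fin (K n))))
      (gaussPi (Fin d))) (hQ : ∀ n i, Q n i ∈ ouEigenspace (m i : ℝ))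
    (hB : ∀ n, gaussMean (∑ i, Q n i ^ 2) ≤ B) {τ : ℝ} (hτ : 0 < τ) :
    ∀ᶠ n in atTop, ∀ i j,
      gaussMean ((carre (Q n i) (Q n j) - C (if i = j then (m i : ℝ) else 0)) ^ 2) ≤ τ := by
  refine eventually_all.2 fun i => eventually_all.2 fun j => ?_
  rcases eq_or_ne i j with rfl | hij
  · simpa only [if_true] using
      (tendsto_gaussMean_carre_self_sub_sq hlaw hQ hB i).eventually_le_const hτ
  · simpa only [if_neg hij, C_0, sub_zero] using
      (tendsto_gaussMean_carre_sq hlaw hQ hB hij).eventually_le_const hτ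

end FourthMoment

section GaussianDeterminant

open scoped Matrix

variable {ι : Type*} [Fintype ι]

lemma lintegral_exp_neg_half_sum_sq : ∫⁻ v : ι → ℝ,
    ENNReal.ofReal (Real.exp (-(1 / 2) * ∑ i, v i ^ 2)) =
      ENNReal.ofReal √(2 * Real.pi) ^ Fintype.card ι := by
  have hprod (v : ι → ℝ) :
      Real.exp (-(1 / 2) * ∑ i, v i ^ 2) = ∏ i, Real.exp (-(1 / 2) * v i ^ 2) := by
    rw [← Real.exp_sum, Finset.mul_sum]
  have hint : Integrable fun v : ι → ℝ => ∏ i, Real.exp (-(1 / 2) * v i ^ 2) :=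
    .fintype_prod (f := fun _ t => Real.exp (-(1 / 2) * t ^ 2)) fun _ =>
      integrable_exp_neg_mul_sq (by norm_num)
  simp only [hprod]
  rw [← ofReal_integral_eq_lintegral_ofReal hint (ae_of_all _ fun v => by positivity),
    integral_fintype_prod_volume_eq_pow fun t : ℝ => Real.exp (-(1 / 2) * t ^ 2),
    integral_gaussian, ENNReal.ofReal_pow (Real.sqrt_nonneg _), div_div_eq_mul_div, div_one,
    mul_comm Real.pi]

lemma dotProduct_transpose_mul_mulVec {κ : Type*} [Fintype κ] (G : Matrix κ ι ℝ)
    (u : ι → ℝ) : u ⬝ᵥ (Gᵀ * G) *ᵥ u = ∑ k, (G *ᵥ u) k ^ 2 := by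
  rw [← Matrix.mulVec_mulVec, Matrix.dotProduct_mulVec, Matrix.vecMul_transpose]
  simp only [dotProduct, sq]

variable [DecidableEq ι]

lemma lintegral_exp_neg_half_sum_sq_mulVec {M : Matrix ι ι ℝ} (hM : M.det ≠ 0) :
    ∫⁻ u : ι → ℝ, ENNReal.ofReal (Real.exp (-(1 / 2) * ∑ i, (M *ᵥ u) i ^ 2)) =
      ENNReal.ofReal |M.det⁻¹| * ENNReal.ofReal √(2 * Real.pi) ^ Fintype.card ι := by
  have hM_meas : Measurable (Matrix.toLin' M) :=
    (LinearMap.continuous_of_finiteDimensional _).measurable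
  rw [← lintegral_exp_neg_half_sum_sq, ← smul_eq_mul, ← lintegral_smul_measure,
    ← Real.map_matrix_volume_pi_eq_smul_volume_pi hM, lintegral_map (by fun_prop) hM_meas]
  simp only [Matrix.toLin'_apply]

theorem lintegral_exp_neg_half_quadraticForm_sq {A : Matrix ι ι ℝ} (hA : A.PosDef) :
    (∫⁻ u : ι → ℝ, ENNReal.ofReal (Real.exp (-(1 / 2) * (u ⬝ᵥ A *ᵥ u)))) ^ 2 =
      ENNReal.ofReal (2 * Real.pi) ^ Fintype.card ι * (ENNReal.ofReal A.det)⁻¹ := by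
  open scoped MatrixOrder in
  obtain ⟨M, hM⟩ := CStarAlgebra.nonneg_iff_eq_star_mul_self.mp hA.posSemidef.nonneg
  have hAM : A = Mᵀ * M := hM
  have hdet : A.det = M.det ^ 2 := by rw [hAM, Matrix.det_mul, Matrix.det_transpose, sq]
  have hdet_pos := hA.det_pos
  have hM_det : M.det ≠ 0 := fun h => by simp [hdet, h] at hdet_pos
  simp only [hAM, dotProduct_transpose_mul_mulVec]
  rw [lintegral_exp_neg_half_sum_sq_mulVec hM_det, ← hAM, mul_pow, pow_right_comm,
    ← ENNReal.ofReal_pow (Real.sqrt_nonneg _), Real.sq_sqrt (by positivity),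
    ← ENNReal.ofReal_pow (abs_nonneg _), sq_abs, inv_pow, ← hdet,
    ENNReal.ofReal_inv_of_pos hdet_pos, mul_comm]

theorem ofReal_det_inv_le_lintegral_exp_sq {A : Matrix ι ι ℝ} (hA : A.PosSemidef) :
    ENNReal.ofReal (2 * Real.pi) ^ Fintype.card ι * (ENNReal.ofReal A.det)⁻¹ ≤
      (∫⁻ u : ι → ℝ, ENNReal.ofReal (Real.exp (-(1 / 2) * (u ⬝ᵥ A *ᵥ u)))) ^ 2 := by
  have hcont : Continuous fun ε : ℝ => (A + ε • (1 : Matrix ι ι ℝ)).det := by fun_prop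
  have hlim : Tendsto (fun ε : ℝ => ENNReal.ofReal (2 * Real.pi) ^ Fintype.card ι *
      (ENNReal.ofReal (A + ε • (1 : Matrix ι ι ℝ)).det)⁻¹) (𝓝[>] 0)
      (𝓝 (ENNReal.ofReal (2 * Real.pi) ^ Fintype.card ι * (ENNReal.ofReal A.det)⁻¹)) := by
    refine ENNReal.Tendsto.const_mul (tendsto_inv_iff.2 (ENNReal.tendsto_ofReal ?_))
      (.inr (ENNReal.pow_ne_top ENNReal.ofReal_ne_top))
    simpa only [zero_smul, add_zero] using (hcont.tendsto 0).mono_left nhdsWithin_le_nhds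
  refine le_of_tendsto hlim ?_
  filter_upwards [self_mem_nhdsWithin] with ε (hε : 0 < ε)
  rw [← lintegral_exp_neg_half_quadraticForm_sq
    (Matrix.PosDef.posSemidef_add hA (Matrix.PosDef.one.smul hε))]
  refine pow_le_pow_left' (lintegral_mono fun u =>
    ENNReal.ofReal_le_ofReal (Real.exp_le_exp.2 ?_)) 2
  rw [Matrix.add_mulVec, dotProduct_add, Matrix.smul_mulVec, Matrix.one_mulVec, dotProduct_smul,
    smul_eq_mul]
  have hself : 0 ≤ u ⬝ᵥ u := Finset.sum_nonneg fun i _ => mul_self_nonneg (u i)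
  nlinarith

lemma ofReal_det_malMatrix_inv_le {K d : ℕ} (F : Fin d → MvPolynomial (Fin K) ℝ)
    (x : Fin K → ℝ) :
    ENNReal.ofReal (2 * Real.pi) ^ d * (ENNReal.ofReal (malMatrix F x).det)⁻¹ ≤
      (∫⁻ u : Fin d → ℝ, ENNReal.ofReal
        (Real.exp (-(1 / 2) * ∑ k, (∑ i, u i * eval x (pderiv k (F i))) ^ 2))) ^ 2 := by
  let G : Matrix (Fin K) (Fin d) ℝ := Matrix.of fun k i => eval x (pderiv k (F i))
  have hG : malMatrix F x = Gᵀ * G := by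
    ext i j
    simp [malMatrix, G, Matrix.mul_apply]
  have h := ofReal_det_inv_le_lintegral_exp_sq (Matrix.posSemidef_conjTranspose_mul_self G)
  simp only [Matrix.conjTranspose_eq_transpose_of_trivial,
    dotProduct_transpose_mul_mulVec, Fintype.card_fin] at h
  simpa only [hG, G, Matrix.mulVec, dotProduct, Matrix.of_apply, mul_comm (eval x _)] using h

end GaussianDeterminant

section NegativeMoments

lemma lintegral_pow_succ_le {Y : Type*} [MeasurableSpace Y] {ν : Measure Y} {f w : Y → ENNReal}
    (hf : Measurable f) (hw : Measurable w) (hw_ne_zero : ∀ y, w y ≠ 0) (hw_ne_top : ∀ y, w y ≠ ⊤)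
    (n : ℕ) :
    (∫⁻ y, f y ∂ν) ^ (n + 1) ≤
      (∫⁻ y, (w y)⁻¹ ∂ν) ^ n * ∫⁻ y, w y ^ n * f y ^ (n + 1) ∂ν := by
  have hn : (n : ℝ) + 1 ≠ 0 := by positivity
  have hfactor (y : Y) :
      (w y ^ n * f y ^ (n + 1)) ^ (1 / ((n : ℝ) + 1)) * (w y)⁻¹ ^ ((n : ℝ) / (n + 1)) = f y := by
    rw [ENNReal.mul_rpow_of_nonneg _ _ (by positivity), ← ENNReal.rpow_natCast_mul,
      ← ENNReal.rpow_natCast_mul, ENNReal.inv_rpow, mul_one_div, Nat.cast_succ,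
      mul_one_div_cancel hn, ENNReal.rpow_one, mul_right_comm, ENNReal.mul_inv_cancel, one_mul]
    · simp [hw_ne_zero y, hw_ne_top y, ENNReal.rpow_eq_zero_iff]
    · exact ENNReal.rpow_ne_top_of_nonneg (by positivity) (hw_ne_top y)
  have hholder := ENNReal.lintegral_mul_norm_pow_le (μ := ν) (p := 1 / ((n : ℝ) + 1))
    (q := (n : ℝ) / (n + 1)) ((hw.pow_const n).mul (hf.pow_const (n + 1))).aemeasurable
    hw.inv.aemeasurable (by positivity) (by positivity) (by field_simp; ring)
  simp only [Pi.mul_apply, Pi.inv_apply, hfactor] at hholder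
  refine (pow_le_pow_left' hholder (n + 1)).trans_eq ?_
  rw [mul_pow, ← ENNReal.rpow_mul_natCast, ← ENNReal.rpow_mul_natCast, Nat.cast_succ,
    one_div_mul_cancel hn, div_mul_cancel₀ _ hn, ENNReal.rpow_one, ENNReal.rpow_natCast, mul_comm]

theorem lintegral_lintegral_pow_le {X Y : Type*} [MeasurableSpace X] [MeasurableSpace Y]
    {μ : Measure X} {ν : Measure Y} [SFinite μ] [SFinite ν] {f : X → Y → ENNReal} {w : Y → ENNReal}
    (hf : Measurable (Function.uncurry f)) (hf_le : ∀ x y, f x y ≤ 1) (hw : Measurable w)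
    (hw_ne_zero : ∀ y, w y ≠ 0) (hw_ne_top : ∀ y, w y ≠ ⊤) {p : ℕ} (hp : p ≠ 0)
    {C : ENNReal} (hC : ∀ y, w y ^ p * ∫⁻ x, f x y ∂μ ≤ C) :
    ∫⁻ x, (∫⁻ y, f x y ∂ν) ^ p ∂μ ≤ (∫⁻ y, (w y)⁻¹ ∂ν) ^ p * C := by
  obtain ⟨n, rfl⟩ := Nat.exists_eq_add_one_of_ne_zero hp
  have hweight (y : Y) : w y ^ n * ∫⁻ x, f x y ∂μ ≤ (w y)⁻¹ * C := by
    rw [← ENNReal.div_eq_inv_mul, ENNReal.le_div_iff_mul_le (.inl (hw_ne_zero y))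
      (.inl (hw_ne_top y))]
    calc w y ^ n * (∫⁻ x, f x y ∂μ) * w y = w y ^ (n + 1) * ∫⁻ x, f x y ∂μ := by ring
      _ ≤ C := hC y
  calc ∫⁻ x, (∫⁻ y, f x y ∂ν) ^ (n + 1) ∂μ
      ≤ ∫⁻ x, (∫⁻ y, (w y)⁻¹ ∂ν) ^ n * ∫⁻ y, w y ^ n * f x y ∂ν ∂μ := by
        refine lintegral_mono fun x => (lintegral_pow_succ_le hf.of_uncurry_left hw hw_ne_zero
          hw_ne_top n).trans ?_
        gcongr with y
        exact pow_le_of_le_one zero_le (hf_le x y) n.succ_ne_zero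
    _ = (∫⁻ y, (w y)⁻¹ ∂ν) ^ n * ∫⁻ y, w y ^ n * ∫⁻ x, f x y ∂μ ∂ν := by
        have hmeas : Measurable (Function.uncurry fun x y => w y ^ n * f x y) :=
          ((hw.comp measurable_snd).pow_const n).mul hf
        rw [lintegral_const_mul _ (f := fun x => ∫⁻ y, w y ^ n * f x y ∂ν)
          hmeas.lintegral_prod_right', lintegral_lintegral_swap hmeas.aemeasurable]
        simp_rw [lintegral_const_mul _ hf.of_uncurry_right]
    _ ≤ (∫⁻ y, (w y)⁻¹ ∂ν) ^ n * ∫⁻ y, (w y)⁻¹ * C ∂ν := by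
        gcongr (∫⁻ y, (w y)⁻¹ ∂ν) ^ n * ?_
        exact lintegral_mono hweight
    _ = (∫⁻ y, (w y)⁻¹ ∂ν) ^ (n + 1) * C := by
        rw [lintegral_mul_const _ (f := fun y => (w y)⁻¹) hw.inv, ← mul_assoc, pow_succ]

lemma one_add_norm_pow_le {ι : Type*} [Fintype ι] (u : ι → ℝ) (L : ℕ) :
    (1 + ‖u‖) ^ L ≤ 4 ^ L * (1 + (∑ i, u i ^ 2) ^ L) := by
  have hsum : 0 ≤ ∑ i, u i ^ 2 := Finset.sum_nonneg fun _ _ => sq_nonneg _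
  have hnorm : ‖u‖ ≤ √(∑ i, u i ^ 2) := by
    refine (pi_norm_le_iff_of_nonneg (Real.sqrt_nonneg _)).2 fun i => Real.abs_le_sqrt ?_
    exact Finset.single_le_sum (f := fun i => u i ^ 2) (fun _ _ => sq_nonneg _) (Finset.mem_univ i)
  have hsqrt : √(∑ i, u i ^ 2) ≤ 1 + ∑ i, u i ^ 2 := by
    nlinarith [Real.sq_sqrt hsum, sq_nonneg (√(∑ i, u i ^ 2) - 1)]
  calc (1 + ‖u‖) ^ L ≤ (2 * (1 + ∑ i, u i ^ 2)) ^ L := by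
        gcongr
        linarith
    _ ≤ 2 ^ L * (2 ^ (L - 1) * (1 ^ L + (∑ i, u i ^ 2) ^ L)) := by
        rw [mul_pow]
        gcongr
        exact add_pow_le zero_le_one hsum L
    _ ≤ 2 ^ L * (2 ^ L * (1 + (∑ i, u i ^ 2) ^ L)) := by
        rw [one_pow]
        gcongr
        · norm_num
        · omega
    _ = 4 ^ L * (1 + (∑ i, u i ^ 2) ^ L) := by
        rw [← mul_assoc, ← mul_pow]
        norm_num

lemma lintegral_one_add_norm_pow_inv_ne_top (d : ℕ) :
    ∫⁻ u : Fin d → ℝ, (ENNReal.ofReal ((1 + ‖u‖) ^ (d + 1)))⁻¹ ≠ ⊤ := by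
  refine ne_of_eq_of_ne (lintegral_congr fun u => ?_) (finite_integral_one_add_norm
    (E := Fin d → ℝ) (μ := volume) (r := (d : ℝ) + 1) (by simp)).ne
  rw [← ENNReal.ofReal_inv_of_pos (by positivity), Real.rpow_neg (by positivity)]
  norm_cast

lemma lintegral_exp_gradient_eq_gradCharFun {σ ι : Type} [Fintype σ] [Fintype ι]
    (F : ι → MvPolynomial σ ℝ) (u : ι → ℝ) :
    ∫⁻ x, ENNReal.ofReal (Real.exp (-(1 / 2) * ∑ k, (∑ i, u i * eval x (pderiv k (F i))) ^ 2))
      ∂gaussPi σ = ENNReal.ofReal (gradCharFun F u) := by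
  refine (ofReal_integral_eq_lintegral_ofReal (integrable_exp_of_nonpos (by fun_prop) fun x => ?_)
    (ae_of_all _ fun x => (Real.exp_pos _).le)).symm
  exact mul_nonpos_of_nonpos_of_nonneg (by norm_num) (Finset.sum_nonneg fun _ _ => sq_nonneg _)

lemma one_add_norm_pow_mul_gradCharFun_le {σ ι : Type} [Fintype σ] [Fintype ι]
    {F : ι → MvPolynomial σ ℝ} {L : ℕ} {C₀ : ℝ} {u : ι → ℝ}
    (h : gradCharFun F u * (∑ i, u i ^ 2) ^ L ≤ C₀) :
    (1 + ‖u‖) ^ L * gradCharFun F u ≤ 4 ^ L * (1 + C₀) :=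
  calc (1 + ‖u‖) ^ L * gradCharFun F u
      ≤ 4 ^ L * (1 + (∑ i, u i ^ 2) ^ L) * gradCharFun F u :=
        mul_le_mul_of_nonneg_right (one_add_norm_pow_le u L) (gradCharFun_nonneg F u)
    _ = 4 ^ L * (gradCharFun F u + gradCharFun F u * (∑ i, u i ^ 2) ^ L) := by ring
    _ ≤ 4 ^ L * (1 + C₀) := by gcongr; exact gradCharFun_le_one F u

theorem lintegral_det_malMatrix_pow_inv_le {d q : ℕ} (hq : q ≠ 0) {C₀ : ℝ} {K : ℕ}
    {F : Fin d → MvPolynomial (Fin K) ℝ}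
    (hF : ∀ u, gradCharFun F u * (∑ i, u i ^ 2) ^ ((d + 1) * (2 * q)) ≤ C₀) :
    ∫⁻ x, (ENNReal.ofReal (malMatrix F x).det ^ q)⁻¹ ∂gaussPi (Fin K) ≤
      (ENNReal.ofReal (2 * Real.pi) ^ d)⁻¹ ^ q *
        ((∫⁻ u : Fin d → ℝ, (ENNReal.ofReal ((1 + ‖u‖) ^ (d + 1)))⁻¹) ^ (2 * q) *
          ENNReal.ofReal (4 ^ ((d + 1) * (2 * q)) * (1 + C₀))) := by
  let e (x : Fin K → ℝ) (u : Fin d → ℝ) : ENNReal := ENNReal.ofReal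
    (Real.exp (-(1 / 2) * ∑ k, (∑ i, u i * eval x (pderiv k (F i))) ^ 2))
  have he_le (x : Fin K → ℝ) (u : Fin d → ℝ) : e x u ≤ 1 := by
    refine ENNReal.ofReal_le_one.2 (Real.exp_le_one_iff.2 ?_)
    exact mul_nonpos_of_nonpos_of_nonneg (by norm_num) (Finset.sum_nonneg fun _ _ => sq_nonneg _)
  have hdet (x : Fin K → ℝ) : (ENNReal.ofReal (malMatrix F x).det ^ q)⁻¹ ≤
      (ENNReal.ofReal (2 * Real.pi) ^ d)⁻¹ ^ q * (∫⁻ u, e x u) ^ (2 * q) := by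
    rw [ENNReal.inv_pow, pow_mul, ← mul_pow]
    refine pow_le_pow_left' ?_ q
    rw [← ENNReal.div_eq_inv_mul, ENNReal.le_div_iff_mul_le (.inl (by simp [Real.pi_pos]))
      (.inl (by finiteness)), mul_comm]
    exact ofReal_det_malMatrix_inv_le F x
  have hdecay (u : Fin d → ℝ) : ENNReal.ofReal ((1 + ‖u‖) ^ (d + 1)) ^ (2 * q) *
      ∫⁻ x, e x u ∂gaussPi (Fin K) ≤
        ENNReal.ofReal (4 ^ ((d + 1) * (2 * q)) * (1 + C₀)) := by
    rw [lintegral_exp_gradient_eq_gradCharFun, ← ENNReal.ofReal_pow (by positivity), ← pow_mul,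
      ← ENNReal.ofReal_mul (by positivity)]
    exact ENNReal.ofReal_le_ofReal (one_add_norm_pow_mul_gradCharFun_le (hF u))
  refine (lintegral_mono hdet).trans ?_
  rw [lintegral_const_mul' _ _ (by simp [Real.pi_pos])]
  gcongr
  exact lintegral_lintegral_pow_le (by fun_prop) he_le (by fun_prop)
    (fun u => (ENNReal.ofReal_pos.2 (by positivity)).ne') (fun u => ENNReal.ofReal_ne_top)
    (by omega) hdecay

theorem exists_lintegral_det_malMatrix_pow_inv_le (d : ℕ) {q : ℕ} (hq : q ≠ 0) (C₀ : ℝ) :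
    ∃ C : ℝ, 0 < C ∧ ∀ (K : ℕ) (F : Fin d → MvPolynomial (Fin K) ℝ),
      (∀ u, gradCharFun F u * (∑ i, u i ^ 2) ^ ((d + 1) * (2 * q)) ≤ C₀) →
        ∫⁻ x, (ENNReal.ofReal (malMatrix F x).det ^ q)⁻¹ ∂gaussPi (Fin K) ≤
          ENNReal.ofReal C := by
  obtain ⟨C, hC⟩ : ∃ C : NNReal, (ENNReal.ofReal (2 * Real.pi) ^ d)⁻¹ ^ q *
      ((∫⁻ u : Fin d → ℝ, (ENNReal.ofReal ((1 + ‖u‖) ^ (d + 1)))⁻¹) ^ (2 * q) *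
        ENNReal.ofReal (4 ^ ((d + 1) * (2 * q)) * (1 + C₀))) = C := by
    have hweight := lintegral_one_add_norm_pow_inv_ne_top d
    refine ⟨_, (ENNReal.coe_toNNReal (ENNReal.mul_ne_top ?_ (by finiteness))).symm⟩
    simp [Real.pi_pos]
  refine ⟨C + 1, by positivity, fun K F hF =>
    (lintegral_det_malMatrix_pow_inv_le hq hF).trans ?_⟩
  rw [hC, ← ENNReal.ofReal_coe_nnreal]
  exact ENNReal.ofReal_le_ofReal (by linarith)

end NegativeMoments

lemma sum_gaussMean_sq_le_of_lintegral_le {σ ι : Type} [Fintype σ] [Fintype ι]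
    {F : ι → MvPolynomial σ ℝ} {B : ℝ}
    (h : ∫⁻ x, ENNReal.ofReal (∑ i, eval x (F i) ^ 2) ∂gaussPi σ ≤ ENNReal.ofReal B) :
    ∑ i, gaussMean (F i ^ 2) ≤ max B 0 := by
  have heval (x : σ → ℝ) : ∑ i, eval x (F i) ^ 2 = eval x (∑ i, F i ^ 2) := by
    simp only [map_sum, map_pow]
  simp only [heval] at h
  have hnonneg (x : σ → ℝ) : 0 ≤ eval x (∑ i, F i ^ 2) := by
    rw [← heval]
    exact Finset.sum_nonneg fun _ _ => sq_nonneg _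
  rw [← ofReal_integral_eq_lintegral_ofReal (integrable_eval_gaussPi _) (ae_of_all _ hnonneg),
    ← gaussMean_apply, map_sum, ENNReal.ofReal_le_ofReal_iff'] at h
  exact le_max_iff.2 h

lemma gaussMean_sq_le_gaussMean_add_sq {σ : Type} [Fintype σ] {q r : MvPolynomial σ ℝ} {m : ℕ}
    (hq : q ∈ ouEigenspace (m : ℝ)) (hr : r.totalDegree < m) :
    gaussMean (q ^ 2) ≤ gaussMean ((q + r) ^ 2) := by
  have hexpand : (q + r) ^ 2 = q ^ 2 + (q * r + q * r) + r ^ 2 := by ring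
  rw [hexpand, map_add, map_add, map_add, gaussMean_mul_eq_zero_of_totalDegree_lt hq hr]
  linarith [gaussMean_sq_nonneg r]

/-- Vector version on sums of chaoses: if the vector of projections on the top
chaoses is asymptotically standard Gaussian and the sequence is bounded in `L²`, then all negative
moments of the determinant of the Malliavin matrix are eventually bounded. -/
theorem negative_moments_sum_of_chaoses_vector (d : ℕ) (m : Fin d → ℕ) (K : ℕ → ℕ)
    (P Q R : (n : ℕ) → Fin d → MvPolynomial (Fin (K n)) ℝ)
    (hdeg : ∀ n i, (P n i).totalDegree ≤ m i)
    (hdecomp : ∀ n i, P n i = Q n i + R n i)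
    (hQ : ∀ n i, Q n i ∈ chaos (K n) (m i))
    (hR : ∀ n i, (R n i).totalDegree ≤ m i - 1)
    (hlaw : TendstoInLaw
      (fun n => Measure.map (fun x i => eval x (Q n i)) (gaussPi (Fin (K n))))
      (gaussPi (Fin d)))
    (hL2 : ∃ B : ℝ, ∀ n,
      ∫⁻ x, ENNReal.ofReal (∑ i, (eval x (P n i)) ^ 2) ∂gaussPi (Fin (K n))
        ≤ ENNReal.ofReal B) :
    ∀ q : ℕ, 1 ≤ q → ∃ (N : ℕ) (C : ℝ), 0 < C ∧ ∀ n ≥ N,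
      ∫⁻ x, (ENNReal.ofReal ((malMatrix (P n) x).det) ^ q)⁻¹ ∂gaussPi (Fin (K n))
        ≤ ENNReal.ofReal C := by
  intro q hq
  obtain rfl : P = fun n i => Q n i + R n i := funext₂ hdecomp
  obtain ⟨B, hB⟩ := hL2
  have hQ_mem (n : ℕ) (i : Fin d) := chaos_le_ouEigenspace (K n) (m i) (hQ n i)
  have hm (i : Fin d) : 1 ≤ m i := by
    obtain ⟨n, hn⟩ := exists_totalDegree_ne_zero hlaw i
    exact (Nat.one_le_iff_ne_zero.2 hn).trans (totalDegree_le_of_mem_ouEigenspace (hQ_mem n i))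
  have hP_sq (n : ℕ) := sum_gaussMean_sq_le_of_lintegral_le (hB n)
  have hQ_sq (n : ℕ) : gaussMean (∑ i, Q n i ^ 2) ≤ max B 0 :=
    (map_sum gaussMean _ _).trans_le <| (Finset.sum_le_sum fun i _ =>
      gaussMean_sq_le_gaussMean_add_sq (hQ_mem n i)
        ((hR n i).trans_lt (Nat.sub_one_lt_of_lt (hm i)))).trans (hP_sq n)
  obtain ⟨τ, hτ, C₀, hdecay⟩ := hasUniformGradDecay (c := fun i j => if i = j then m i else 0)
    (Finset.univ.sup m) hm (fun i => Finset.le_sup (Finset.mem_univ i))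
    (fun i => by simpa only [if_true, Nat.cast_pos] using Nat.succ_le_iff.1 (hm i))
    (fun i j h => if_neg h) (le_max_right B 0) ((d + 1) * (2 * q))
  obtain ⟨C, hC, hbound⟩ := exists_lintegral_det_malMatrix_pow_inv_le d (by omega : q ≠ 0) C₀
  obtain ⟨N, hN⟩ := eventually_atTop.1 (eventually_gaussMean_carre_sub_sq_le hlaw hQ_mem hQ_sq hτ)
  refine ⟨N, C, hC, fun n hn => hbound (K n) _ (hdecay (Fin (K n)) _ (Q n)
    ⟨hQ_mem n, hdeg n, fun i => ?_, fun i => ?_, hN n hn⟩)⟩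
  · simpa only [add_sub_cancel_left] using hR n i
  · exact (Finset.single_le_sum (fun j _ => gaussMean_sq_nonneg (Q n j + R n j))
      (Finset.mem_univ i)).trans (hP_sq n)
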